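/- Let q = 2^m for a positive integer m and let d = 3q - 2. Let τ_m be the rational sequence defined by τ_1 = 1/2, τ_2 = -7/4, and τ_m = (1/2)τ_{m-1} - τ_{m-2} for m ≥ 3. Let n_4 denote the number of quadruples (x_1, x_2, x_3, x_4) ∈ (F_{q^2}^*)^4 satisfying x_1 + x_2 + x_3 + x_4 = 0 and x_1^d + x_2^d + x_3^d + x_4^d = 0. Then n_4 = (5q^2 - (τ_m + 6)q + 4)(q^2 - 1) if m is even, and n_4 = (5q^2 - (τ_m + 6)q)(q^2 - 1) if m is odd. -/

import Mathlib

/-!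
Write `ψ` for the additive character `(-1) ^ Tr`, `σ x = x ^ q` for the conjugation of `K` over its
subfield `F` with `q` elements, and `K(a) = ∑_{x ≠ 0} ψ(x + a / x)` for the Kloosterman sums
of `F`. On nonzero elements `x ^ (3 q - 2) = σ(x) ^ 3 / x ^ 2`, so a quadruple is a scalar multiple
of a solution of `x + y + z = 1`, `σ(x) ^ 3 / x ^ 2 + σ(y) ^ 3 / y ^ 2 + σ(z) ^ 3 / z ^ 2 = 1`; this
gives the factor `q ^ 2 - 1`.

Put `u = σ(x) / x` and similarly `v, w`: these lie on the unit circle `N = 1`. The system says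
`x u ^ i + y v ^ i + z w ^ i = 1` for `i = 0, 1, 3` (the case `i = 1` is the conjugate of `i = 0`),
a linear system for `x, y, z`. When `1, u, v, w` are distinct it has a solution with the
right ratios exactly when `1 + u + v + w` lies on the circle and no three of `1, u, v, w` sum to
zero (`IsRatioTriple`); solutions with coinciding ratios are listed explicitly. Hence the count is
an elementary expression plus the number of `(u, v, w)` on the circle with `1 + u + v + w` on the
circle.

A nonzero `s` is a sum of two elements of the circle in `1 - ψ(1 / N(s))` ways, so the last number
is governed by the correlation `∑_s ψ(1 / N(s) + 1 / N(s + 1))`, a sum over norms and traces.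
It reduces to sums of Kloosterman sums, and these, by the invariance
`K(δ ^ 3 (1 + δ)) = K(δ (1 + δ) ^ 3)` under 3-isogenies (`kl_isogeny`), to the single twisted moment
`A = ∑_{v ≠ 0} ψ(v + 1 / v) K(v)`.

Finally `ψ(1) A` is a sum attached to the form `a ^ 2 + a b + b ^ 2` (`normFormSum_one`). For odd
`m` the form is the norm from the quadratic extension, and the sum is a Kloosterman sum over the
field with `4 ^ m` elements at a primitive cube root of unity `ω`; for even `m` it splits, and the
sum is the product of two such Kloosterman sums over `F`. As `ω` lies in the field with
four elements, `K(ω)` over an extension of degree `n` is read off from the quadratic L-polynomial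
`1 + K(ω) T + 4 T ^ 2` with `K(ω) = -1` over that field (`newton_identity`): it is `-2 ^ n τ_n`.
-/

namespace NihoCount

open Finset
open AddChar (map_add_eq_mul map_zero_eq_one)

/-! ### The additive character in characteristic two -/

section Character

variable {F : Type*} [Field F] [CharP F 2]

/-- The additive character `x ↦ (-1) ^ Tr x` of a field of characteristic two, where `Tr` is the
absolute trace. It is nontrivial when the field is finite. -/
noncomputable def psi : AddChar F ℤ :=
  letI : Algebra (ZMod 2) F := ZMod.algebra F 2
  (AddChar.zmodChar 2 (ζ := (-1 : ℤ)) (by norm_num)).compAddMonoidHom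
    (Algebra.trace (ZMod 2) F).toAddMonoidHom

lemma psi_eq_ite_trace [Algebra (ZMod 2) F] (x : F) :
    psi x = if Algebra.trace (ZMod 2) F x = 0 then 1 else -1 := by
  obtain rfl : ZMod.algebra F 2 = ‹Algebra (ZMod 2) F› := Subsingleton.elim _ _
  let _ : Algebra (ZMod 2) F := ZMod.algebra F 2
  change AddChar.zmodChar 2 (ζ := (-1 : ℤ)) (by norm_num) (Algebra.trace (ZMod 2) F x) = _
  generalize Algebra.trace (ZMod 2) F x = t
  fin_cases t <;> rfl

lemma psi_eq_one_iff_trace [Algebra (ZMod 2) F] {x : F} :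
    psi x = 1 ↔ Algebra.trace (ZMod 2) F x = 0 := by
  rw [psi_eq_ite_trace]
  split_ifs with h <;> simp [h]

lemma psi_cases (x : F) : psi x = 1 ∨ psi x = -1 := by
  let _ : Algebra (ZMod 2) F := ZMod.algebra F 2
  rw [psi_eq_ite_trace]
  split_ifs <;> simp

lemma psi_mul_self (x : F) : psi x * psi x = 1 := by
  rcases psi_cases x with h | h <;> simp [h]

lemma psi_ne_neg (x : F) : psi x ≠ -psi x := by
  rcases psi_cases x with h | h <;> simp [h]

lemma psi_eq_of_mul_eq_one {x y : F} (h : psi x * psi y = 1) : psi x = psi y := by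
  rcases psi_cases y with hy | hy <;> rw [hy] at h ⊢ <;> linarith

/-- The Artin–Schreier map `y ↦ y ^ 2 + y` as an additive homomorphism; its image is the kernel of
`psi`. -/
def artinSchreier (F : Type*) [Field F] [CharP F 2] : F →+ F where
  toFun y := y ^ 2 + y
  map_zero' := by simp
  map_add' a b := by grind

@[simp] lemma artinSchreier_apply (y : F) : artinSchreier F y = y ^ 2 + y := rfl

lemma artinSchreier_eq_iff {x y : F} : y ^ 2 + y = x ^ 2 + x ↔ y = x ∨ y = x + 1 := by
  have h : y ^ 2 + y = x ^ 2 + x ↔ (y + x) * (y + x + 1) = 0 := by grind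
  rw [h, mul_eq_zero]
  grind

variable [Finite F]

lemma psi_sq (x : F) : psi (x ^ 2) = psi x := by
  let _ : Algebra (ZMod 2) F := ZMod.algebra F 2
  have : Fact (Nat.Prime 2) := ⟨Nat.prime_two⟩
  have h := Algebra.trace_eq_of_algEquiv (FiniteField.frobeniusAlgEquiv (ZMod 2) F 2) x
  rw [FiniteField.frobeniusAlgEquiv_apply, ZMod.card] at h
  rw [psi_eq_ite_trace, psi_eq_ite_trace, h]

lemma psi_artinSchreier (y : F) : psi (y ^ 2 + y) = 1 := by
  rw [map_add_eq_mul, psi_sq, psi_mul_self]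

lemma psi_congr {x y : F} (w : F) (h : x + y = w ^ 2 + w) : psi x = psi y :=
  psi_eq_of_mul_eq_one (by rw [← map_add_eq_mul, h, psi_artinSchreier])

lemma psi_ne_one : (psi : AddChar F ℤ) ≠ 1 := by
  let _ : Algebra (ZMod 2) F := ZMod.algebra F 2
  have : Fact (Nat.Prime 2) := ⟨Nat.prime_two⟩
  intro h
  refine Algebra.trace_ne_zero (ZMod 2) F (LinearMap.ext fun x => psi_eq_one_iff_trace.1 ?_)
  rw [h, AddChar.one_apply]

lemma exists_psi_eq_neg_one : ∃ c : F, psi c = -1 := by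
  obtain ⟨c, hc⟩ := AddChar.ne_one_iff.1 (psi_ne_one (F := F))
  exact ⟨c, (psi_cases c).resolve_left hc⟩

lemma artinSchreier_range_index : (artinSchreier F).range.index = 2 := by
  have hker : ((artinSchreier F).ker : Set F) = {0, 1} := by
    ext y
    simpa using artinSchreier_eq_iff (x := (0 : F)) (y := y)
  have hcard : Nat.card (artinSchreier F).ker = 2 :=
    (congrArg Set.ncard hker).trans (Set.ncard_pair zero_ne_one)
  have hrange := AddSubgroup.card_mul_index (artinSchreier F).range
  rw [← AddSubgroup.card_mul_index (artinSchreier F).ker, hcard, AddSubgroup.index_ker,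
    mul_comm 2] at hrange
  exact Nat.eq_of_mul_eq_mul_left Nat.card_pos hrange

lemma psi_eq_one_iff {x : F} : psi x = 1 ↔ ∃ y : F, y ^ 2 + y = x := by
  refine ⟨fun hx => ?_, fun ⟨y, hy⟩ => hy ▸ psi_artinSchreier y⟩
  obtain ⟨c, hc⟩ := exists_psi_eq_neg_one (F := F)
  have hmem : ∀ z ∈ (artinSchreier F).range, psi z = 1 := by
    rintro _ ⟨y, rfl⟩
    exact psi_artinSchreier y
  have hindex := AddSubgroup.add_mem_iff_of_index_two (artinSchreier_range_index (F := F))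
    (a := x) (b := c)
  have hc_notMem : c ∉ (artinSchreier F).range := fun h => by simp [hmem c h] at hc
  have hsum_notMem : x + c ∉ (artinSchreier F).range := fun h => by
    simpa [map_add_eq_mul, hx, hc] using hmem _ h
  have hx_mem : x ∈ (artinSchreier F).range := by tauto
  exact hx_mem

end Character

section Sums

variable {F : Type*} [Field F] [Fintype F] [CharP F 2]

lemma sum_psi : ∑ x : F, psi x = 0 := AddChar.sum_eq_zero_of_ne_one psi_ne_one

lemma sum_psi_inv : ∑ x : F, psi x⁻¹ = 0 :=
  (Equiv.sum_comp (Equiv.inv F) psi).trans sum_psi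

lemma sum_psi_mul (c : F) [Decidable (c = 0)] :
    ∑ x : F, psi (c * x) = if c = 0 then (Fintype.card F : ℤ) else 0 := by
  classical
  simp only [mul_comm c, AddChar.sum_mulShift c (AddChar.IsPrimitive.of_ne_one psi_ne_one),
    Nat.cast_ite, Nat.cast_zero]

lemma sum_sq_comp {M : Type*} [AddCommMonoid M] (f : F → M) :
    ∑ x : F, f (x ^ 2) = ∑ x : F, f x :=
  (frobeniusEquiv F 2).sum_comp f

open Classical in
lemma card_artinSchreier_fiber (c : F) : (#{y : F | y ^ 2 + y = c} : ℤ) = 1 + psi c := by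
  rcases psi_cases c with h | h
  · obtain ⟨x, rfl⟩ := psi_eq_one_iff.1 h
    have hpair : ({y : F | y ^ 2 + y = x ^ 2 + x} : Finset F) = {x, x + 1} := by
      ext y
      simp [artinSchreier_eq_iff]
    rw [hpair, card_pair (by simp), h]
    rfl
  · have hempty : ({y : F | y ^ 2 + y = c} : Finset F) = ∅ := by
      refine filter_eq_empty_iff.2 fun y _ hy => ?_
      rw [psi_eq_one_iff.2 ⟨y, hy⟩] at h
      norm_num at h
    rw [hempty, h]
    rfl

lemma sum_artinSchreier_comp (g : F → ℤ) :
    ∑ y : F, g (y ^ 2 + y) = ∑ e : F, (1 + psi e) * g e := by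
  classical
  rw [← sum_fiberwise (s := (univ : Finset F)) (g := fun y : F => y ^ 2 + y)]
  refine sum_congr rfl fun e _ => ?_
  rw [sum_congr rfl fun y hy => congrArg g (mem_filter.1 hy).2, sum_const, nsmul_eq_mul,
    card_artinSchreier_fiber]

end Sums

/-! ### Sums over nonzero elements -/

section NonzeroSums

variable {F : Type*} [Field F] [Fintype F]

open Classical in
/-- The nonzero elements of a finite field. -/
noncomputable def nz (F : Type*) [Field F] [Fintype F] : Finset F := {0}ᶜ

open Classical in
/-- The elements of a finite field other than `0` and `1`. -/
noncomputable def nz1 (F : Type*) [Field F] [Fintype F] : Finset F := {0, 1}ᶜ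

@[simp] lemma mem_nz {x : F} : x ∈ nz F ↔ x ≠ 0 := by simp [nz]

@[simp] lemma mem_nz1 {x : F} : x ∈ nz1 F ↔ x ≠ 0 ∧ x ≠ 1 := by simp [nz1]

section AddCommMonoid

variable {M : Type*} [AddCommMonoid M] (f : F → M)

lemma sum_eq_add_sum_nz : ∑ x : F, f x = f 0 + ∑ x ∈ nz F, f x := by
  classical
  rw [Fintype.sum_eq_add_sum_compl 0 f]
  congr 2

lemma sum_nz_eq_add_sum_nz1 : ∑ x ∈ nz F, f x = f 1 + ∑ x ∈ nz1 F, f x := by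
  classical
  rw [← add_sum_erase (nz F) f (a := 1) (by simp)]
  congr 2
  ext
  simp [and_comm]

lemma sum_nz_mul {c : F} (hc : c ≠ 0) : ∑ x ∈ nz F, f (c * x) = ∑ x ∈ nz F, f x :=
  sum_equiv (Equiv.mulLeft₀ c hc) (by simp [hc]) (by simp)

lemma sum_nz_inv : ∑ x ∈ nz F, f x⁻¹ = ∑ x ∈ nz F, f x :=
  sum_equiv (Equiv.inv F) (by simp) (by simp)

lemma sum_nz1_inv : ∑ x ∈ nz1 F, f x⁻¹ = ∑ x ∈ nz1 F, f x :=
  sum_equiv (Equiv.inv F) (by simp) (by simp)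

variable [CharP F 2]

lemma sum_nz_sq : ∑ x ∈ nz F, f (x ^ 2) = ∑ x ∈ nz F, f x :=
  sum_equiv (frobeniusEquiv F 2).toEquiv (by simp) (by simp [frobenius_def])

lemma sum_nz1_sq : ∑ x ∈ nz1 F, f (x ^ 2) = ∑ x ∈ nz1 F, f x := by
  refine sum_equiv (frobeniusEquiv F 2).toEquiv (fun x => ?_) (by simp [frobenius_def])
  have hone : x ^ 2 = 1 ↔ x = 1 := by
    simpa [frobenius_def] using (frobenius_inj F 2).eq_iff (a := x) (b := 1)
  simp [frobenius_def, hone]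

lemma sum_nz1_one_add : ∑ x ∈ nz1 F, f (1 + x) = ∑ x ∈ nz1 F, f x := by
  refine sum_equiv (Equiv.addLeft 1) (fun x => ?_) (by simp)
  simp only [mem_nz1, Equiv.coe_addLeft]
  grind

end AddCommMonoid

lemma card_nz : (#(nz F) : ℤ) = Fintype.card F - 1 := by
  have h := sum_eq_add_sum_nz (F := F) (fun _ => (1 : ℤ))
  simp only [sum_const, card_univ, nsmul_eq_mul, mul_one] at h
  linarith

lemma card_nz1 : (#(nz1 F) : ℤ) = Fintype.card F - 2 := by
  have h := sum_nz_eq_add_sum_nz1 (F := F) (fun _ => (1 : ℤ))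
  simp only [sum_const, nsmul_eq_mul, mul_one, card_nz] at h
  linarith

variable [CharP F 2]

lemma sum_nz_psi_mul (c : F) [Decidable (c = 0)] :
    ∑ x ∈ nz F, psi (c * x) = (if c = 0 then (Fintype.card F : ℤ) else 0) - 1 := by
  have h := sum_psi_mul c
  rw [sum_eq_add_sum_nz, mul_zero, map_zero_eq_one] at h
  linarith

lemma sum_nz_psi_mul_of_ne_zero {c : F} (hc : c ≠ 0) : ∑ x ∈ nz F, psi (c * x) = -1 := by
  classical
  rw [sum_nz_psi_mul, if_neg hc, zero_sub]

lemma sum_nz_psi : ∑ x ∈ nz F, psi x = -1 := by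
  simpa using sum_nz_psi_mul_of_ne_zero (one_ne_zero (α := F))

lemma sum_nz_psi_inv : ∑ x ∈ nz F, psi x⁻¹ = -1 := by
  rw [sum_nz_inv (fun x => psi x), sum_nz_psi]

lemma sum_nz1_artinSchreier_comp (g : F → ℤ) :
    ∑ y ∈ nz1 F, g (y ^ 2 + y) = ∑ e ∈ nz F, (1 + psi e) * g e := by
  have h := sum_artinSchreier_comp g
  rw [sum_eq_add_sum_nz, sum_nz_eq_add_sum_nz1, sum_eq_add_sum_nz] at h
  simp only [one_pow, CharTwo.add_self_eq_zero, map_zero_eq_one, ne_eq, OfNat.ofNat_ne_zero,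
    not_false_eq_true, zero_pow] at h
  linarith

lemma sum_nz1_add_inv_comp (g : F → ℤ) :
    ∑ y ∈ nz1 F, g (y + y⁻¹) = ∑ z ∈ nz1 F, g (z ^ 2 + z)⁻¹ := by
  -- substitute `z = 1 / (1 + y)`
  refine sum_nbij' (fun y => (1 + y)⁻¹) (fun z => 1 + z⁻¹) ?_ ?_ ?_ ?_ ?_ <;>
    simp only [mem_nz1] <;> rintro y ⟨h0, h1⟩
  · have h1' : 1 + y ≠ 0 := by grind
    simp [h1', h0]
  · grind
  · grind
  · grind
  · have h1' : 1 + y ≠ 0 := by grind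
    have hz : (1 + y)⁻¹ ^ 2 + (1 + y)⁻¹ = y / (1 + y) ^ 2 := by field_simp; grind
    rw [hz]
    congr 1
    field_simp
    grind

lemma sum_nz_add_inv_comp (g : F → ℤ) :
    ∑ y ∈ nz F, g (y + y⁻¹) = g 0 + ∑ v ∈ nz F, (1 + psi v⁻¹) * g v := by
  rw [sum_nz_eq_add_sum_nz1, sum_nz1_add_inv_comp, sum_nz1_artinSchreier_comp (fun e => g e⁻¹),
    ← sum_nz_inv (fun v => (1 + psi v⁻¹) * g v), inv_one, CharTwo.add_self_eq_zero]
  simp only [inv_inv]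

end NonzeroSums

/-! ### Kloosterman sums -/

section Kloosterman

variable {F : Type*} [Field F] [Fintype F] [CharP F 2]

/-- The Kloosterman sum `∑_{x ≠ 0} ψ(x + a / x)`; at `a = 0` it equals `-1`. -/
noncomputable def kl (a : F) : ℤ := ∑ x ∈ nz F, psi (x + a * x⁻¹)

lemma kl_zero : kl (0 : F) = -1 := by simp [kl, sum_nz_psi]

lemma sum_nz_psi_mul_add_inv {A : F} (hA : A ≠ 0) (B : F) :
    ∑ x ∈ nz F, psi (A * x + B * x⁻¹) = kl (A * B) := by
  rw [kl, ← sum_nz_mul (fun x => psi (x + A * B * x⁻¹)) hA]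
  refine sum_congr rfl fun x _ => ?_
  congr 1
  field_simp

lemma sum_nz_psi_mul_add_inv' (A : F) {B : F} (hB : B ≠ 0) :
    ∑ x ∈ nz F, psi (A * x + B * x⁻¹) = kl (A * B) := by
  rw [mul_comm A, ← sum_nz_psi_mul_add_inv hB, ← sum_nz_inv]
  simp only [inv_inv, add_comm]

lemma sum_kl : ∑ b ∈ nz F, kl b = 1 := by
  have hinner : ∀ x ∈ nz F, ∑ b ∈ nz F, psi (x + b * x⁻¹) = -psi x := by
    intro x hx
    simp only [map_add_eq_mul, ← mul_sum, mul_comm _ x⁻¹]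
    rw [sum_nz_psi_mul_of_ne_zero (inv_ne_zero (mem_nz.1 hx)), mul_neg_one]
  simp only [kl]
  rw [sum_comm, sum_congr rfl hinner, sum_neg_distrib, sum_nz_psi, neg_neg]

lemma sum_psi_mul_kl : ∑ w ∈ nz F, psi w * kl w = Fintype.card F * psi (1 : F) + 1 := by
  classical
  have hswap : ∑ w ∈ nz F, psi w * kl w
      = ∑ x ∈ nz F, psi x * ∑ w ∈ nz F, psi ((1 + x⁻¹) * w) := by
    simp only [kl, mul_sum]
    rw [sum_comm]
    refine sum_congr rfl fun x _ => sum_congr rfl fun w _ => ?_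
    rw [← map_add_eq_mul, ← map_add_eq_mul]
    congr 1
    ring
  have hterm : ∀ x ∈ nz F, psi x * ((if 1 + x⁻¹ = 0 then (Fintype.card F : ℤ) else 0) - 1)
      = (if x = 1 then Fintype.card F * psi x else 0) - psi x := by
    intro x hx
    have hone : 1 + x⁻¹ = 0 ↔ x = 1 := by grind [mem_nz.1 hx]
    rw [if_congr hone rfl rfl]
    split_ifs <;> ring
  rw [hswap]
  simp only [sum_nz_psi_mul]
  rw [sum_congr rfl hterm, sum_sub_distrib, sum_nz_psi, sum_ite_eq', if_pos (by simp)]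
  ring

end Kloosterman

/-! ### Invariance of Kloosterman sums under 3-isogenies -/

section Isogeny

variable {F : Type*} [Field F]

/-- The degree-three map `x ↦ x (x + δ² + δ)² / (x + δ²)²`. In characteristic two it carries
`x + δ³(1 + δ) / x` to `X + δ(1 + δ)³ / X` up to Artin–Schreier elements, so it underlies a
3-isogeny between the elliptic curves attached to the two Kloosterman sums. -/
def isogeny (δ x : F) : F := x * (x + δ ^ 2 + δ) ^ 2 / (x + δ ^ 2) ^ 2

variable [CharP F 2]

/-- The quadratic satisfied by the other two points of a fibre of the isogeny. -/
lemma isogeny_fiber_quadratic {x y δ : F} (hxy : x ≠ y) (hx : x + δ ^ 2 ≠ 0) (hy : y + δ ^ 2 ≠ 0)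
    (h : isogeny δ x = isogeny δ y) :
    x ^ 2 * y ^ 2 + δ ^ 4 * (x ^ 2 + x * y + y ^ 2) + (δ ^ 2 + δ) ^ 2 * x * y
        + (δ ^ 2 + δ) ^ 2 * δ ^ 4 = 0 := by
  rw [isogeny, isogeny, div_eq_div_iff (pow_ne_zero 2 hx) (pow_ne_zero 2 hy)] at h
  refine (mul_eq_zero.1 (?_ : (x + y) * _ = 0)).resolve_left (by grind)
  grind

lemma isogeny_regular_of_psi {x δ : F} (h0 : δ ≠ 0) (h1 : δ ≠ 1)
    (hp : psi (x + δ ^ 3 * (1 + δ) * x⁻¹) = -psi δ) : x + δ ^ 2 ≠ 0 ∧ x + δ ^ 2 + δ ≠ 0 := by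
  have h1' : 1 + δ ≠ 0 := by grind
  constructor <;> refine fun h => psi_ne_neg δ (hp ▸ congrArg psi ?_)
  · obtain rfl : x = δ ^ 2 := by grind
    field_simp
    grind
  · obtain rfl : x = δ * (1 + δ) := by grind
    field_simp
    grind

variable [Finite F]

lemma psi_eq_one_of_isogeny_fiber {x y δ : F} (h0 : δ ≠ 0) (hx0 : x ≠ 0) (hxy : x ≠ y)
    (hx : x + δ ^ 2 ≠ 0) (hy : y + δ ^ 2 ≠ 0) (h : isogeny δ x = isogeny δ y) :
    psi (x + δ + δ ^ 3 * (1 + δ) * x⁻¹) = 1 := by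
  have hquad := isogeny_fiber_quadratic hxy hx hy h
  clear hxy hx hy h
  rw [← psi_sq, psi_eq_one_iff]
  refine ⟨(x ^ 2 + δ ^ 4) * y / (x * δ ^ 2), ?_⟩
  field_simp
  grind

lemma psi_isogeny {x δ : F} (hx0 : x ≠ 0) (hx : x + δ ^ 2 ≠ 0) (hx' : x + δ ^ 2 + δ ≠ 0) :
    psi (isogeny δ x + δ * (1 + δ) ^ 3 * (isogeny δ x)⁻¹)
      = psi (x + δ ^ 3 * (1 + δ) * x⁻¹) := by
  refine psi_congr (δ ^ 2 / (x + δ ^ 2) + (δ ^ 2 + δ) / (x + δ ^ 2 + δ)) ?_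
  rw [isogeny]
  field_simp
  grind

end Isogeny

section IsogenyInvariance

variable {F : Type*} [Field F] [Fintype F] [CharP F 2]

/-- The nonzero `x` at which `ψ(x + a / x)` has the sign opposite to `s`. -/
noncomputable def oppositeSign (a : F) (s : ℤ) : Finset F := {x ∈ nz F | psi (x + a * x⁻¹) = -s}

lemma mem_oppositeSign {a x : F} {s : ℤ} :
    x ∈ oppositeSign a s ↔ x ≠ 0 ∧ psi (x + a * x⁻¹) = -s := by
  simp [oppositeSign]

lemma psi_mul_kl_eq_card (a c : F) :
    psi c * kl a = Fintype.card F - 1 - 2 * #(oppositeSign a (psi c)) := by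
  have hterm : ∀ x ∈ nz F, psi c * psi (x + a * x⁻¹)
      = 1 - 2 * (if psi (x + a * x⁻¹) = -psi c then 1 else 0) := by
    intro x _
    rcases psi_cases c with h | h <;> rcases psi_cases (x + a * x⁻¹) with h' | h' <;>
      simp [h, h']
  rw [kl, mul_sum, sum_congr rfl hterm, sum_sub_distrib, ← mul_sum, sum_boole, sum_const,
    nsmul_eq_mul, card_nz, mul_one, oppositeSign]

/-- The isogeny is injective on the points of sign `-ψ(δ)`, as two distinct points of a fibre force
the sign `ψ(δ)`. -/
lemma isogeny_injOn {δ : F} (h0 : δ ≠ 0) (h1 : δ ≠ 1) :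
    Set.InjOn (isogeny δ) (oppositeSign (δ ^ 3 * (1 + δ)) (psi δ)) := by
  intro x hx y hy hxy
  obtain ⟨hx0, hpx⟩ := mem_oppositeSign.1 hx
  obtain ⟨-, hpy⟩ := mem_oppositeSign.1 hy
  by_contra hne
  have hone := psi_eq_one_of_isogeny_fiber h0 hx0 hne (isogeny_regular_of_psi h0 h1 hpx).1
    (isogeny_regular_of_psi h0 h1 hpy).1 hxy
  rw [add_right_comm, map_add_eq_mul] at hone
  exact psi_ne_neg δ (hpx ▸ (psi_eq_of_mul_eq_one hone).symm)

lemma psi_mul_kl_le_of_isogeny {δ : F} (h0 : δ ≠ 0) (h1 : δ ≠ 1) :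
    psi δ * kl (δ * (1 + δ) ^ 3) ≤ psi δ * kl (δ ^ 3 * (1 + δ)) := by
  have hcard : #(oppositeSign (δ ^ 3 * (1 + δ)) (psi δ))
      ≤ #(oppositeSign (δ * (1 + δ) ^ 3) (psi δ)) := by
    refine card_le_card_of_injOn (isogeny δ) (fun x hx => ?_) (isogeny_injOn h0 h1)
    obtain ⟨hx0, hp⟩ := mem_oppositeSign.1 hx
    obtain ⟨hx, hx'⟩ := isogeny_regular_of_psi h0 h1 hp
    exact mem_oppositeSign.2 ⟨by simp [isogeny, hx0, hx, hx'], (psi_isogeny hx0 hx hx').trans hp⟩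
  rw [psi_mul_kl_eq_card, psi_mul_kl_eq_card]
  linarith [Nat.cast_le (α := ℤ).2 hcard]

lemma psi_mul_kl_cube_mul {δ : F} (hδ : δ ≠ 0) :
    psi δ * kl (δ ^ 3 * (1 + δ)) = ∑ s ∈ nz F, psi ((1 + s) ^ 3 / s ^ 2 * δ) := by
  rw [kl, ← sum_nz_mul _ (pow_ne_zero 2 hδ), ← sum_nz_sq, mul_sum]
  refine sum_congr rfl fun s hs => ?_
  have hs := mem_nz.1 hs
  rw [← map_add_eq_mul]
  refine psi_congr (δ * s + δ / s) ?_
  field_simp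
  grind

lemma sum_psi_mul_kl_cube_mul : ∑ δ ∈ nz F, psi δ * kl (δ ^ 3 * (1 + δ)) = 1 := by
  classical
  have hzero : ∀ s ∈ nz F, (if (1 + s) ^ 3 / s ^ 2 = 0 then (Fintype.card F : ℤ) else 0) - 1
      = (if s = 1 then (Fintype.card F : ℤ) else 0) - 1 := by
    intro s hs
    have hiff : (1 + s) ^ 3 / s ^ 2 = 0 ↔ s = 1 := by
      simp only [div_eq_zero_iff, pow_eq_zero_iff, mem_nz.1 hs, ne_eq, OfNat.ofNat_ne_zero,
        not_false_eq_true, or_false]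
      grind
    rw [if_congr hiff rfl rfl]
  rw [sum_congr rfl fun δ hδ => psi_mul_kl_cube_mul (mem_nz.1 hδ), sum_comm]
  simp only [sum_nz_psi_mul]
  rw [sum_congr rfl hzero, sum_sub_distrib, sum_ite_eq', if_pos (by simp), sum_const,
    nsmul_eq_mul, card_nz]
  ring

/-- The differences in `psi_mul_kl_le_of_isogeny` are nonnegative, and they add up to zero because
`δ ↦ 1 + δ` interchanges the two sides. -/
lemma kl_isogeny (δ : F) : kl (δ ^ 3 * (1 + δ)) = kl (δ * (1 + δ) ^ 3) := by
  by_cases h0 : δ = 0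
  · simp [h0]
  by_cases h1 : δ = 1
  · simp [h1, CharTwo.add_self_eq_zero]
  have hleft : ∑ δ ∈ nz1 F, psi δ * kl (δ ^ 3 * (1 + δ)) = 1 + psi (1 : F) := by
    have h := sum_psi_mul_kl_cube_mul (F := F)
    rw [sum_nz_eq_add_sum_nz1, CharTwo.add_self_eq_zero, mul_zero, kl_zero] at h
    linarith
  have hswap : ∀ x ∈ nz1 F, psi (1 + x) * kl ((1 + x) * (1 + (1 + x)) ^ 3)
      = psi (1 : F) * (psi x * kl (x ^ 3 * (1 + x))) := by
    intro x _
    rw [map_add_eq_mul, mul_assoc, CharTwo.add_cancel_left, mul_comm (1 + x)]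
  have hright : ∑ δ ∈ nz1 F, psi δ * kl (δ * (1 + δ) ^ 3) = 1 + psi (1 : F) := by
    rw [← sum_nz1_one_add, sum_congr rfl hswap, ← mul_sum, hleft, mul_add, psi_mul_self]
    ring
  have heq := (sum_eq_sum_iff_of_le fun x hx =>
    psi_mul_kl_le_of_isogeny (mem_nz1.1 hx).1 (mem_nz1.1 hx).2).1 (hright.trans hleft.symm)
  have hδ := heq δ (mem_nz1.2 ⟨h0, h1⟩)
  exact (mul_left_cancel₀ (by rcases psi_cases δ with h | h <;> simp [h]) hδ).symm

end IsogenyInvariance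

/-! ### The twisted Kloosterman moment -/

section Moment

variable {F : Type*} [Field F] [Fintype F] [CharP F 2]

/-- The twisted Kloosterman moment `∑_{v ≠ 0} ψ(v + 1 / v) K(v)` to which all the character sums
of the problem reduce. -/
noncomputable def moment (F : Type*) [Field F] [Fintype F] [CharP F 2] : ℤ :=
  ∑ v ∈ nz F, psi (v + v⁻¹) * kl v

lemma sum_psi_mul_kl_add_inv :
    ∑ y ∈ nz F, psi (y + y⁻¹) * kl (y + y⁻¹) = psi (1 : F) * Fintype.card F + moment F := by
  have hterm : ∀ v : F, (1 + psi v⁻¹) * (psi v * kl v)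
      = psi v * kl v + psi (v + v⁻¹) * kl v := fun v => by
    rw [map_add_eq_mul]
    ring
  rw [sum_nz_add_inv_comp (fun v => psi v * kl v)]
  simp only [hterm]
  rw [sum_add_distrib, sum_psi_mul_kl, moment, kl_zero, map_zero_eq_one]
  ring

lemma sum_kl_cube_div_sq_eq_sum_psi_mul_kl :
    ∑ s ∈ nz F, kl ((1 + s) ^ 3 / s ^ 2)
      = ∑ δ ∈ nz F, psi (δ + δ⁻¹) * kl (δ ^ 3 * (1 + δ)) := by
  have hkl : ∀ s : F, kl ((1 + s) ^ 3 / s ^ 2)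
      = ∑ δ ∈ nz F, psi δ⁻¹ * psi ((1 + s) ^ 3 / s ^ 2 * δ) := by
    intro s
    rw [kl, ← sum_nz_inv]
    simp only [← map_add_eq_mul, inv_inv]
  rw [sum_congr rfl fun s _ => hkl s, sum_comm]
  refine sum_congr rfl fun δ hδ => ?_
  rw [← mul_sum, ← psi_mul_kl_cube_mul (mem_nz.1 hδ), ← mul_assoc, ← map_add_eq_mul, add_comm]

lemma psi_mul_kl_mul_cube {δ : F} (h0 : δ ≠ 0) (h1 : δ ≠ 1) :
    psi (δ + δ⁻¹) * kl (δ * (1 + δ) ^ 3)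
      = ∑ s ∈ nz F, psi (δ⁻¹ + s⁻¹ + δ * (1 + s) ^ 3 * s⁻¹) := by
  have h1' : 1 + δ ≠ 0 := by grind
  rw [show δ * (1 + δ) ^ 3 = (δ * (1 + δ)) * (1 + δ) ^ 2 by ring,
    ← sum_nz_psi_mul_add_inv (mul_ne_zero h0 h1'), ← sum_nz_sq, mul_sum]
  refine sum_congr rfl fun s hs => ?_
  have hs := mem_nz.1 hs
  rw [← map_add_eq_mul]
  refine psi_congr (δ * s + s⁻¹ + δ / s) ?_
  field_simp
  grind

lemma sum_psi_mul_kl_mul_cube :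
    ∑ δ ∈ nz F, psi (δ + δ⁻¹) * kl (δ * (1 + δ) ^ 3)
      = -Fintype.card F
        + ∑ δ ∈ nz F, ∑ s ∈ nz F, psi (δ⁻¹ + s⁻¹ + δ * (1 + s) ^ 3 * s⁻¹) := by
  have hone : ∀ s ∈ nz F, psi ((1 : F)⁻¹ + s⁻¹ + 1 * (1 + s) ^ 3 * s⁻¹) = 1 := by
    intro s hs
    have hs := mem_nz.1 hs
    rw [← map_zero_eq_one (psi (F := F))]
    refine psi_congr s ?_
    field_simp
    grind
  rw [sum_nz_eq_add_sum_nz1, sum_nz_eq_add_sum_nz1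
    (fun δ => ∑ s ∈ nz F, psi (δ⁻¹ + s⁻¹ + δ * (1 + s) ^ 3 * s⁻¹)), sum_congr rfl hone,
    sum_congr rfl fun δ hδ => psi_mul_kl_mul_cube (mem_nz1.1 hδ).1 (mem_nz1.1 hδ).2, inv_one,
    CharTwo.add_self_eq_zero, map_zero_eq_one, zero_pow three_ne_zero, mul_zero, kl_zero,
    sum_const, nsmul_eq_mul, card_nz]
  ring

lemma sum_nz_psi_inv_add_inv_add {s : F} (h0 : s ≠ 0) (h1 : s ≠ 1) :
    ∑ δ ∈ nz F, psi (δ⁻¹ + s⁻¹ + δ * (1 + s) ^ 3 * s⁻¹)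
      = ∑ y ∈ nz F, psi (y + y⁻¹) * psi (y * s + (1 + (y ^ 2)⁻¹) * s⁻¹) := by
  have h1' : 1 + s ≠ 0 := by grind
  rw [← sum_nz_mul _ (inv_ne_zero (pow_ne_zero 2 h1')), ← sum_nz_inv, ← sum_nz_sq]
  refine sum_congr rfl fun y hy => ?_
  have hy := mem_nz.1 hy
  rw [← map_add_eq_mul]
  refine psi_congr (s * y + y + y⁻¹) ?_
  field_simp
  grind

lemma sum_sum_psi_inv_add_inv_add :
    ∑ δ ∈ nz F, ∑ s ∈ nz F, psi (δ⁻¹ + s⁻¹ + δ * (1 + s) ^ 3 * s⁻¹)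
      = -(psi (1 : F) * Fintype.card F) + ∑ y ∈ nz F, psi (y + y⁻¹) * kl (y + y⁻¹) := by
  have hleft : ∑ δ ∈ nz F, psi (δ⁻¹ + (1 : F)⁻¹ + δ * (1 + 1) ^ 3 * (1 : F)⁻¹) = -psi (1 : F) := by
    simp only [CharTwo.add_self_eq_zero, inv_one, zero_pow three_ne_zero, mul_zero, zero_mul,
      add_zero, map_add_eq_mul, ← sum_mul, sum_nz_psi_inv, neg_one_mul]
  have hright : ∀ y ∈ nz F,
      psi (y + y⁻¹) * psi (y * 1 + (1 + (y ^ 2)⁻¹) * 1⁻¹) = psi (1 : F) := by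
    intro y hy
    have hy := mem_nz.1 hy
    rw [← map_add_eq_mul]
    refine psi_congr y⁻¹ ?_
    field_simp
    grind
  have hkl : ∀ y ∈ nz F, psi (y + y⁻¹) * kl (y + y⁻¹)
      = ∑ s ∈ nz F, psi (y + y⁻¹) * psi (y * s + (1 + (y ^ 2)⁻¹) * s⁻¹) := by
    intro y hy
    have hy := mem_nz.1 hy
    rw [← mul_sum, sum_nz_psi_mul_add_inv hy]
    congr 2
    field_simp
  rw [sum_comm, sum_nz_eq_add_sum_nz1, hleft,
    sum_congr rfl fun s hs => sum_nz_psi_inv_add_inv_add (mem_nz1.1 hs).1 (mem_nz1.1 hs).2,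
    sum_congr rfl hkl, sum_comm (s := nz F),
    sum_nz_eq_add_sum_nz1 (fun s => ∑ y ∈ nz F, _), sum_congr rfl hright, sum_const,
    nsmul_eq_mul, card_nz]
  ring

lemma sum_kl_cube_div_sq :
    ∑ s ∈ nz F, kl ((1 + s) ^ 3 / s ^ 2) = moment F - Fintype.card F := by
  rw [sum_kl_cube_div_sq_eq_sum_psi_mul_kl, sum_congr rfl fun δ _ => by rw [kl_isogeny δ],
    sum_psi_mul_kl_mul_cube, sum_sum_psi_inv_add_inv_add, sum_psi_mul_kl_add_inv]
  ring

lemma sum_kl_inv_mul_sq :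
    ∑ ρ ∈ nz1 F, kl (ρ * (1 + ρ) ^ 2)⁻¹ = 1 - Fintype.card F + moment F := by
  have hsum := sum_kl_cube_div_sq (F := F)
  rw [sum_nz_eq_add_sum_nz1, ← sum_nz1_one_add, ← sum_nz1_inv, CharTwo.add_self_eq_zero,
    zero_pow three_ne_zero, zero_div, kl_zero] at hsum
  have hterm : ∀ ρ ∈ nz1 F,
      kl ((1 + (1 + ρ⁻¹)) ^ 3 / (1 + ρ⁻¹) ^ 2) = kl (ρ * (1 + ρ) ^ 2)⁻¹ := by
    intro ρ hρ
    obtain ⟨h0, h1⟩ := mem_nz1.1 hρ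
    have h1' : 1 + ρ ≠ 0 := by grind
    have hinv : 1 + ρ⁻¹ = (1 + ρ) / ρ := by field_simp; ring
    congr 1
    rw [hinv]
    field_simp
    grind
  rw [sum_congr rfl hterm] at hsum
  linarith

lemma sum_kl_div_one_add_sq :
    ∑ ρ ∈ nz1 F, kl (ρ / (1 + ρ) ^ 2) = 2 + Fintype.card F * psi (1 : F) := by
  have hsum := sum_nz_add_inv_comp (F := F) (fun v => kl v⁻¹)
  rw [sum_nz_eq_add_sum_nz1, sum_nz_inv (fun v => (1 + psi v) * kl v)] at hsum
  simp only [add_mul, one_mul, sum_add_distrib, sum_kl, sum_psi_mul_kl, inv_zero, inv_one,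
    CharTwo.add_self_eq_zero, kl_zero] at hsum
  have hterm : ∀ ρ ∈ nz1 F, kl (ρ + ρ⁻¹)⁻¹ = kl (ρ / (1 + ρ) ^ 2) := by
    intro ρ hρ
    have h0 := (mem_nz1.1 hρ).1
    have hadd : ρ + ρ⁻¹ = (1 + ρ) ^ 2 / ρ := by field_simp; grind
    rw [hadd, inv_div]
  rw [sum_congr rfl hterm] at hsum
  linarith

end Moment

/-! ### A character sum over norms and traces -/

section NormTrace

variable {F : Type*} [Field F] [Fintype F] [CharP F 2]

lemma sum_psi_two_poles_eq_sum_nz1 {ρ : F} (h0 : ρ ≠ 0) (h1 : ρ ≠ 1) :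
    ∑ n : F, psi (n / (1 + ρ ^ 2) ^ 2 + n⁻¹ + (ρ ^ 2 + n)⁻¹)
      = 2 * psi ρ⁻¹ + ∑ η ∈ nz1 F,
          psi (((1 + ρ) ^ 2)⁻¹ * (η ^ 2 + η) + ρ⁻¹ * (η ^ 2 + η)⁻¹) := by
  have h1' : 1 + ρ ≠ 0 := by grind
  have hsq : ∀ η : F, psi ((ρ * η) ^ 2 / (1 + ρ ^ 2) ^ 2 + ((ρ * η) ^ 2)⁻¹
        + (ρ ^ 2 + (ρ * η) ^ 2)⁻¹)
      = psi (ρ * η / (1 + ρ) ^ 2 + (ρ * η)⁻¹ + (ρ * (1 + η))⁻¹) := by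
    intro η
    rw [← psi_sq (ρ * η / (1 + ρ) ^ 2 + (ρ * η)⁻¹ + (ρ * (1 + η))⁻¹),
      show (1 + ρ ^ 2 : F) = (1 + ρ) ^ 2 by grind,
      show ρ ^ 2 + (ρ * η) ^ 2 = (ρ * (1 + η)) ^ 2 by grind]
    simp only [CharTwo.add_sq, div_pow, inv_pow]
  have hregular : ∀ η ∈ nz1 F, psi (ρ * η / (1 + ρ) ^ 2 + (ρ * η)⁻¹ + (ρ * (1 + η))⁻¹)
      = psi (((1 + ρ) ^ 2)⁻¹ * (η ^ 2 + η) + ρ⁻¹ * (η ^ 2 + η)⁻¹) := by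
    intro η hη
    obtain ⟨hη0, hη1⟩ := mem_nz1.1 hη
    have hη1' : 1 + η ≠ 0 := by grind
    refine psi_congr (η / (1 + ρ)) ?_
    rw [show η ^ 2 + η = η * (1 + η) by ring]
    field_simp
    grind
  have hone : psi (ρ * 1 / (1 + ρ) ^ 2 + (ρ * 1)⁻¹ + (ρ * (1 + 1))⁻¹) = psi ρ⁻¹ := by
    rw [CharTwo.add_self_eq_zero]
    refine psi_congr (1 + ρ)⁻¹ ?_
    simp only [mul_zero, inv_zero, add_zero, mul_one]
    field_simp
    grind
  have hzero : psi (ρ * 0 / (1 + ρ) ^ 2 + (ρ * 0)⁻¹ + (ρ * (1 + 0))⁻¹) = psi ρ⁻¹ := by simp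
  rw [← sum_sq_comp, ← Equiv.sum_comp (Equiv.mulLeft₀ ρ h0)]
  simp only [Equiv.mulLeft₀_apply, hsq]
  rw [sum_eq_add_sum_nz, sum_nz_eq_add_sum_nz1, hzero, hone, sum_congr rfl hregular]
  ring

lemma sum_psi_two_poles {ρ : F} (h0 : ρ ≠ 0) (h1 : ρ ≠ 1) :
    ∑ n : F, psi (n / (1 + ρ ^ 2) ^ 2 + n⁻¹ + (ρ ^ 2 + n)⁻¹)
      = 2 * psi ρ⁻¹ + kl (ρ * (1 + ρ) ^ 2)⁻¹ + kl (ρ / (1 + ρ) ^ 2) := by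
  have h1' : 1 + ρ ≠ 0 := by grind
  have hterm : ∀ e : F, (1 + psi e) * psi (((1 + ρ) ^ 2)⁻¹ * e + ρ⁻¹ * e⁻¹)
      = psi (((1 + ρ) ^ 2)⁻¹ * e + ρ⁻¹ * e⁻¹) + psi ((ρ ^ 2 / (1 + ρ) ^ 2) * e + ρ⁻¹ * e⁻¹) := by
    intro e
    have hcoeff : ρ ^ 2 / (1 + ρ) ^ 2 = 1 + ((1 + ρ) ^ 2)⁻¹ := by field_simp; grind
    rw [add_mul, one_mul, ← map_add_eq_mul, hcoeff]
    congr 2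
    ring
  rw [sum_psi_two_poles_eq_sum_nz1 h0 h1,
    sum_nz1_artinSchreier_comp (fun e => psi (((1 + ρ) ^ 2)⁻¹ * e + ρ⁻¹ * e⁻¹)),
    sum_congr rfl fun e _ => hterm e, sum_add_distrib,
    sum_nz_psi_mul_add_inv (inv_ne_zero (pow_ne_zero 2 h1')),
    sum_nz_psi_mul_add_inv (div_ne_zero (pow_ne_zero 2 h0) (pow_ne_zero 2 h1')),
    show ((1 + ρ) ^ 2)⁻¹ * ρ⁻¹ = (ρ * (1 + ρ) ^ 2)⁻¹ by field_simp,
    show ρ ^ 2 / (1 + ρ) ^ 2 * ρ⁻¹ = ρ / (1 + ρ) ^ 2 by field_simp]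
  ring

/-- The terms with `n = 0` or `1 + n + t = 0` are included, with `0⁻¹ = 0`. -/
lemma sum_psi_norm_trace :
    ∑ t ∈ nz F, ∑ n : F, psi (n / t ^ 2 + n⁻¹ + (1 + n + t)⁻¹)
      = 1 - Fintype.card F - 2 * psi (1 : F) + Fintype.card F * psi (1 : F) + moment F := by
  have hone : ∑ n : F, psi (n / 1 ^ 2 + n⁻¹ + (1 + n + 1)⁻¹) = 0 := by
    rw [← sum_psi (F := F)]
    refine sum_congr rfl fun n _ => ?_
    rw [show 1 + n + 1 = n by grind, add_assoc, CharTwo.add_self_eq_zero, one_pow, div_one,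
      add_zero]
  have hpoles : ∀ ρ ∈ nz1 F,
      ∑ n : F, psi (n / (1 + ρ ^ 2) ^ 2 + n⁻¹ + (1 + n + (1 + ρ ^ 2))⁻¹)
        = 2 * psi ρ⁻¹ + kl (ρ * (1 + ρ) ^ 2)⁻¹ + kl (ρ / (1 + ρ) ^ 2) := by
    intro ρ hρ
    rw [← sum_psi_two_poles (mem_nz1.1 hρ).1 (mem_nz1.1 hρ).2]
    refine sum_congr rfl fun n _ => ?_
    rw [show 1 + n + (1 + ρ ^ 2) = ρ ^ 2 + n by grind]
  have hinv : ∑ ρ ∈ nz1 F, psi ρ⁻¹ = -1 - psi (1 : F) := by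
    have hsum := sum_nz_psi_inv (F := F)
    rw [sum_nz_eq_add_sum_nz1, inv_one] at hsum
    linarith
  rw [sum_nz_eq_add_sum_nz1, hone, ← sum_nz1_one_add, ← sum_nz1_sq, sum_congr rfl hpoles,
    sum_add_distrib, sum_add_distrib, sum_kl_inv_mul_sq, sum_kl_div_one_add_sq, ← mul_sum, hinv]
  ring

end NormTrace

/-! ### The twisted moment as a quadratic form sum -/

section QuadraticForm

variable {F : Type*} [Field F] [Fintype F] [CharP F 2]

lemma sum_psi_div_mul_kl_one_add :
    ∑ y ∈ nz F, psi ((1 + y) / y) * kl (1 + y) = psi (1 : F) * moment F := by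
  have hterm : ∀ x ∈ nz F, ∑ y ∈ nz F, psi ((1 + y) / y) * psi (x + (1 + y) * x⁻¹)
      = psi (1 : F) * (psi (x⁻¹ + (x⁻¹)⁻¹) * kl x⁻¹) := by
    intro x hx
    have hx := mem_nz.1 hx
    have hkl : kl x⁻¹ = ∑ y ∈ nz F, psi (x⁻¹ * y + 1 * y⁻¹) := by
      rw [sum_nz_psi_mul_add_inv' x⁻¹ one_ne_zero, mul_one]
    rw [hkl, mul_sum, mul_sum]
    refine sum_congr rfl fun y hy => ?_
    have hy := mem_nz.1 hy
    rw [← map_add_eq_mul, ← map_add_eq_mul, ← map_add_eq_mul]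
    congr 1
    field_simp
    grind
  simp only [kl, mul_sum]
  rw [sum_comm, sum_congr rfl hterm,
    sum_nz_inv (fun x => psi (1 : F) * (psi (x + x⁻¹) * kl x)), moment, ← mul_sum]

lemma sum_psi_div_one_add_mul_kl :
    ∑ b ∈ nz1 F, psi (b / (1 + b)) * kl b = psi (1 : F) * moment F + 1 := by
  have hsum := sum_psi_div_mul_kl_one_add (F := F)
  rw [sum_nz_eq_add_sum_nz1, CharTwo.add_self_eq_zero, zero_div, map_zero_eq_one, kl_zero,
    ← sum_nz1_one_add] at hsum
  rw [← sub_eq_iff_eq_add, ← hsum, sub_eq_neg_add, mul_neg, mul_one]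
  simp only [CharTwo.add_cancel_left]

lemma sum_kl_inv_one_add : ∑ v ∈ nz1 F, kl (1 + v)⁻¹ = 1 - kl (1 : F) := by
  have hsum := sum_kl (F := F)
  rw [sum_nz_eq_add_sum_nz1, ← sum_nz1_inv, ← sum_nz1_one_add] at hsum
  linarith

lemma sum_psi_inv_mul_kl_inv_one_add :
    ∑ v ∈ nz1 F, psi v⁻¹ * kl (1 + v)⁻¹ = psi (1 : F) * moment F + 1 := by
  rw [← sum_psi_div_one_add_mul_kl, ← sum_nz1_inv (fun b : F => psi (b / (1 + b)) * kl b),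
    ← sum_nz1_one_add (fun b : F => psi (b⁻¹ / (1 + b⁻¹)) * kl b⁻¹)]
  refine sum_congr rfl fun v hv => ?_
  obtain ⟨hv0, hv1⟩ := mem_nz1.1 hv
  have hv1' : 1 + v ≠ 0 := by grind
  rw [show 1 + (1 + v)⁻¹ = v / (1 + v) by field_simp; grind]
  congr 2
  field_simp

open Classical in
lemma sum_ite_kl_div_quadratic :
    ∑ c : F, (if 1 + c + c ^ 2 = 0 then 0 else kl (c * (1 + c + c ^ 2)⁻¹))
      = psi (1 : F) * moment F + 1 := by
  have hform : ∀ c ∈ nz F, (if 1 + c + c ^ 2 = 0 then 0 else kl (c * (1 + c + c ^ 2)⁻¹))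
      = (fun v : F => if 1 + v = 0 then 0 else kl (1 + v)⁻¹) (c + c⁻¹) := by
    intro c hc
    have hc := mem_nz.1 hc
    rw [show 1 + c + c ^ 2 = c * (1 + (c + c⁻¹)) by field_simp; ring]
    simp only [mul_eq_zero, hc, false_or]
    split_ifs
    · rfl
    · congr 1; field_simp
  have hterm : ∀ v ∈ nz1 F, (1 + psi v⁻¹) * (if 1 + v = 0 then 0 else kl (1 + v)⁻¹)
      = kl (1 + v)⁻¹ + psi v⁻¹ * kl (1 + v)⁻¹ := by
    intro v hv
    rw [if_neg (by grind [(mem_nz1.1 hv).2])]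
    ring
  rw [sum_eq_add_sum_nz, sum_congr rfl hform,
    sum_nz_add_inv_comp (fun v : F => if 1 + v = 0 then 0 else kl (1 + v)⁻¹),
    sum_nz_eq_add_sum_nz1, sum_congr rfl hterm, sum_add_distrib, sum_kl_inv_one_add,
    sum_psi_inv_mul_kl_inv_one_add]
  simp [CharTwo.add_self_eq_zero, kl_zero]
  ring

open Classical in
lemma sum_quadratic_form :
    ∑ a : F, ∑ b : F, (if a ^ 2 + a * b + b ^ 2 = 0 then 0
        else psi (b + a * (a ^ 2 + a * b + b ^ 2)⁻¹)) = psi (1 : F) * moment F := by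
  have hzero : ∑ b : F, (if (0 : F) ^ 2 + 0 * b + b ^ 2 = 0 then 0
      else psi (b + 0 * ((0 : F) ^ 2 + 0 * b + b ^ 2)⁻¹)) = -1 := by
    rw [sum_eq_add_sum_nz, ← sum_nz_psi (F := F), if_pos (by simp), zero_add]
    refine sum_congr rfl fun b hb => ?_
    rw [if_neg (by simpa using mem_nz.1 hb), zero_mul, add_zero]
  -- substitute `b = a c`
  have hscale : ∀ a ∈ nz F, ∑ b : F, (if a ^ 2 + a * b + b ^ 2 = 0 then 0
      else psi (b + a * (a ^ 2 + a * b + b ^ 2)⁻¹))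
      = ∑ c : F, (if 1 + c + c ^ 2 = 0 then 0 else psi (c * a + (1 + c + c ^ 2)⁻¹ * a⁻¹)) := by
    intro a ha
    have ha := mem_nz.1 ha
    rw [← Equiv.sum_comp (Equiv.mulLeft₀ a ha)]
    refine sum_congr rfl fun c _ => ?_
    rw [Equiv.mulLeft₀_apply,
      show a ^ 2 + a * (a * c) + (a * c) ^ 2 = a ^ 2 * (1 + c + c ^ 2) by ring]
    by_cases hc : 1 + c + c ^ 2 = 0
    · simp [hc]
    · rw [if_neg (mul_ne_zero (pow_ne_zero 2 ha) hc), if_neg hc]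
      congr 1
      field_simp
  have hkl : ∀ c : F, ∑ a ∈ nz F,
      (if 1 + c + c ^ 2 = 0 then 0 else psi (c * a + (1 + c + c ^ 2)⁻¹ * a⁻¹))
      = if 1 + c + c ^ 2 = 0 then 0 else kl (c * (1 + c + c ^ 2)⁻¹) := by
    intro c
    split_ifs with hc
    · simp
    · exact sum_nz_psi_mul_add_inv' c (inv_ne_zero hc)
  rw [sum_eq_add_sum_nz, hzero, sum_congr rfl hscale, sum_comm, sum_congr rfl fun c _ => hkl c,
    sum_ite_kl_div_quadratic]
  ring

end QuadraticForm

/-! ### The character and field extensions -/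

section Trace

variable {F : Type*} [Field F] [Finite F] [CharP F 2]

lemma psi_eq_psi_trace {E : Type*} [Field E] [Finite E] [CharP E 2] [Algebra F E] (y : E) :
    psi y = psi (Algebra.trace F E y) := by
  let _ : Algebra (ZMod 2) F := ZMod.algebra F 2
  let _ : Algebra (ZMod 2) E := ZMod.algebra E 2
  have : IsScalarTower (ZMod 2) F E := IsScalarTower.of_algebraMap_eq' (Subsingleton.elim _ _)
  rw [psi_eq_ite_trace, psi_eq_ite_trace, Algebra.trace_trace]

lemma psi_one_of_card {m : ℕ} (hF : Nat.card F = 2 ^ m) : psi (1 : F) = (-1) ^ m := by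
  let _ : Algebra (ZMod 2) F := ZMod.algebra F 2
  have hrank : Module.finrank (ZMod 2) F = m := by
    have hcard := Module.natCard_eq_pow_finrank (K := ZMod 2) (V := F)
    rw [hF, Nat.card_zmod] at hcard
    exact (Nat.pow_right_injective le_rfl hcard).symm
  have htrace : Algebra.trace (ZMod 2) F 1 = m := by
    rw [← map_one (algebraMap (ZMod 2) F), Algebra.trace_algebraMap, hrank, nsmul_one]
  rw [psi_eq_ite_trace, htrace, if_congr ((ZMod.natCast_eq_zero_iff m 2).trans
    even_iff_two_dvd.symm) rfl rfl]
  split_ifs with hm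
  · exact hm.neg_one_pow.symm
  · exact (Nat.not_even_iff_odd.1 hm).neg_one_pow.symm

end Trace

section MinpolyInv

open Polynomial IntermediateField

variable {k L : Type*} [Field k] [Field L] [Algebra k L]

lemma adjoin_simple_inv (x : L) : k⟮x⁻¹⟯ = k⟮x⟯ := by
  refine le_antisymm ?_ ?_ <;> rw [adjoin_simple_le_iff]
  · exact inv_mem (mem_adjoin_simple_self k x)
  · simpa only [inv_inv] using inv_mem (mem_adjoin_simple_self k x⁻¹)

lemma natDegree_minpoly_inv {x : L} (hx : IsIntegral k x) :
    (minpoly k x⁻¹).natDegree = (minpoly k x).natDegree := by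
  rw [← adjoin.finrank hx, ← adjoin.finrank hx.inv, adjoin_simple_inv]

lemma minpoly_inv {x : L} (hint : IsIntegral k x) (hx : x ≠ 0) :
    minpoly k x⁻¹ = C ((minpoly k x).coeff 0)⁻¹ * (minpoly k x).reverse := by
  have hcoeff : (minpoly k x).coeff 0 ≠ 0 := minpoly.coeff_zero_ne_zero hint hx
  have htrailing : (minpoly k x).natTrailingDegree = 0 := natTrailingDegree_eq_zero.2 (.inr hcoeff)
  have hroot : aeval x⁻¹ (minpoly k x).reverse = 0 := by
    let _ : Invertible x := invertibleOfNonzero hx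
    simpa only [invOf_eq_inv, aeval_def] using
      (eval₂_reverse_eq_zero_iff (algebraMap k L) x (minpoly k x)).2 (minpoly.aeval k x)
  refine (minpoly.unique_of_degree_le_degree_minpoly k x⁻¹ ?_ ?_ ?_).symm
  · rw [Monic, leadingCoeff_mul, leadingCoeff_C, reverse_leadingCoeff, trailingCoeff, htrailing,
      inv_mul_cancel₀ hcoeff]
  · rw [map_mul, hroot, mul_zero]
  · rw [degree_C_mul (inv_ne_zero hcoeff), degree_eq_natDegree (minpoly.ne_zero hint.inv),
      natDegree_minpoly_inv hint]
    exact degree_le_of_natDegree_le (reverse_natDegree_le _)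

lemma nextCoeff_minpoly_inv {x : L} (hint : IsIntegral k x) (hx : x ≠ 0) :
    (minpoly k x⁻¹).nextCoeff = (minpoly k x).coeff 1 / (minpoly k x).coeff 0 := by
  have hpos : 0 < (minpoly k x).natDegree := minpoly.natDegree_pos hint
  rw [nextCoeff_of_natDegree_pos (natDegree_minpoly_inv hint ▸ hpos), natDegree_minpoly_inv hint,
    minpoly_inv hint hx, coeff_C_mul, coeff_reverse, revAt_le (Nat.sub_le _ _),
    Nat.sub_sub_self hpos, div_eq_inv_mul]

end MinpolyInv

/-! ### The L-function of a Kloosterman sum -/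

section Monics

open Polynomial UniqueFactorizationMonoid

variable {k : Type*} [Field k]

lemma natDegree_X_sq_add (a b : k) : (X ^ 2 + C a * X + C b).natDegree = 2 := by
  compute_degree!

open Classical in
lemma sum_normalizedFactors_natDegree {f : k[X]} (hf : f.Monic) :
    f.natDegree = ∑ P ∈ (normalizedFactors f).toFinset, (normalizedFactors f).count P * P.natDegree
    := by
  have hprod : (normalizedFactors f).prod = f := by
    rw [prod_normalizedFactors_eq hf.ne_zero, hf.normalize_eq_self]
  conv_lhs => rw [← hprod]
  rw [natDegree_multiset_prod _ (zero_notMem_normalizedFactors f), sum_multiset_map_count]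
  rfl

open Classical in
lemma pow_dvd_iff_le_count {f P : k[X]} (hf : f ≠ 0) (hP : Irreducible P) (hPm : P.Monic) (e : ℕ) :
    P ^ e ∣ f ↔ e ≤ (normalizedFactors f).count P := by
  rw [pow_dvd_iff_le_emultiplicity, emultiplicity_eq_count_normalizedFactors hP hf,
    hPm.normalize_eq_self, Nat.cast_le]

variable [Finite k]

lemma finite_monics (n : ℕ) : {f : k[X] | f.Monic ∧ f.natDegree = n}.Finite := by
  have : Finite {f : k[X] // f.Monic ∧ f.natDegree = n} :=
    Finite.of_equiv (Fin n → k)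
      ((monicEquivDegreeLT n).trans (degreeLTEquiv k n).toEquiv).symm
  exact Set.finite_coe_iff.1 this

variable (k) in
/-- The monic polynomials of degree `n` over a finite field. -/
noncomputable def monics (n : ℕ) : Finset k[X] := (finite_monics (k := k) n).toFinset

@[simp] lemma mem_monics {n : ℕ} {f : k[X]} : f ∈ monics k n ↔ f.Monic ∧ f.natDegree = n := by
  simp [monics]

open Classical in
variable (k) in
/-- The monic irreducible polynomials of degree `n` over a finite field. -/
noncomputable def monicIrreducibles (n : ℕ) : Finset k[X] := {P ∈ monics k n | Irreducible P}

@[simp] lemma mem_monicIrreducibles {n : ℕ} {P : k[X]} :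
    P ∈ monicIrreducibles k n ↔ (P.Monic ∧ P.natDegree = n) ∧ Irreducible P := by
  simp [monicIrreducibles]

lemma monics_zero : monics k 0 = {1} := by
  ext f
  rw [mem_monics, mem_singleton]
  exact ⟨fun ⟨hm, hd⟩ => hm.natDegree_eq_zero.1 hd, by rintro rfl; simp⟩

lemma sum_monics_one [Fintype k] {M : Type*} [AddCommMonoid M] (g : k[X] → M) :
    ∑ f ∈ monics k 1, g f = ∑ a : k, g (X + C a) := by
  refine (sum_bij (fun a _ => X + C a) (fun a _ => ?_) (fun a _ b _ h => ?_) (fun f hf => ?_)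
    fun a _ => rfl).symm
  · simp [monic_X_add_C]
  · simpa using h
  · obtain ⟨hm, hd⟩ := mem_monics.1 hf
    exact ⟨f.coeff 0, mem_univ _, (hm.eq_X_add_C hd).symm⟩

lemma sum_monics_two [Fintype k] {M : Type*} [AddCommMonoid M] (g : k[X] → M) :
    ∑ f ∈ monics k 2, g f = ∑ b : k, ∑ a : k, g (X ^ 2 + C a * X + C b) := by
  rw [← sum_product']
  refine (sum_bij (fun p _ => X ^ 2 + C p.2 * X + C p.1) (fun p _ => ?_) ?_ (fun f hf => ?_)
    fun p _ => rfl).symm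
  · exact mem_monics.2 ⟨by monicity!, natDegree_X_sq_add _ _⟩
  · rintro ⟨b, a⟩ - ⟨b', a'⟩ - h
    have hconst : b = b' := by simpa using congrArg (coeff · 0) h
    have hlinear : a = a' := by simpa [coeff_X, coeff_C] using congrArg (coeff · 1) h
    rw [hconst, hlinear]
  · obtain ⟨hm, hd⟩ := mem_monics.1 hf
    have hsum := hm.as_sum
    refine ⟨(f.coeff 0, f.coeff 1), mem_univ _, ?_⟩
    rw [hsum, hd]
    simp [sum_range_succ, coeff_X, coeff_C]
    ring

open Classical in
/-- The degree of a monic polynomial is the sum of the degrees of the primes `P`, each counted once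
for every `e ≥ 1` with `P ^ e ∣ f`. -/
lemma natCast_eq_sum_monicIrreducibles {n : ℕ} {f : k[X]} (hf : f ∈ monics k n) :
    (n : ℤ) = ∑ j ∈ Icc 1 n, ∑ p ∈ j.divisorsAntidiagonal,
      ∑ P ∈ monicIrreducibles k p.1, if P ^ p.2 ∣ f then (p.1 : ℤ) else 0 := by
  obtain ⟨hm, hd⟩ := mem_monics.1 hf
  have hf0 : f ≠ 0 := hm.ne_zero
  have hmem : ∀ P, P ∈ normalizedFactors f ↔ Irreducible P ∧ P.Monic ∧ P ∣ f :=
    fun P => Polynomial.mem_normalizedFactors_iff hf0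
  have hsum : (n : ℤ) = ∑ P ∈ (normalizedFactors f).toFinset,
      ∑ _e ∈ Icc 1 ((normalizedFactors f).count P), (P.natDegree : ℤ) := by
    rw [← hd]
    conv_lhs => rw [sum_normalizedFactors_natDegree hm]
    simp
  rw [hsum]
  simp only [← sum_filter]
  rw [sum_sigma', sum_sigma', sum_sigma']
  refine sum_bij' (fun x _ => ⟨⟨x.2 * x.1.natDegree, (x.1.natDegree, x.2)⟩, x.1⟩)
    (fun y _ => ⟨y.2, y.1.2.2⟩) ?_ ?_ (fun _ _ => rfl) ?_ (fun _ _ => rfl)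
  · rintro ⟨P, e⟩ hx
    simp only [mem_sigma, Multiset.mem_toFinset, mem_Icc] at hx
    obtain ⟨hP, he1, he⟩ := hx
    obtain ⟨hirr, hPm, -⟩ := (hmem P).1 hP
    have hdvd := (pow_dvd_iff_le_count hf0 hirr hPm e).2 he
    have hle : e * P.natDegree ≤ n := by
      rw [← hd, ← natDegree_pow]
      exact natDegree_le_of_dvd hdvd hf0
    have hpos : 0 < e * P.natDegree := Nat.mul_pos he1 hirr.natDegree_pos
    simp only [mem_sigma, mem_Icc, Nat.mem_divisorsAntidiagonal, mem_filter, mem_monicIrreducibles]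
    exact ⟨⟨⟨hpos, hle⟩, mul_comm _ _, hpos.ne'⟩, ⟨⟨hPm, trivial⟩, hirr⟩, hdvd⟩
  · rintro ⟨⟨j, d, e⟩, P⟩ hx
    simp only [mem_sigma, mem_Icc, Nat.mem_divisorsAntidiagonal, mem_filter,
      mem_monicIrreducibles] at hx
    obtain ⟨⟨-, rfl, hde⟩, ⟨⟨hPm, -⟩, hirr⟩, hdvd⟩ := hx
    have he : e ≠ 0 := right_ne_zero_of_mul hde
    simp only [mem_sigma, Multiset.mem_toFinset, mem_Icc]
    exact ⟨(hmem P).2 ⟨hirr, hPm, (dvd_pow_self P he).trans hdvd⟩, Nat.one_le_iff_ne_zero.2 he,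
      (pow_dvd_iff_le_count hf0 hirr hPm e).1 hdvd⟩
  · rintro ⟨⟨j, d, e⟩, P⟩ hx
    simp only [mem_sigma, Nat.mem_divisorsAntidiagonal, mem_filter, mem_monicIrreducibles] at hx
    obtain ⟨⟨-, rfl, -⟩, ⟨⟨-, rfl⟩, -⟩, -⟩ := hx
    simp only [mul_comm]

end Monics

section LFunction

open Polynomial

variable {k : Type*} [Field k] [CharP k 2]

open Classical in
/-- The multiplicative function on monic polynomials attached to the Kloosterman sum: its value at
`f` is `ψ` of the sum of `x + w / x` over the roots `x` of `f`, and `0` when `0` is a root. -/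
noncomputable def chi (w : k) (f : k[X]) : ℤ :=
  if f.coeff 0 = 0 then 0 else psi (f.nextCoeff + w * (f.coeff 1 / f.coeff 0))

lemma chi_of_coeff_zero (w : k) {f : k[X]} (hf : f.coeff 0 = 0) : chi w f = 0 := if_pos hf

lemma chi_of_coeff_ne_zero (w : k) {f : k[X]} (hf : f.coeff 0 ≠ 0) :
    chi w f = psi (f.nextCoeff + w * (f.coeff 1 / f.coeff 0)) := if_neg hf

lemma chi_mul (w : k) {f g : k[X]} (hf : f.Monic) (hg : g.Monic) :
    chi w (f * g) = chi w f * chi w g := by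
  unfold chi
  rw [mul_coeff_zero, mul_coeff_one, hf.nextCoeff_mul hg]
  by_cases hf0 : f.coeff 0 = 0
  · simp [hf0]
  by_cases hg0 : g.coeff 0 = 0
  · simp [hg0]
  rw [if_neg (mul_ne_zero hf0 hg0), if_neg hf0, if_neg hg0, ← map_add_eq_mul]
  congr 1
  field_simp
  ring

lemma chi_one (w : k) : chi w 1 = 1 := by
  simp [chi, nextCoeff, coeff_one]

lemma chi_pow (w : k) {f : k[X]} (hf : f.Monic) (e : ℕ) : chi w (f ^ e) = chi w f ^ e := by
  induction e with
  | zero => rw [pow_zero, pow_zero, chi_one]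
  | succ e ih => rw [pow_succ, chi_mul w (hf.pow e) hf, ih, pow_succ]

/-- Adding `c X ^ (n - 1)` changes the sum of the roots by `c`, and leaves the sum of their
inverses alone as soon as `n ≥ 3`. -/
lemma chi_add_C_mul_X_pow (w : k) {n : ℕ} (hn : 3 ≤ n) {f : k[X]} (hd : f.natDegree = n) {c : k}
    (hd' : (f + C c * X ^ (n - 1)).natDegree = n) :
    chi w (f + C c * X ^ (n - 1)) = psi c * chi w f := by
  have hcoeff : ∀ i < n - 1, (f + C c * X ^ (n - 1)).coeff i = f.coeff i := fun i hi => by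
    rw [coeff_add, coeff_C_mul_X_pow, if_neg hi.ne, add_zero]
  have hnext : (f + C c * X ^ (n - 1)).nextCoeff = c + f.nextCoeff := by
    rw [nextCoeff_of_natDegree_pos (by omega), nextCoeff_of_natDegree_pos (by omega), hd, hd',
      coeff_add, coeff_C_mul_X_pow, if_pos rfl, add_comm]
  unfold chi
  rw [hcoeff 0 (by omega), hcoeff 1 (by omega), hnext]
  split_ifs
  · rw [mul_zero]
  · rw [add_assoc, map_add_eq_mul]

lemma chi_X_sq_add (w a : k) {b : k} (hb : b ≠ 0) :
    chi w (X ^ 2 + C a * X + C b) = psi ((1 + w / b) * a) := by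
  have hconst : (X ^ 2 + C a * X + C b).coeff 0 = b := by simp
  have hlinear : (X ^ 2 + C a * X + C b).coeff 1 = a := by simp [coeff_C]
  have hnext : (X ^ 2 + C a * X + C b).nextCoeff = a := by
    rw [nextCoeff_of_natDegree_pos (by rw [natDegree_X_sq_add]; exact two_pos),
      natDegree_X_sq_add, hlinear]
  rw [chi_of_coeff_ne_zero w (by rwa [hconst]), hconst, hlinear, hnext]
  congr 1
  field_simp

variable [Finite k]

/-- The coefficients of the L-function of `chi w`. -/
noncomputable def lCoeff (w : k) (n : ℕ) : ℤ := ∑ f ∈ monics k n, chi w f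

/-- The coefficients of the logarithmic derivative of the L-function of `chi w`: the sums of the
values at powers `P ^ e` of primes, weighted by the degree of `P`, where `j = e * deg P`. -/
noncomputable def primeSum (w : k) (j : ℕ) : ℤ :=
  ∑ p ∈ j.divisorsAntidiagonal, p.1 * ∑ P ∈ monicIrreducibles k p.1, chi w P ^ p.2

open Classical in
lemma sum_chi_dvd (w : k) {n r : ℕ} {Q : k[X]} (hQ : Q.Monic) (hr : Q.natDegree = r)
    (hrn : r ≤ n) :
    ∑ f ∈ monics k n with Q ∣ f, chi w f = chi w Q * lCoeff w (n - r) := by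
  rw [lCoeff, mul_sum]
  refine (sum_bij (fun g _ => Q * g) (fun g hg => ?_) (fun g _ g' _ h => ?_) (fun f hf => ?_)
    fun g hg => ?_).symm
  · obtain ⟨hm, hd⟩ := mem_monics.1 hg
    rw [mem_filter, mem_monics, hQ.natDegree_mul hm, hd, hr]
    exact ⟨⟨hQ.mul hm, Nat.add_sub_cancel' hrn⟩, dvd_mul_right _ _⟩
  · exact mul_left_cancel₀ hQ.ne_zero h
  · rw [mem_filter, mem_monics] at hf
    obtain ⟨⟨hm, hd⟩, g, rfl⟩ := hf
    have hgm : g.Monic := hQ.of_mul_monic_left hm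
    rw [hQ.natDegree_mul hgm, hr] at hd
    exact ⟨g, mem_monics.2 ⟨hgm, Nat.eq_sub_of_add_eq' hd⟩, rfl⟩
  · exact (chi_mul w hQ (mem_monics.1 hg).1).symm

/-- The logarithmic derivative of the Euler product, as an identity between coefficients. -/
lemma newton_identity (w : k) (n : ℕ) :
    n * lCoeff w n = ∑ j ∈ Icc 1 n, primeSum w j * lCoeff w (n - j) := by
  classical
  have hexpand : (n : ℤ) * lCoeff w n = ∑ f ∈ monics k n, ∑ j ∈ Icc 1 n,
      ∑ p ∈ j.divisorsAntidiagonal, ∑ P ∈ monicIrreducibles k p.1,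
        if P ^ p.2 ∣ f then (p.1 : ℤ) * chi w f else 0 := by
    rw [lCoeff, mul_sum]
    refine sum_congr rfl fun f hf => ?_
    conv_lhs => rw [natCast_eq_sum_monicIrreducibles hf]
    simp only [sum_mul, ite_mul, zero_mul]
  rw [hexpand, sum_comm]
  refine sum_congr rfl fun j hj => ?_
  rw [sum_comm, primeSum, sum_mul]
  refine sum_congr rfl fun p hp => ?_
  rw [sum_comm, mul_sum, sum_mul]
  refine sum_congr rfl fun P hP => ?_
  obtain ⟨⟨hPm, hPd⟩, -⟩ := mem_monicIrreducibles.1 hP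
  have hdeg : (P ^ p.2).natDegree = j := by
    rw [natDegree_pow, hPd, mul_comm]
    exact (Nat.mem_divisorsAntidiagonal.1 hp).1
  rw [← sum_filter, ← mul_sum, sum_chi_dvd w (hPm.pow p.2) hdeg (mem_Icc.1 hj).2, chi_pow w hPm,
    mul_assoc]

lemma lCoeff_zero (w : k) : lCoeff w 0 = 1 := by
  rw [lCoeff, monics_zero, sum_singleton, chi_one]

/-- In degree at least three the next-to-leading coefficient varies independently of the two lowest
coefficients. -/
lemma lCoeff_eq_zero (w : k) {n : ℕ} (hn : 3 ≤ n) : lCoeff w n = 0 := by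
  obtain ⟨c, hc⟩ := exists_psi_eq_neg_one (F := k)
  have hmem : ∀ f ∈ monics k n, f + C c * X ^ (n - 1) ∈ monics k n := by
    intro f hf
    obtain ⟨hm, hd⟩ := mem_monics.1 hf
    have hlt : (C c * X ^ (n - 1)).degree < f.degree := by
      rw [degree_eq_natDegree hm.ne_zero, hd]
      exact (degree_C_mul_X_pow_le _ _).trans_lt (Nat.cast_lt.2 (by omega))
    exact mem_monics.2
      ⟨hm.add_of_left hlt, (natDegree_add_eq_left_of_degree_lt hlt).trans hd⟩
  have hchi : ∀ f ∈ monics k n, chi w f = -chi w (f + C c * X ^ (n - 1)) := fun f hf => by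
    rw [chi_add_C_mul_X_pow w hn (mem_monics.1 hf).2 (mem_monics.1 (hmem f hf)).2, hc,
      neg_one_mul, neg_neg]
  have hinvol : ∀ f ∈ monics k n, f + C c * X ^ (n - 1) + C c * X ^ (n - 1) = f := fun f _ => by
    rw [add_assoc, CharTwo.add_self_eq_zero, add_zero]
  have hself : lCoeff w n = -lCoeff w n := by
    rw [lCoeff, ← sum_neg_distrib]
    exact sum_bij' (fun f _ => f + C c * X ^ (n - 1)) (fun f _ => f + C c * X ^ (n - 1))
      hmem hmem hinvol hinvol hchi
  omega

end LFunction

section LCoeff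

open Polynomial

variable {k : Type*} [Field k] [Fintype k] [CharP k 2]

lemma lCoeff_one (w : k) : lCoeff w 1 = kl w := by
  have hzero : chi w (X + C (0 : k)) = 0 := by simp [chi]
  rw [lCoeff, sum_monics_one, sum_eq_add_sum_nz, kl, hzero, zero_add]
  refine sum_congr rfl fun a ha => ?_
  simp [chi, mem_nz.1 ha]

lemma lCoeff_two {w : k} (hw : w ≠ 0) : lCoeff w 2 = Fintype.card k := by
  classical
  have hzero : ∀ a : k, chi w (X ^ 2 + C a * X + C 0) = 0 := by simp [chi]
  have hsum : ∀ b ∈ nz k, ∑ a : k, chi w (X ^ 2 + C a * X + C b)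
      = if b = w then (Fintype.card k : ℤ) else 0 := by
    intro b hb
    have hb := mem_nz.1 hb
    have hiff : 1 + w / b = 0 ↔ b = w := by
      rw [CharTwo.add_eq_zero, eq_div_iff hb, one_mul]
    rw [sum_congr rfl fun a _ => chi_X_sq_add w a hb, sum_psi_mul, if_congr hiff rfl rfl]
  rw [lCoeff, sum_monics_two, sum_eq_add_sum_nz, sum_congr rfl fun a _ => hzero a,
    sum_congr rfl hsum, sum_ite_eq', if_pos (mem_nz.2 hw), sum_const_zero, zero_add]

end LCoeff

/-! ### Kloosterman sums in extensions -/

section Extension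

open Polynomial IntermediateField

variable {k : Type*} [Field k]
variable {L : Type*} [Field L] [Algebra k L]

lemma psi_eq_chi_minpoly [Finite k] [Finite L] [CharP k 2] [CharP L 2] (w : k) {x : L} (hx : x ≠ 0)
    {e : ℕ}
    (he : (minpoly k x).natDegree * e = Module.finrank k L) :
    psi (x + algebraMap k L w * x⁻¹) = chi w (minpoly k x) ^ e := by
  have hint : IsIntegral k x := .of_finite k x
  have hrank : Module.finrank k⟮x⟯ L = e := by
    have hmul := Module.finrank_mul_finrank k k⟮x⟯ L
    rw [adjoin.finrank hint, ← he] at hmul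
    exact Nat.eq_of_mul_eq_mul_left (minpoly.natDegree_pos hint) hmul
  have htrace : Algebra.trace k L x = e * (minpoly k x).nextCoeff := by
    rw [trace_eq_finrank_mul_minpoly_nextCoeff, hrank, CharTwo.neg_eq]
  have htrace_inv :
      Algebra.trace k L x⁻¹ = e * ((minpoly k x).coeff 1 / (minpoly k x).coeff 0) := by
    rw [trace_eq_finrank_mul_minpoly_nextCoeff, adjoin_simple_inv, hrank, CharTwo.neg_eq,
      nextCoeff_minpoly_inv hint hx]
  rw [psi_eq_psi_trace (F := k), map_add, ← Algebra.smul_def, map_smul, htrace, htrace_inv,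
    chi_of_coeff_ne_zero w (minpoly.coeff_zero_ne_zero hint hx), ← AddChar.map_nsmul_eq_pow]
  congr 1
  rw [smul_eq_mul, nsmul_eq_mul]
  ring

variable [Fintype L]

open Classical in
lemma card_minpoly_fiber [Finite k] {P : k[X]} (hm : P.Monic) (hirr : Irreducible P)
    (hd : P.natDegree ∣ Module.finrank k L) : #{x : L | minpoly k x = P} = P.natDegree := by
  have hcard : Fintype.card L = Nat.card k ^ Module.finrank k L := by
    rw [← Nat.card_eq_fintype_card, Module.natCard_eq_pow_finrank (K := k)]
  have hsplit : (P.map (algebraMap k L)).Splits := by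
    refine (FiniteField.isSplittingField_sub L k).splits.of_dvd
      (map_ne_zero (FiniteField.X_pow_card_sub_X_ne_zero _ Fintype.one_lt_card))
      (map_dvd (algebraMap k L) ?_)
    exact hcard ▸ hirr.natDegree_dvd_iff_dvd_X_pow_card_pow_sub_X.1 hd
  rw [← card_rootSet_eq_natDegree (K := L) (PerfectField.separable_of_irreducible hirr) hsplit,
    ← Set.toFinset_card]
  congr 1
  ext x
  simp only [mem_filter, mem_univ, true_and, Set.mem_toFinset, mem_rootSet]
  constructor
  · rintro rfl
    exact ⟨hm.ne_zero, minpoly.aeval k x⟩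
  · rintro ⟨-, hx⟩
    exact (minpoly.eq_of_irreducible_of_monic hirr hx hm).symm

variable [Finite k] [CharP k 2] [CharP L 2]

open Classical in
lemma sum_psi_minpoly_fiber (w : k) {P : k[X]} (hm : P.Monic) (hirr : Irreducible P) {e : ℕ}
    (he : P.natDegree * e = Module.finrank k L) :
    ∑ x ∈ nz L with minpoly k x = P, psi (x + algebraMap k L w * x⁻¹)
      = P.natDegree * chi w P ^ e := by
  have hterm : ∀ x ∈ ({x ∈ nz L | minpoly k x = P} : Finset L),
      psi (x + algebraMap k L w * x⁻¹) = chi w P ^ e := by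
    intro x hx
    obtain ⟨hx0, rfl⟩ := mem_filter.1 hx
    exact psi_eq_chi_minpoly w (mem_nz.1 hx0) he
  rw [sum_congr rfl hterm, sum_const, nsmul_eq_mul]
  by_cases hP : P.coeff 0 = 0
  · have he0 : e ≠ 0 := right_ne_zero_of_mul (he ▸ Module.finrank_pos.ne')
    rw [chi_of_coeff_zero w hP, zero_pow he0, mul_zero, mul_zero]
  · rw [← card_minpoly_fiber (L := L) hm hirr ⟨e, he.symm⟩]
    congr 3
    ext x
    simp only [mem_filter, mem_nz, mem_univ, true_and, and_iff_right_iff_imp]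
    rintro rfl rfl
    exact hP ((minpoly.coeff_zero_eq_zero (.of_finite k (0 : L))).2 rfl)

lemma kl_algebraMap (w : k) : kl (algebraMap k L w) = primeSum w (Module.finrank k L) := by
  classical
  have hint : ∀ x : L, IsIntegral k x := .of_finite k
  set n := Module.finrank k L
  have hpos : 0 < n := Module.finrank_pos
  have hdvd : ∀ x : L, (minpoly k x).natDegree ∣ n := fun x => minpoly.degree_dvd (hint x)
  rw [kl, primeSum, ← sum_fiberwise_of_maps_to (s := nz L) (t := n.divisorsAntidiagonal)
    (g := fun x => ((minpoly k x).natDegree, n / (minpoly k x).natDegree))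
    (fun x _ => Nat.mem_divisorsAntidiagonal.2 ⟨Nat.mul_div_cancel' (hdvd x), hpos.ne'⟩)]
  refine sum_congr rfl fun p hp => ?_
  obtain ⟨hde, -⟩ := Nat.mem_divisorsAntidiagonal.1 hp
  have hdeg : ∀ x : L, ((minpoly k x).natDegree, n / (minpoly k x).natDegree) = p ↔
      (minpoly k x).natDegree = p.1 := fun x =>
    ⟨congrArg Prod.fst, fun h => Prod.ext h
      (by rw [h, ← hde, Nat.mul_div_cancel_left _ (Nat.pos_of_mul_pos_right (hde ▸ hpos))])⟩
  simp only [hdeg]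
  rw [mul_sum, ← sum_fiberwise_of_maps_to (t := monicIrreducibles k p.1) (g := minpoly k)
    fun x hx => mem_monicIrreducibles.2
      ⟨⟨minpoly.monic (hint x), (mem_filter.1 hx).2⟩, minpoly.irreducible (hint x)⟩]
  refine sum_congr rfl fun P hP => ?_
  obtain ⟨⟨hPm, hPd⟩, hirr⟩ := mem_monicIrreducibles.1 hP
  rw [← hPd, ← sum_psi_minpoly_fiber w hPm hirr (by rw [hPd, hde]), filter_filter]
  refine sum_congr (filter_congr fun x _ => ?_) fun _ _ => rfl
  exact and_iff_right_of_imp (by rintro rfl; rfl)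

end Extension

/-! ### Kloosterman sums at primitive cube roots of unity -/

section CubeRoot

/-- The sequence `2 ^ n τ_n`, extended to `n = 0` by the recurrence. -/
def tauInt : ℕ → ℤ
  | 0 => 2
  | 1 => 1
  | n + 2 => tauInt (n + 1) - 4 * tauInt n

lemma tauInt_add_two (n : ℕ) : tauInt (n + 2) = tauInt (n + 1) - 4 * tauInt n := rfl

lemma tauInt_mul_tauInt_add (i j : ℕ) :
    tauInt j * tauInt (i + j) = tauInt (i + 2 * j) + 4 ^ j * tauInt i := by
  induction j using Nat.twoStepInduction generalizing i with
  | zero => simp [tauInt]; ring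
  | one => simp [tauInt]
  | more j ih₀ ih₁ =>
    have h₀ := ih₀ (i + 2)
    have h₁ := ih₁ (i + 1)
    rw [show i + 2 + j = i + (j + 2) by ring, show i + 2 + 2 * j = i + 2 * j + 2 by ring] at h₀
    rw [show i + 1 + (j + 1) = i + (j + 2) by ring,
      show i + 1 + 2 * (j + 1) = i + 2 * j + 2 + 1 by ring] at h₁
    rw [show i + 2 * (j + 2) = i + 2 * j + 2 + 2 by ring, tauInt_add_two (i + 2 * j + 2),
      tauInt_add_two j]
    rw [tauInt_add_two i] at h₀
    linear_combination h₁ - 4 * h₀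

lemma tauInt_two_mul (j : ℕ) : tauInt (2 * j) = tauInt j ^ 2 - 2 * 4 ^ j := by
  have hmul := tauInt_mul_tauInt_add 0 j
  rw [zero_add, zero_add, show tauInt 0 = 2 from rfl] at hmul
  linear_combination -hmul

variable {k : Type*} [Field k] [Fintype k] [CharP k 2]

lemma primeSum_one (w : k) : primeSum w 1 = kl w := by
  simpa [lCoeff_zero, lCoeff_one] using (newton_identity w 1).symm

lemma primeSum_two {w : k} (hw : w ≠ 0) : primeSum w 2 = 2 * Fintype.card k - kl w ^ 2 := by
  have hnewton := newton_identity w 2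
  simp only [sum_Icc_succ_top one_le_two, Icc_self, sum_singleton, Nat.sub_self, lCoeff_zero,
    Nat.add_one_sub_one, lCoeff_one, lCoeff_two hw, primeSum_one, Nat.cast_ofNat] at hnewton
  linarith

lemma primeSum_add_three {w : k} (hw : w ≠ 0) (n : ℕ) :
    primeSum w (n + 3) = -kl w * primeSum w (n + 2) - Fintype.card k * primeSum w (n + 1) := by
  have hnewton := newton_identity w (n + 3)
  have hvanish : ∑ j ∈ Icc 1 n, primeSum w j * lCoeff w (n + 3 - j) = 0 := by
    refine sum_eq_zero fun j hj => ?_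
    rw [lCoeff_eq_zero w (by have := mem_Icc.1 hj; omega), mul_zero]
  rw [sum_Icc_succ_top (by omega), sum_Icc_succ_top (by omega), sum_Icc_succ_top (by omega),
    hvanish, lCoeff_eq_zero w (by omega), show n + 3 - (n + 1) = 2 by omega,
    show n + 3 - (n + 1 + 1) = 1 by omega, show n + 3 - (n + 2 + 1) = 0 by omega,
    lCoeff_zero, lCoeff_one, lCoeff_two hw] at hnewton
  linarith

lemma nz1_of_card_eq_four [DecidableEq k] (hk : Fintype.card k = 4) {w : k}
    (hw : w ^ 2 + w + 1 = 0) : nz1 k = {w, 1 + w} := by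
  refine (eq_of_subset_of_card_le ?_ ?_).symm
  · simp only [insert_subset_iff, singleton_subset_iff, mem_nz1]
    grind
  · have hcard := card_nz1 (F := k)
    rw [hk] at hcard
    rw [card_pair (by simp)]
    omega

lemma kl_of_card_eq_four (hk : Fintype.card k = 4) {w : k} (hw : w ^ 2 + w + 1 = 0) :
    kl w = -1 := by
  classical
  have hw0 : w ≠ 0 := by rintro rfl; simp at hw
  have hw1 : 1 + w ≠ 0 := by rintro h; grind
  have hpsi : psi w = -1 := by
    refine (psi_cases w).resolve_left fun h => ?_
    obtain ⟨y, hy⟩ := psi_eq_one_iff.1 h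
    have hpow := FiniteField.pow_card y
    rw [hk] at hpow
    grind
  have hpsi_one : psi (1 : k) = 1 := psi_eq_one_iff.2 ⟨w, by grind⟩
  rw [kl, sum_nz_eq_add_sum_nz1, nz1_of_card_eq_four hk hw, sum_pair (by simp),
    show 1 + w + w * (1 + w)⁻¹ = 0 by field_simp; grind, mul_inv_cancel₀ hw0, inv_one, mul_one,
    map_add_eq_mul, map_add_eq_mul, hpsi, hpsi_one, map_zero_eq_one]
  norm_num

lemma primeSum_of_card_eq_four (hk : Fintype.card k = 4) {w : k} (hw : w ^ 2 + w + 1 = 0) (n : ℕ) :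
    primeSum w (n + 1) = -tauInt (n + 1) := by
  have hw0 : w ≠ 0 := by rintro rfl; simp at hw
  have hkl := kl_of_card_eq_four hk hw
  induction n using Nat.twoStepInduction with
  | zero => rw [primeSum_one, hkl]; rfl
  | one => rw [primeSum_two hw0, hkl, hk]; rfl
  | more n ih₀ ih₁ =>
    have htau : tauInt (n + 2 + 1) = tauInt (n + 1 + 1) - 4 * tauInt (n + 1) := rfl
    rw [primeSum_add_three hw0, ih₀, ih₁, hkl, hk, htau]
    push_cast
    ring

omit [Fintype k] in
lemma exists_algebraMap_eq_cube_root [Finite k] (hk : Nat.card k = 4) {L : Type*} [Field L]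
    [CharP L 2] [Algebra k L] {ζ : L} (hζ : ζ ^ 2 + ζ + 1 = 0) :
    ∃ w : k, w ^ 2 + w + 1 = 0 ∧ algebraMap k L w = ζ := by
  obtain ⟨w, hw⟩ := psi_eq_one_iff.1 ((psi_one_of_card (F := k) (m := 2) hk).trans (by norm_num))
  have hw' : algebraMap k L w ^ 2 + algebraMap k L w = 1 := by
    rw [← map_pow, ← map_add, hw, map_one]
  have hroots : ζ = algebraMap k L w ∨ ζ = algebraMap k L w + 1 :=
    artinSchreier_eq_iff.1 (by grind)
  rcases hroots with rfl | rfl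
  · exact ⟨w, by grind, rfl⟩
  · exact ⟨w + 1, by grind, by rw [map_add, map_one]⟩

lemma kl_cube_root {L : Type*} [Field L] [Fintype L] [CharP L 2] {n : ℕ}
    (hL : Fintype.card L = 4 ^ n) {ζ : L} (hζ : ζ ^ 2 + ζ + 1 = 0) : kl ζ = -tauInt n := by
  let _ : Algebra (ZMod 2) L := ZMod.algebra L 2
  let k := GaloisField 2 2
  let _ : Fintype k := Fintype.ofFinite k
  have hk : Nat.card k = 4 := GaloisField.card 2 2 two_ne_zero
  have hcard := Module.card_eq_pow_finrank (K := ZMod 2) (V := L)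
  have hrank : Module.finrank (ZMod 2) L = 2 * n := by
    rw [hL, ZMod.card, show (4 : ℕ) = 2 ^ 2 from rfl, ← pow_mul] at hcard
    exact (Nat.pow_right_injective le_rfl hcard).symm
  obtain ⟨φ⟩ := FiniteField.nonempty_algHom_of_finrank_dvd (F := ZMod 2) (K := k) (L := L)
    (by rw [GaloisField.finrank 2 two_ne_zero, hrank]; exact ⟨n, rfl⟩)
  let _ : Algebra k L := φ.toRingHom.toAlgebra
  have hrank' : Module.finrank k L = n := by
    have hcard := Module.natCard_eq_pow_finrank (K := k) (V := L)
    rw [Nat.card_eq_fintype_card, hL, hk] at hcard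
    exact (Nat.pow_right_injective (by norm_num) hcard).symm
  obtain ⟨w, hw, rfl⟩ := exists_algebraMap_eq_cube_root hk hζ
  obtain ⟨m, rfl⟩ := Nat.exists_eq_add_one.2 (hrank' ▸ Module.finrank_pos : 0 < n)
  rw [kl_algebraMap, hrank', primeSum_of_card_eq_four (Nat.card_eq_fintype_card.symm.trans hk) hw]

end CubeRoot

/-! ### Quadratic extensions and the value of the moment -/

section NormForm

variable {F : Type*} [Field F]

/-- The norm of `a + b * θ` in the quadratic étale algebra `F[θ] / (θ ^ 2 + θ + κ)`. -/
def normForm (κ a b : F) : F := a ^ 2 + a * b + κ * b ^ 2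

lemma normForm_zero_right (κ a : F) : normForm κ a 0 = a ^ 2 := by simp [normForm]

variable [CharP F 2]

lemma normForm_add_one (κ a b : F) : normForm κ (a + 1) b = 1 + normForm κ a b + b := by
  simp only [normForm]
  grind

lemma normForm_ne_zero [Finite F] {κ : F} (hκ : psi κ = -1) {a b : F} (hab : (a, b) ≠ 0) :
    normForm κ a b ≠ 0 := by
  intro hzero
  rcases eq_or_ne b 0 with rfl | hb
  · exact hab (by simpa [normForm_zero_right] using hzero)
  · rw [normForm] at hzero
    have hκ_eq : κ = (a / b) ^ 2 + a / b := by field_simp; grind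
    rw [hκ_eq, psi_artinSchreier] at hκ
    norm_num at hκ

open Classical in
/-- The Kloosterman sum over the quadratic étale algebra `F[θ] / (θ ^ 2 + θ + κ)` at the parameter
`θ`, as a sum over the coordinates of `a + b * θ`. -/
noncomputable def normFormSum [Fintype F] (κ : F) : ℤ :=
  ∑ a : F, ∑ b : F, if normForm κ a b = 0 then 0 else psi (b + a * (normForm κ a b)⁻¹)

variable [Fintype F]

lemma normFormSum_one : normFormSum (1 : F) = psi (1 : F) * moment F := by
  classical simp only [normFormSum, normForm, one_mul, ← sum_quadratic_form]

open Classical in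
lemma kl_eq_sum_ite (w : F) : kl w = ∑ x : F, if x = 0 then 0 else psi (x + w * x⁻¹) := by
  rw [sum_eq_add_sum_nz, if_pos rfl, zero_add, kl]
  exact sum_congr rfl fun x hx => (if_neg (mem_nz.1 hx)).symm

lemma kl_mul_kl_add_one (w : F) : kl w * kl (w + 1) = normFormSum (w ^ 2 + w) := by
  classical
  rw [kl_eq_sum_ite, kl_eq_sum_ite, sum_mul_sum, normFormSum, ← Fintype.sum_prod_type',
    ← Fintype.sum_prod_type']
  symm
  refine sum_nbij' (fun p => (p.1 + p.2 * w, p.1 + p.2 * (w + 1)))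
    (fun p => (p.1 + (p.1 + p.2) * w, p.1 + p.2)) (by simp) (by simp) ?_ ?_ ?_
  · rintro ⟨a, b⟩ -
    ext <;> grind
  · rintro ⟨x, y⟩ -
    ext <;> grind
  · rintro ⟨a, b⟩ -
    have hfactor : normForm (w ^ 2 + w) a b = (a + b * w) * (a + b * (w + 1)) := by
      rw [normForm]
      grind
    simp only [hfactor, mul_eq_zero, ite_mul, mul_ite, zero_mul, mul_zero, ← ite_or,
      ← map_add_eq_mul]
    refine ite_congr (by simp only [or_comm]) (fun _ => rfl) fun hne => congrArg psi ?_
    rw [not_or] at hne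
    obtain ⟨hx, hy⟩ := hne
    field_simp
    grind

end NormForm

/-- The generator `θ` of the quadratic extension `K / F` is an Artin–Schreier root of `κ`, an
element of absolute trace one. -/
structure IsArtinSchreierGen {F K : Type*} [Field F] [Fintype F] [CharP F 2] [Field K] [Fintype K]
    [Algebra F K] (κ : F) (θ : K) : Prop where
  card : Fintype.card K = Fintype.card F ^ 2
  sq_add : θ ^ 2 + θ = algebraMap F K κ
  psi_neg : psi κ = -1

namespace IsArtinSchreierGen

variable {F K : Type*} [Field F] [Fintype F] [CharP F 2] [Field K] [Fintype K] [Algebra F K]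
variable {κ : F} {θ : K}

lemma ne_algebraMap (h : IsArtinSchreierGen κ θ) (a : F) : θ ≠ algebraMap F K a := by
  rintro rfl
  have hκ : a ^ 2 + a = κ := (algebraMap F K).injective (by simpa using h.sq_add)
  have hpsi := h.psi_neg
  rw [← hκ, psi_artinSchreier] at hpsi
  norm_num at hpsi

lemma coord_inj (h : IsArtinSchreierGen κ θ) {a b c d : F}
    (he : algebraMap F K a + algebraMap F K b * θ = algebraMap F K c + algebraMap F K d * θ) :
    a = c ∧ b = d := by
  have hbd : b = d := by
    by_contra hne
    have hne' : algebraMap F K b - algebraMap F K d ≠ 0 := by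
      rw [← map_sub]
      exact (map_ne_zero _).2 (sub_ne_zero.2 hne)
    refine h.ne_algebraMap ((c - a) / (b - d)) ?_
    rw [map_div₀, map_sub, map_sub]
    field_simp
    linear_combination he
  subst hbd
  exact ⟨(algebraMap F K).injective (add_right_cancel he), rfl⟩

lemma coord_bijective (h : IsArtinSchreierGen κ θ) :
    Function.Bijective (fun p : F × F => algebraMap F K p.1 + algebraMap F K p.2 * θ) := by
  rw [Fintype.bijective_iff_injective_and_card]
  refine ⟨fun p r hpr => ?_, ?_⟩
  · have := h.coord_inj hpr
    exact Prod.ext this.1 this.2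
  · rw [Fintype.card_prod, h.card, sq]

lemma exists_coord (h : IsArtinSchreierGen κ θ) (x : K) :
    ∃ a b : F, x = algebraMap F K a + algebraMap F K b * θ := by
  obtain ⟨p, hp⟩ := h.coord_bijective.2 x
  exact ⟨p.1, p.2, hp.symm⟩

lemma coord_eq_zero_iff (h : IsArtinSchreierGen κ θ) {a b : F} :
    algebraMap F K a + algebraMap F K b * θ = 0 ↔ (a, b) = 0 := by
  refine ⟨fun hzero => ?_, fun hab => ?_⟩
  · obtain ⟨rfl, rfl⟩ := h.coord_inj (c := 0) (d := 0) (by simpa using hzero)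
    rfl
  · obtain ⟨rfl, rfl⟩ := Prod.mk_eq_zero.1 hab
    simp

lemma sum_coord {M : Type*} [AddCommMonoid M] (h : IsArtinSchreierGen κ θ) (f : K → M) :
    ∑ x : K, f x = ∑ a : F, ∑ b : F, f (algebraMap F K a + algebraMap F K b * θ) := by
  rw [← Fintype.sum_prod_type', ← h.coord_bijective.sum_comp]

lemma finrank_eq_two (h : IsArtinSchreierGen κ θ) : Module.finrank F K = 2 :=
  Nat.pow_right_injective Fintype.one_lt_card
    ((Module.card_eq_pow_finrank (K := F) (V := K)).symm.trans h.card)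

variable [CharP K 2]

lemma pow_card (h : IsArtinSchreierGen κ θ) : θ ^ Fintype.card F = θ + 1 := by
  set frob : K →ₐ[F] K := FiniteField.frobeniusAlgHom F K
  have hroot : (frob θ) ^ 2 + frob θ = θ ^ 2 + θ := by
    rw [← map_pow, ← map_add, h.sq_add, AlgHom.commutes]
  refine (artinSchreier_eq_iff.1 hroot).resolve_left fun hfix => ?_
  have hone : frob = 1 := by
    ext x
    obtain ⟨a, b, rfl⟩ := h.exists_coord x
    simp [hfix]
  have horder := FiniteField.orderOf_frobeniusAlgHom F K
  rw [h.finrank_eq_two, show FiniteField.frobeniusAlgHom F K = 1 from hone, orderOf_one] at horder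
  norm_num at horder

lemma trace_coord (h : IsArtinSchreierGen κ θ) (a b : F) :
    Algebra.trace F K (algebraMap F K a + algebraMap F K b * θ) = b := by
  apply (algebraMap F K).injective
  rw [FiniteField.algebraMap_trace_eq_sum_pow, h.finrank_eq_two, sum_range_succ, sum_range_one,
    pow_zero, pow_one, pow_one, Nat.card_eq_fintype_card,
    ← FiniteField.frobeniusAlgHom_apply, map_add, map_mul, AlgHom.commutes, AlgHom.commutes,
    FiniteField.frobeniusAlgHom_apply, h.pow_card]
  grind

lemma psi_coord (h : IsArtinSchreierGen κ θ) (a b : F) :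
    psi (algebraMap F K a + algebraMap F K b * θ) = psi b := by
  rw [psi_eq_psi_trace (F := F), h.trace_coord]

lemma kl_eq_normFormSum (h : IsArtinSchreierGen κ θ) : kl θ = normFormSum κ := by
  classical
  rw [kl_eq_sum_ite, h.sum_coord, normFormSum]
  refine sum_congr rfl fun a _ => sum_congr rfl fun b _ => ?_
  by_cases hab : (a, b) = 0
  · obtain ⟨rfl, rfl⟩ := Prod.mk_eq_zero.1 hab
    simp [normForm_zero_right]
  · have hnorm := normForm_ne_zero h.psi_neg hab
    have hx := mt h.coord_eq_zero_iff.1 hab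
    rw [if_neg hx, if_neg hnorm,
      ← h.psi_coord (a + κ * b * (normForm κ a b)⁻¹)]
    congr 1
    have hnormK := (map_ne_zero (algebraMap F K)).2 hnorm
    have hsq := h.sq_add
    simp only [normForm, map_add, map_mul, map_pow, map_inv₀] at hnormK ⊢
    generalize algebraMap F K a = a', algebraMap F K b = b', algebraMap F K κ = κ' at *
    clear h
    field_simp
    grind

end IsArtinSchreierGen

section MomentValue

variable {F : Type*} [Field F] [Fintype F] [CharP F 2] {m : ℕ}

lemma moment_odd {K : Type*} [Field K] [Fintype K] [CharP K 2] [Algebra F K]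
    (hF : Fintype.card F = 2 ^ m) (hK : Fintype.card K = 4 ^ m) (hm : ¬ Even m) :
    moment F = tauInt m := by
  have hpsi : psi (1 : F) = -1 := by
    rw [psi_one_of_card (by rw [Nat.card_eq_fintype_card, hF]),
      Odd.neg_one_pow (Nat.not_even_iff_odd.1 hm)]
  have hpsiK : psi (1 : K) = 1 := by
    rw [psi_one_of_card (m := 2 * m) (by rw [Nat.card_eq_fintype_card, hK, pow_mul]; norm_num),
      (even_two_mul m).neg_one_pow]
  obtain ⟨θ, hθ⟩ := psi_eq_one_iff.1 hpsiK
  have hgen : IsArtinSchreierGen (1 : F) θ :=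
    ⟨by rw [hK, hF, ← pow_mul, mul_comm, pow_mul]; norm_num, by rw [hθ, map_one], hpsi⟩
  have hkl := hgen.kl_eq_normFormSum
  rw [kl_cube_root hK (by grind), normFormSum_one, hpsi] at hkl
  linarith

lemma moment_even (hF : Fintype.card F = 2 ^ m) (hm : Even m) :
    moment F = tauInt m + 2 * 2 ^ m := by
  have hpsi : psi (1 : F) = 1 := by
    rw [psi_one_of_card (by rw [Nat.card_eq_fintype_card, hF]), hm.neg_one_pow]
  obtain ⟨w, hw⟩ := psi_eq_one_iff.1 hpsi
  obtain ⟨j, rfl⟩ := hm.exists_two_nsmul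
  have hF' : Fintype.card F = 4 ^ j := by rw [hF, smul_eq_mul, pow_mul]; norm_num
  have hprod := kl_mul_kl_add_one w
  rw [kl_cube_root hF' (by grind), kl_cube_root hF' (by grind), hw, normFormSum_one, hpsi] at hprod
  rw [smul_eq_mul, tauInt_two_mul, pow_mul]
  norm_num
  linarith

end MomentValue

/-! ### Sums over the values of the norm form -/

section NormFormSums

variable {F : Type*} [Field F] [Fintype F] [CharP F 2] {κ : F}

lemma sum_normForm_comp (hκ : psi κ = -1) {b : F} (hb : b ≠ 0) (g : F → ℤ) :
    ∑ a : F, g (normForm κ a b) = ∑ n : F, (1 - psi (n / b ^ 2)) * g n := by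
  have hb2 : b ^ 2 ≠ 0 := pow_ne_zero 2 hb
  calc ∑ a : F, g (normForm κ a b)
      = ∑ y : F, g (b ^ 2 * (y ^ 2 + y + κ)) := by
        rw [← Equiv.sum_comp (Equiv.mulLeft₀ b hb)]
        refine sum_congr rfl fun y _ => congrArg g ?_
        rw [Equiv.mulLeft₀_apply, normForm]
        ring
    _ = ∑ e : F, (1 + psi e) * g (b ^ 2 * (e + κ)) :=
        sum_artinSchreier_comp fun e => g (b ^ 2 * (e + κ))
    _ = ∑ n : F, (1 - psi (n / b ^ 2)) * g n := by
        rw [← Equiv.sum_comp ((Equiv.addRight κ).trans (Equiv.mulLeft₀ (b ^ 2) hb2))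
          fun n => (1 - psi (n / b ^ 2)) * g n]
        refine sum_congr rfl fun e _ => ?_
        simp only [Equiv.trans_apply, Equiv.coe_addRight, Equiv.mulLeft₀_apply]
        rw [mul_div_cancel_left₀ _ hb2, map_add_eq_mul, hκ, mul_neg_one, sub_neg_eq_add]

lemma sum_normForm_zero_comp (g : F → ℤ) : ∑ a : F, g (normForm κ a 0) = ∑ n : F, g n := by
  simp only [normForm_zero_right, sum_sq_comp g]

lemma sum_nz_psi_div_sq (n : F) : ∑ b ∈ nz F, psi (n / b ^ 2) = ∑ b ∈ nz F, psi (n * b) := by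
  rw [← sum_nz_inv (fun b => psi (n * b)), ← sum_nz_sq (fun b => psi (n * b⁻¹))]
  simp only [div_eq_mul_inv]

lemma sum_psi_inv_normForm (hκ : psi κ = -1) :
    ∑ a : F, ∑ b : F, psi (normForm κ a b)⁻¹ = -Fintype.card F := by
  have hb : ∀ b ∈ nz F,
      ∑ a : F, psi (normForm κ a b)⁻¹ = -∑ n : F, psi (n / b ^ 2) * psi n⁻¹ := by
    intro b hb
    rw [sum_normForm_comp hκ (mem_nz.1 hb) fun n => psi n⁻¹]
    simp only [sub_mul, one_mul, sum_sub_distrib, sum_psi_inv, zero_sub]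
  have hn : ∀ n ∈ nz F, (∑ b ∈ nz F, psi (n * b)) * psi n⁻¹ = -psi n⁻¹ := by
    intro n hn
    rw [sum_nz_psi_mul_of_ne_zero (mem_nz.1 hn), neg_one_mul]
  rw [sum_comm, sum_eq_add_sum_nz, sum_normForm_zero_comp fun n => psi n⁻¹, sum_psi_inv, zero_add,
    sum_congr rfl hb, sum_neg_distrib, sum_comm]
  simp only [← sum_mul, sum_nz_psi_div_sq]
  rw [sum_eq_add_sum_nz, sum_congr rfl hn, sum_neg_distrib, sum_nz_psi_inv]
  simp [card_nz]

lemma sum_psi_inv_normForm_mul_shift (hκ : psi κ = -1) :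
    ∑ a : F, ∑ b : F, psi (normForm κ a b)⁻¹ * psi (normForm κ (a + 1) b)⁻¹ =
      -(1 - Fintype.card F - 2 * psi (1 : F) + Fintype.card F * psi (1 : F) + moment F) := by
  simp only [normForm_add_one]
  have hb : ∀ b ∈ nz F, ∑ a : F, psi (normForm κ a b)⁻¹ * psi (1 + normForm κ a b + b)⁻¹ =
      ∑ n : F, psi n⁻¹ * psi (1 + n + b)⁻¹ -
        ∑ n : F, psi (n / b ^ 2 + n⁻¹ + (1 + n + b)⁻¹) := by
    intro b hb
    rw [sum_normForm_comp hκ (mem_nz.1 hb) fun n => psi n⁻¹ * psi (1 + n + b)⁻¹]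
    simp only [sub_mul, one_mul, sum_sub_distrib, map_add_eq_mul, mul_assoc]
  have hn : ∀ n : F, ∑ b : F, psi n⁻¹ * psi (1 + n + b)⁻¹ = 0 := by
    intro n
    have hshift : ∑ b : F, psi (1 + n + b)⁻¹ = 0 :=
      (Equiv.sum_comp (Equiv.addLeft (1 + n)) fun b => psi b⁻¹).trans sum_psi_inv
    rw [← mul_sum, hshift, mul_zero]
  rw [← sum_psi_norm_trace, sum_comm, sum_eq_add_sum_nz,
    sum_normForm_zero_comp fun n => psi n⁻¹ * psi (1 + n + 0)⁻¹, sum_congr rfl hb,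
    sum_sub_distrib, ← add_sub_assoc,
    ← sum_eq_add_sum_nz fun b => ∑ n : F, psi n⁻¹ * psi (1 + n + b)⁻¹, sum_comm]
  simp only [hn, sum_const_zero, zero_sub]

lemma sum_one_sub_psi_inv_normForm_mul_shift (hκ : psi κ = -1) :
    ∑ a : F, ∑ b : F, (1 - psi (normForm κ a b)⁻¹) * (1 - psi (normForm κ (a + 1) b)⁻¹) =
      (Fintype.card F : ℤ) ^ 2 + 3 * Fintype.card F - 1 + 2 * psi (1 : F)
        - Fintype.card F * psi (1 : F) - moment F := by
  have hshift : ∑ a : F, ∑ b : F, psi (normForm κ (a + 1) b)⁻¹ = -Fintype.card F := by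
    rw [← sum_psi_inv_normForm hκ]
    exact Equiv.sum_comp (Equiv.addRight (1 : F)) fun a => ∑ b : F, psi (normForm κ a b)⁻¹
  have hexpand : ∀ x y : ℤ, (1 - x) * (1 - y) = 1 - x - y + x * y := fun x y => by ring
  simp only [hexpand, sum_add_distrib, sum_sub_distrib, sum_psi_inv_normForm hκ, hshift,
    sum_psi_inv_normForm_mul_shift hκ, sum_const, card_univ, nsmul_eq_mul, mul_one]
  ring

end NormFormSums

/-! ### The unit circle of a quadratic extension -/

section UnitCircle

variable {K : Type*} [Field K] [Fintype K]

open Classical in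
/-- The unit circle of an involution `σ` of a finite field: the elements of norm one. -/
noncomputable def circ (σ : K →+* K) : Finset K := {v : K | v * σ v = 1}

variable {σ : K →+* K}

@[simp] lemma mem_circ {v : K} : v ∈ circ σ ↔ v * σ v = 1 := by simp [circ]

open Classical in
/-- The indicator function of the unit circle. -/
noncomputable def circInd (σ : K →+* K) (x : K) : ℤ := if x ∈ circ σ then 1 else 0

lemma circInd_of_mem {x : K} (hx : x ∈ circ σ) : circInd σ x = 1 := if_pos hx

lemma circInd_of_notMem {x : K} (hx : x ∉ circ σ) : circInd σ x = 0 := if_neg hx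

lemma sum_circInd_mul (g : K → ℤ) : ∑ v : K, circInd σ v * g v = ∑ v ∈ circ σ, g v := by
  simp only [circInd, ite_mul, one_mul, zero_mul, sum_ite_mem, univ_inter]

/-- The number of ways to write `s` as a difference of two elements of the unit circle. -/
noncomputable def circDiffCount (σ : K →+* K) (s : K) : ℤ := ∑ v ∈ circ σ, circInd σ (s + v)

lemma circDiffCount_zero : circDiffCount σ 0 = #(circ σ) := by
  rw [circDiffCount, card_eq_sum_ones, Nat.cast_sum]
  refine sum_congr rfl fun v hv => ?_
  rw [zero_add, circInd_of_mem hv, Nat.cast_one]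

lemma sum_circ_add [CharP K 2] (g : K → ℤ) :
    ∑ u ∈ circ σ, ∑ v ∈ circ σ, g (u + v) = ∑ s : K, circDiffCount σ s * g s := by
  simp only [circDiffCount, sum_mul]
  rw [sum_comm (s := (univ : Finset K))]
  refine sum_congr rfl fun u _ => ?_
  rw [← sum_circInd_mul, ← Equiv.sum_comp (Equiv.addRight u)]
  refine sum_congr rfl fun s _ => ?_
  rw [Equiv.coe_addRight, show u + (s + u) = s by grind]

end UnitCircle

/-- The conjugation of a quadratic extension with an Artin–Schreier generator. -/
structure IsQuadraticConj {F K : Type*} [Field F] [Fintype F] [CharP F 2] [Field K] [Fintype K]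
    [Algebra F K] (κ : F) (θ : K) (σ : K →+* K) : Prop extends IsArtinSchreierGen κ θ where
  map_algebraMap : ∀ a : F, σ (algebraMap F K a) = algebraMap F K a
  map_gen : σ θ = θ + 1

namespace IsQuadraticConj

variable {F : Type*} [Field F] [Fintype F] [CharP F 2]
variable {K : Type*} [Field K] [Fintype K] [Algebra F K]
variable {κ : F} {θ : K} {σ : K →+* K}

lemma map_coord (h : IsQuadraticConj κ θ σ) (a b : F) :
    σ (algebraMap F K a + algebraMap F K b * θ) =
      algebraMap F K (a + b) + algebraMap F K b * θ := by
  rw [map_add, map_mul, h.map_algebraMap, h.map_algebraMap, h.map_gen, map_add]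
  ring

variable [CharP K 2]

lemma mul_map_coord (h : IsQuadraticConj κ θ σ) (a b : F) :
    (algebraMap F K a + algebraMap F K b * θ) * σ (algebraMap F K a + algebraMap F K b * θ) =
      algebraMap F K (normForm κ a b) := by
  rw [h.map_coord]
  simp only [normForm, map_add, map_mul, map_pow, ← h.sq_add]
  grind

lemma coord_mem_circ (h : IsQuadraticConj κ θ σ) (a b : F) :
    algebraMap F K a + algebraMap F K b * θ ∈ circ σ ↔ normForm κ a b = 1 := by
  rw [mem_circ, h.mul_map_coord, map_eq_one_iff _ (algebraMap F K).injective]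

lemma card_circ (h : IsQuadraticConj κ θ σ) : (#(circ σ) : ℤ) = Fintype.card F + 1 := by
  classical
  have hfiber : ∀ b ∈ nz F, ∑ a : F, (if normForm κ a b = 1 then (1 : ℤ) else 0) =
      1 - psi (1 / b ^ 2) := by
    intro b hb
    rw [sum_normForm_comp h.psi_neg (mem_nz.1 hb) fun n => if n = 1 then (1 : ℤ) else 0]
    simp
  have hcount : (#(circ σ) : ℤ) = ∑ x : K, if x ∈ circ σ then 1 else 0 := by simp [circ]
  rw [hcount, h.sum_coord]
  simp only [h.coord_mem_circ]
  rw [sum_comm, sum_eq_add_sum_nz, sum_normForm_zero_comp fun n => if n = 1 then (1 : ℤ) else 0,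
    sum_congr rfl hfiber, sum_sub_distrib, sum_nz_psi_div_sq]
  simp [card_nz, sum_nz_psi]
  ring

lemma coord_mul_mem_circ (h : IsQuadraticConj κ θ σ) (a b c d : F) :
    (algebraMap F K a + algebraMap F K b * θ) * (algebraMap F K c + algebraMap F K d * θ) ∈ circ σ ↔
      normForm κ a b * normForm κ c d = 1 := by
  rw [mem_circ, map_mul, mul_mul_mul_comm, h.mul_map_coord, h.mul_map_coord, ← map_mul,
    map_eq_one_iff _ (algebraMap F K).injective]

open Classical in
/-- The solutions `v` are `v = s * (c + θ)` with `c ^ 2 + c = N(s)⁻¹ + κ`. -/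
lemma card_circ_inter_shift (h : IsQuadraticConj κ θ σ) {a b : F} (hab : (a, b) ≠ 0) :
    (#{v ∈ circ σ | algebraMap F K a + algebraMap F K b * θ + v ∈ circ σ} : ℤ) =
      1 - psi (normForm κ a b)⁻¹ := by
  have hcard := card_artinSchreier_fiber ((normForm κ a b)⁻¹ + κ)
  rw [map_add_eq_mul, h.psi_neg, mul_neg_one, ← sub_eq_add_neg] at hcard
  rw [← hcard]
  norm_cast
  symm
  have hn : normForm κ a b ≠ 0 := normForm_ne_zero h.psi_neg hab
  have hs : algebraMap F K a + algebraMap F K b * θ ≠ 0 := mt h.coord_eq_zero_iff.1 hab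
  have hmem := h.coord_mul_mem_circ a b
  generalize algebraMap F K a + algebraMap F K b * θ = s at hs hmem ⊢
  have hmem_shift : ∀ c d : F, s + s * (algebraMap F K c + algebraMap F K d * θ) ∈ circ σ ↔
      normForm κ a b * normForm κ (c + 1) d = 1 := by
    intro c d
    rw [← hmem, map_add, map_one]
    ring_nf
  refine card_bij (fun c _ => s * (algebraMap F K c + algebraMap F K 1 * θ)) ?_ ?_ ?_
  · intro c hc
    have hc' : c ^ 2 + c = (normForm κ a b)⁻¹ + κ := by simpa using hc
    rw [mem_filter, hmem_shift, hmem, normForm_add_one,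
      show normForm κ c 1 = (normForm κ a b)⁻¹ by rw [normForm]; grind]
    grind
  · intro c _ d _ hcd
    exact (h.coord_inj (mul_left_cancel₀ hs hcd)).1
  · intro v hv
    obtain ⟨c, d, hcd⟩ := h.exists_coord (v / s)
    obtain rfl : v = s * (algebraMap F K c + algebraMap F K d * θ) := by
      rw [← hcd, mul_div_cancel₀ _ hs]
    rw [mem_filter, hmem_shift, hmem, normForm_add_one] at hv
    obtain rfl : d = 1 := by grind
    refine ⟨c, ?_, rfl⟩
    have hnorm : normForm κ c 1 = (normForm κ a b)⁻¹ := eq_inv_of_mul_eq_one_right hv.1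
    rw [normForm] at hnorm
    simp only [mem_filter, mem_univ, true_and]
    grind

lemma circDiffCount_coord (h : IsQuadraticConj κ θ σ) {a b : F} (hab : (a, b) ≠ 0) :
    circDiffCount σ (algebraMap F K a + algebraMap F K b * θ) = 1 - psi (normForm κ a b)⁻¹ := by
  classical
  simp only [circDiffCount, circInd, sum_boole, h.card_circ_inter_shift hab]

lemma circDiffCount_one (h : IsQuadraticConj κ θ σ) : circDiffCount σ 1 = 1 - psi (1 : F) := by
  simpa [normForm_zero_right] using h.circDiffCount_coord (a := 1) (b := 0) (by simp)

/-- The products with `s = 0` and with `s = 1` are split off, where `circDiffCount` is not given by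
the formula for nonzero arguments. -/
lemma sum_circDiffCount_mul_shift (h : IsQuadraticConj κ θ σ) :
    ∑ s : K, circDiffCount σ s * circDiffCount σ (1 + s) =
      (Fintype.card F : ℤ) ^ 2 + 5 * Fintype.card F + 1
        - 3 * psi (1 : F) * Fintype.card F - moment F := by
  classical
  set f : K → ℤ := fun s => circDiffCount σ s - if s = 0 then (Fintype.card F + 1 : ℤ) else 0
    with hf
  have hf_coord : ∀ a b : F, f (algebraMap F K a + algebraMap F K b * θ) =
      1 - psi (normForm κ a b)⁻¹ := by
    intro a b
    by_cases hab : (a, b) = 0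
    · obtain ⟨rfl, rfl⟩ := Prod.mk_eq_zero.1 hab
      simp [hf, circDiffCount_zero, h.card_circ, normForm_zero_right]
    · simp only [hf, h.circDiffCount_coord hab, if_neg (mt h.coord_eq_zero_iff.1 hab), sub_zero]
  have hf_one : f 1 = 1 - psi (1 : F) := by simp [hf, h.circDiffCount_one]
  have hf_sum : ∑ s : K, f s * f (1 + s) = (Fintype.card F : ℤ) ^ 2 + 3 * Fintype.card F - 1
      + 2 * psi (1 : F) - Fintype.card F * psi (1 : F) - moment F := by
    rw [← sum_one_sub_psi_inv_normForm_mul_shift h.psi_neg, h.sum_coord]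
    refine sum_congr rfl fun a _ => sum_congr rfl fun b _ => ?_
    rw [hf_coord, ← add_assoc, ← map_one (algebraMap F K), ← map_add, hf_coord, add_comm 1 a]
  have hterm : ∀ s : K, circDiffCount σ s * circDiffCount σ (1 + s) = f s * f (1 + s)
      + (if s = 0 then (Fintype.card F + 1 : ℤ) * f 1 else 0)
      + (if s = 1 then (Fintype.card F + 1 : ℤ) * f 1 else 0) := by
    intro s
    have hs : 1 + s = 0 ↔ s = 1 := by grind
    by_cases hs0 : s = 0
    · simp only [hf, hs0, add_zero, one_ne_zero, zero_ne_one, if_true, if_false]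
      ring
    by_cases hs1 : s = 1
    · simp only [hf, hs1, CharTwo.add_self_eq_zero, one_ne_zero, if_true, if_false]
      ring
    · simp only [hf, hs, hs0, hs1, if_false]
      ring
  simp only [hterm, sum_add_distrib, hf_sum, hf_one, sum_ite_eq', mem_univ, if_true]
  ring

lemma sum_circInd_one_add (h : IsQuadraticConj κ θ σ) :
    ∑ u ∈ circ σ, ∑ v ∈ circ σ, ∑ w ∈ circ σ, circInd σ (1 + u + v + w) =
      (Fintype.card F : ℤ) ^ 2 + 5 * Fintype.card F + 1
        - 3 * psi (1 : F) * Fintype.card F - moment F := by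
  rw [← h.sum_circDiffCount_mul_shift, ← sum_circ_add fun s => circDiffCount σ (1 + s)]
  simp only [circDiffCount, add_assoc]

end IsQuadraticConj

/-! ### The normalised system -/

section NormalisedSystem

variable {K : Type*} [Field K] {σ : K →+* K} {x y z : K}

/-- The power `x ^ (3 * q - 2)` written through the conjugation `σ x = x ^ q`. -/
def nihoPow (σ : K →+* K) (x : K) : K := σ x ^ 3 / x ^ 2

/-- The ratio `σ x / x`, an element of the unit circle when `x ≠ 0`. -/
def ratio (σ : K →+* K) (x : K) : K := σ x / x

/-- The system for quadruples `(x, y, z, 1)`, to which homogeneity reduces the problem. -/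
structure IsSol (σ : K →+* K) (x y z : K) : Prop where
  fst_ne_zero : x ≠ 0
  snd_ne_zero : y ≠ 0
  trd_ne_zero : z ≠ 0
  sum_eq_one : x + y + z = 1
  sum_nihoPow : nihoPow σ x + nihoPow σ y + nihoPow σ z = 1

lemma IsSol.swap12 (h : IsSol σ x y z) : IsSol σ y x z :=
  ⟨h.snd_ne_zero, h.fst_ne_zero, h.trd_ne_zero, by rw [add_comm y x]; exact h.sum_eq_one,
    by rw [add_comm (nihoPow σ y)]; exact h.sum_nihoPow⟩

lemma IsSol.swap23 (h : IsSol σ x y z) : IsSol σ x z y :=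
  ⟨h.fst_ne_zero, h.trd_ne_zero, h.snd_ne_zero, by rw [add_right_comm]; exact h.sum_eq_one,
    by rw [add_right_comm]; exact h.sum_nihoPow⟩

lemma map_eq_ratio_mul (hx : x ≠ 0) : σ x = ratio σ x * x := by
  rw [ratio, div_mul_cancel₀ _ hx]

lemma nihoPow_eq_mul_ratio (hx : x ≠ 0) : nihoPow σ x = x * ratio σ x ^ 3 := by
  rw [nihoPow, ratio]
  field_simp

lemma ratio_eq_iff (hx : x ≠ 0) {v : K} : ratio σ x = v ↔ σ x = v * x := div_eq_iff hx

lemma ratio_eq_one_iff (hx : x ≠ 0) : ratio σ x = 1 ↔ σ x = x := div_eq_one_iff_eq hx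

lemma ratio_mul_map_ratio (hσ : Function.Involutive σ) (hx : x ≠ 0) :
    ratio σ x * σ (ratio σ x) = 1 := by
  have hσx : σ x ≠ 0 := (map_ne_zero σ).2 hx
  rw [ratio, map_div₀, hσ]
  field_simp

lemma ratio_mul_of_fixed {a : K} (ha : a ≠ 0) (hσa : σ a = a) : ratio σ (x * a) = ratio σ x := by
  rw [ratio, ratio, map_mul, hσa, mul_div_mul_right _ _ ha]

lemma ratio_add_of_eq (hx : x ≠ 0) (hy : y ≠ 0) (hxy : x + y ≠ 0) (h : ratio σ x = ratio σ y) :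
    ratio σ (x + y) = ratio σ x := by
  rw [ratio_eq_iff hxy, map_add, map_eq_ratio_mul hx, map_eq_ratio_mul hy, ← h, mul_add]

lemma nihoPow_add_of_ratio_eq (hx : x ≠ 0) (hy : y ≠ 0) (hxy : x + y ≠ 0)
    (h : ratio σ x = ratio σ y) : nihoPow σ (x + y) = nihoPow σ x + nihoPow σ y := by
  rw [nihoPow_eq_mul_ratio hxy, nihoPow_eq_mul_ratio hx, nihoPow_eq_mul_ratio hy,
    ratio_add_of_eq hx hy hxy h, ← h, add_mul]

lemma IsSol.ratio_eq_one (h : IsSol σ x y z) (hx : ratio σ x = 1) (hy : ratio σ y = 1) :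
    ratio σ z = 1 := by
  rw [ratio_eq_one_iff h.fst_ne_zero] at hx
  rw [ratio_eq_one_iff h.snd_ne_zero] at hy
  rw [ratio_eq_one_iff h.trd_ne_zero, ← sub_eq_of_eq_add' h.sum_eq_one.symm, map_sub, map_add,
    map_one, hx, hy]

/-- If all ratios were equal, then `1 = x + y + z` would have the same ratio. -/
lemma IsSol.ratio_ne (h : IsSol σ x y z) (hxy : ratio σ x = ratio σ y) (hx : ratio σ x ≠ 1) :
    ratio σ x ≠ ratio σ z := by
  intro hxz
  have hsum : σ (x + y + z) = ratio σ x * (x + y + z) := by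
    rw [map_add, map_add, map_eq_ratio_mul h.fst_ne_zero, map_eq_ratio_mul h.snd_ne_zero,
      map_eq_ratio_mul h.trd_ne_zero, ← hxy, ← hxz]
    ring
  rw [h.sum_eq_one, map_one, mul_one] at hsum
  exact hx hsum.symm

/-- A primitive cube root of unity on the unit circle. -/
structure IsUnitaryOmega (σ : K →+* K) (w : K) : Prop where
  mul_map : w * σ w = 1
  sq_add_add_one : w ^ 2 + w + 1 = 0

lemma IsUnitaryOmega.ne_zero {w : K} (h : IsUnitaryOmega σ w) : w ≠ 0 :=
  left_ne_zero_of_mul_eq_one h.mul_map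

end NormalisedSystem

/-! ### Solutions with coinciding ratios or with fixed entries -/

section DegenerateSolutions

variable {K : Type*} [Field K] [CharP K 2] {σ : K →+* K} {x y z : K}

lemma one_add_mul_map_eq_one_iff {v : K} (hv : v * σ v = 1) :
    (1 + v) * σ (1 + v) = 1 ↔ v ^ 2 + v + 1 = 0 := by
  have hv0 : v ≠ 0 := left_ne_zero_of_mul_eq_one hv
  rw [map_add, map_one, eq_inv_of_mul_eq_one_right hv]
  constructor <;> intro h
  · field_simp at h
    grind
  · field_simp
    grind

namespace IsUnitaryOmega

variable {w : K}

lemma map (h : IsUnitaryOmega σ w) : σ w = w + 1 := by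
  apply mul_left_cancel₀ h.ne_zero
  rw [h.mul_map]
  grind [h.sq_add_add_one]

lemma add_one_ne_zero (h : IsUnitaryOmega σ w) : w + 1 ≠ 0 := by
  rw [← h.map]
  exact (map_ne_zero σ).2 h.ne_zero

lemma ne_one (h : IsUnitaryOmega σ w) : w ≠ 1 := by
  rintro rfl
  exact h.add_one_ne_zero (CharTwo.add_self_eq_zero 1)

lemma ratio_eq (h : IsUnitaryOmega σ w) : ratio σ w = w := by
  rw [ratio_eq_iff h.ne_zero, h.map]
  grind [h.sq_add_add_one]

lemma ratio_add_one (h : IsUnitaryOmega σ w) : ratio σ (w + 1) = w + 1 := by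
  rw [ratio_eq_iff h.add_one_ne_zero, map_add, map_one, h.map]
  grind [h.sq_add_add_one]

lemma isSol_fixed (hw : IsUnitaryOmega σ w) {a : K} (ha : σ a = a) (ha0 : a ≠ 0) (ha1 : a ≠ 1) :
    IsSol σ a (w * (1 + a)) ((w + 1) * (1 + a)) ∧ ratio σ a = 1 ∧ ratio σ (w * (1 + a)) ≠ 1 ∧
      ratio σ (w * (1 + a)) ≠ ratio σ ((w + 1) * (1 + a)) := by
  have hr0 : 1 + a ≠ 0 := by rwa [Ne, CharTwo.add_eq_zero, eq_comm]
  have hr : σ (1 + a) = 1 + a := by rw [map_add, map_one, ha]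
  have ratio_x : ratio σ a = 1 := (ratio_eq_one_iff ha0).2 ha
  have ratio_y : ratio σ (w * (1 + a)) = w := by rw [ratio_mul_of_fixed hr0 hr, hw.ratio_eq]
  have ratio_z : ratio σ ((w + 1) * (1 + a)) = w + 1 := by
    rw [ratio_mul_of_fixed hr0 hr, hw.ratio_add_one]
  have hy0 := mul_ne_zero hw.ne_zero hr0
  have hz0 := mul_ne_zero hw.add_one_ne_zero hr0
  refine ⟨⟨ha0, hy0, hz0, by grind, ?_⟩, ratio_x, ?_, ?_⟩
  · rw [nihoPow_eq_mul_ratio ha0, nihoPow_eq_mul_ratio hy0, nihoPow_eq_mul_ratio hz0, ratio_x,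
      ratio_y, ratio_z]
    grind [hw.sq_add_add_one]
  · rw [ratio_y]
    exact hw.ne_one
  · rw [ratio_y, ratio_z]
    simp

lemma isSol_pair (hw : IsUnitaryOmega σ w) {a : K} (ha : σ a = a) (ha0 : a ≠ 0) (ha1 : a ≠ 1) :
    IsSol σ (w * a) (w * (1 + a)) (w + 1) ∧ ratio σ (w * a) ≠ 1 ∧ ratio σ (w + 1) ≠ 1 ∧
      ratio σ (w * a) = ratio σ (w * (1 + a)) := by
  have hr0 : 1 + a ≠ 0 := by rwa [Ne, CharTwo.add_eq_zero, eq_comm]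
  have hr : σ (1 + a) = 1 + a := by rw [map_add, map_one, ha]
  have ratio_x : ratio σ (w * a) = w := by rw [ratio_mul_of_fixed ha0 ha, hw.ratio_eq]
  have ratio_y : ratio σ (w * (1 + a)) = w := by rw [ratio_mul_of_fixed hr0 hr, hw.ratio_eq]
  have hx0 := mul_ne_zero hw.ne_zero ha0
  have hy0 := mul_ne_zero hw.ne_zero hr0
  have hz0 := hw.add_one_ne_zero
  refine ⟨⟨hx0, hy0, hz0, by grind, ?_⟩, ?_, ?_, ratio_x.trans ratio_y.symm⟩
  · rw [nihoPow_eq_mul_ratio hx0, nihoPow_eq_mul_ratio hy0, nihoPow_eq_mul_ratio hz0, ratio_x,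
      ratio_y, hw.ratio_add_one]
    grind [hw.sq_add_add_one]
  · rw [ratio_x]
    exact hw.ne_one
  · rw [hw.ratio_add_one]
    simpa using hw.ne_zero

end IsUnitaryOmega

/-- With `v`, `u` the ratios of `y`, `z`, the hypotheses give `y + z = v * y + u * z` and
`v * y + u * z = v ^ 3 * y + u ^ 3 * z`, which force `u = 1 + v`. -/
lemma exists_isUnitaryOmega_of_add_eq_fixed (hσ : Function.Involutive σ) {r : K} (hy : y ≠ 0)
    (hz : z ≠ 0) (hr : σ r = r) (hadd : y + z = r) (hpow : nihoPow σ y + nihoPow σ z = r)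
    (hne : ratio σ y ≠ 1) (hyz : ratio σ y ≠ ratio σ z) :
    ∃ w, IsUnitaryOmega σ w ∧ y = w * r ∧ z = (w + 1) * r := by
  have hmap : ratio σ y * y + ratio σ z * z = r := by
    rw [← map_eq_ratio_mul hy, ← map_eq_ratio_mul hz, ← map_add, hadd, hr]
  rw [nihoPow_eq_mul_ratio hy, nihoPow_eq_mul_ratio hz] at hpow
  have hv := ratio_mul_map_ratio hσ hy
  have hu := ratio_mul_map_ratio hσ hz
  generalize ratio σ y = v, ratio σ z = u at *
  have hlin : (1 + v) * y = (1 + u) * z := by grind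
  have hfactor : (1 + v) * y * ((v + u) * (1 + u + v)) = 0 := by grind
  have hv1 : 1 + v ≠ 0 := by rwa [Ne, CharTwo.add_eq_zero, eq_comm]
  have hvu : v + u ≠ 0 := by rwa [Ne, CharTwo.add_eq_zero]
  have hsum : 1 + u + v = 0 := by simpa [hv1, hy, hvu] using hfactor
  obtain rfl : u = 1 + v := by grind
  exact ⟨v, ⟨hv, (one_add_mul_map_eq_one_iff hv).1 hu⟩, by grind, by grind⟩

lemma IsSol.exists_of_ratio_eq_one (hσ : Function.Involutive σ) (h : IsSol σ x y z)
    (hx : ratio σ x = 1) (hy : ratio σ y ≠ 1) (hyz : ratio σ y ≠ ratio σ z) :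
    ∃ w, IsUnitaryOmega σ w ∧ (σ x = x ∧ x ≠ 0 ∧ x ≠ 1) ∧
      y = w * (1 + x) ∧ z = (w + 1) * (1 + x) := by
  have hσx := (ratio_eq_one_iff h.fst_ne_zero).1 hx
  have hpow := h.sum_nihoPow
  rw [nihoPow_eq_mul_ratio h.fst_ne_zero, hx, one_pow, mul_one] at hpow
  obtain ⟨w, hw, hy_eq, hz_eq⟩ := exists_isUnitaryOmega_of_add_eq_fixed hσ (r := 1 + x)
    h.snd_ne_zero h.trd_ne_zero (by rw [map_add, map_one, hσx]) (by grind [h.sum_eq_one])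
    (by grind) hy hyz
  refine ⟨w, hw, ⟨hσx, h.fst_ne_zero, ?_⟩, hy_eq, hz_eq⟩
  rintro rfl
  exact h.snd_ne_zero (by rw [hy_eq, CharTwo.add_self_eq_zero, mul_zero])

lemma isSol_fixed_iff (hσ : Function.Involutive σ) :
    (IsSol σ x y z ∧ ratio σ x = 1 ∧ ratio σ y ≠ 1 ∧ ratio σ y ≠ ratio σ z) ↔
      ∃ w a, IsUnitaryOmega σ w ∧ (σ a = a ∧ a ≠ 0 ∧ a ≠ 1) ∧
        x = a ∧ y = w * (1 + a) ∧ z = (w + 1) * (1 + a) := by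
  constructor
  · rintro ⟨h, hx, hy, hyz⟩
    obtain ⟨w, hw, hfix, hy_eq, hz_eq⟩ := h.exists_of_ratio_eq_one hσ hx hy hyz
    exact ⟨w, x, hw, hfix, rfl, hy_eq, hz_eq⟩
  · rintro ⟨w, a, hw, ⟨ha, ha0, ha1⟩, rfl, rfl, rfl⟩
    exact hw.isSol_fixed ha ha0 ha1

/-- Merging `x` and `y` into `x + y` leaves two entries with sum `1`. -/
lemma IsSol.exists_of_ratio_eq (hσ : Function.Involutive σ) (h : IsSol σ x y z)
    (hx : ratio σ x ≠ 1) (hz : ratio σ z ≠ 1) (hxy : ratio σ x = ratio σ y) :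
    ∃ w a, IsUnitaryOmega σ w ∧ (σ a = a ∧ a ≠ 0 ∧ a ≠ 1) ∧
      x = w * a ∧ y = w * (1 + a) ∧ z = w + 1 := by
  have hsum := h.sum_eq_one
  have hxy0 : x + y ≠ 0 := by
    intro hzero
    rw [hzero, zero_add] at hsum
    exact hz (by rw [hsum, ratio, map_one, div_one])
  have hratio := ratio_add_of_eq h.fst_ne_zero h.snd_ne_zero hxy0 hxy
  obtain ⟨w, hw, hxy_eq, hz_eq⟩ := exists_isUnitaryOmega_of_add_eq_fixed hσ (r := 1) hxy0
    h.trd_ne_zero (map_one σ) hsum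
    (by rw [nihoPow_add_of_ratio_eq h.fst_ne_zero h.snd_ne_zero hxy0 hxy, h.sum_nihoPow])
    (by rwa [hratio]) (by rw [hratio]; exact h.ratio_ne hxy hx)
  rw [mul_one] at hxy_eq hz_eq
  have hw0 := hw.ne_zero
  have hratio_x : ratio σ x = w := by rw [← hratio, hxy_eq, hw.ratio_eq]
  have hx_eq : x = w * (x / w) := (mul_div_cancel₀ x hw0).symm
  refine ⟨w, x / w, hw, ⟨?_, div_ne_zero h.fst_ne_zero hw0, ?_⟩, hx_eq, by grind, hz_eq⟩
  · have hw1 := hw.ratio_eq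
    rw [ratio] at hw1 hratio_x
    rw [map_div₀, div_eq_iff h.fst_ne_zero |>.1 hratio_x, div_eq_iff hw0 |>.1 hw1]
    field_simp
  · intro ha
    exact h.snd_ne_zero (by grind)

lemma isSol_pair_iff (hσ : Function.Involutive σ) :
    (IsSol σ x y z ∧ ratio σ x ≠ 1 ∧ ratio σ z ≠ 1 ∧ ratio σ x = ratio σ y) ↔
      ∃ w a, IsUnitaryOmega σ w ∧ (σ a = a ∧ a ≠ 0 ∧ a ≠ 1) ∧
        x = w * a ∧ y = w * (1 + a) ∧ z = w + 1 := by
  refine ⟨fun ⟨h, hx, hz, hxy⟩ => h.exists_of_ratio_eq hσ hx hz hxy, ?_⟩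
  rintro ⟨w, a, hw, ⟨ha, ha0, ha1⟩, rfl, rfl, rfl⟩
  exact hw.isSol_pair ha ha0 ha1

lemma isSol_double_iff :
    (IsSol σ x y z ∧ ratio σ x = 1 ∧ ratio σ y ≠ 1 ∧ ratio σ y = ratio σ z) ↔
      (σ y ≠ y ∧ x = 1 ∧ z = y) := by
  constructor
  · rintro ⟨h, hx, hy, hyz⟩
    rw [ratio_eq_one_iff h.fst_ne_zero] at hx
    have hadd : y + z = 1 + x := by grind [h.sum_eq_one]
    have hzero : y + z = 0 := by
      by_contra hne
      apply hy
      rw [← ratio_add_of_eq h.snd_ne_zero h.trd_ne_zero hne hyz, ratio_eq_one_iff hne, hadd,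
        map_add, map_one, hx]
    exact ⟨mt (ratio_eq_one_iff h.snd_ne_zero).2 hy, by grind, by grind⟩
  · rintro ⟨hy, rfl, rfl⟩
    have hz0 : z ≠ 0 := by
      rintro rfl
      simp at hy
    refine ⟨⟨one_ne_zero, hz0, hz0, by grind, ?_⟩, by simp [ratio],
      mt (ratio_eq_one_iff hz0).1 hy, rfl⟩
    rw [add_assoc, CharTwo.add_self_eq_zero]
    simp [nihoPow]

lemma isSol_all_fixed_iff :
    (IsSol σ x y z ∧ ratio σ x = 1 ∧ ratio σ y = 1) ↔
      (σ x = x ∧ σ y = y ∧ x ≠ 0 ∧ y ≠ 0 ∧ x + y ≠ 1 ∧ z = 1 + x + y) := by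
  constructor
  · rintro ⟨h, hx, hy⟩
    exact ⟨(ratio_eq_one_iff h.fst_ne_zero).1 hx, (ratio_eq_one_iff h.snd_ne_zero).1 hy,
      h.fst_ne_zero, h.snd_ne_zero, by grind [h.sum_eq_one, h.trd_ne_zero],
      by grind [h.sum_eq_one]⟩
  · rintro ⟨hx, hy, hx0, hy0, hxy, rfl⟩
    have hz0 : 1 + x + y ≠ 0 := by grind
    have ratio_x := (ratio_eq_one_iff hx0).2 hx
    have ratio_y := (ratio_eq_one_iff hy0).2 hy
    have ratio_z : ratio σ (1 + x + y) = 1 :=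
      (ratio_eq_one_iff hz0).2 (by rw [map_add, map_add, map_one, hx, hy])
    refine ⟨⟨hx0, hy0, hz0, by grind, ?_⟩, ratio_x, ratio_y⟩
    rw [nihoPow_eq_mul_ratio hx0, nihoPow_eq_mul_ratio hy0, nihoPow_eq_mul_ratio hz0, ratio_x,
      ratio_y, ratio_z]
    grind

end DegenerateSolutions

/-! ### Solutions with distinct ratios -/

section DistinctRatios

variable {K : Type*} [Field K] {σ : K →+* K} {u v w : K}

/-- The elements `1, u, v, w` of the unit circle of `σ` are distinct. -/
structure IsCircleTriple (σ : K →+* K) (u v w : K) : Prop where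
  fst_mem : u * σ u = 1
  snd_mem : v * σ v = 1
  trd_mem : w * σ w = 1
  fst_ne_one : u ≠ 1
  snd_ne_one : v ≠ 1
  trd_ne_one : w ≠ 1
  fst_ne_snd : u ≠ v
  fst_ne_trd : u ≠ w
  snd_ne_trd : v ≠ w

/-- A circle triple that is the triple of ratios of a solution of the normalised system: the sum
`1 + u + v + w` lies on the circle, and no three of `1, u, v, w` sum to zero. -/
structure IsRatioTriple (σ : K →+* K) (u v w : K) : Prop extends IsCircleTriple σ u v w where
  sum_mem : (1 + u + v + w) * σ (1 + u + v + w) = 1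
  omit_one : u + v + w ≠ 0
  omit_fst : 1 + v + w ≠ 0
  omit_snd : 1 + u + w ≠ 0
  omit_trd : 1 + u + v ≠ 0

lemma IsCircleTriple.swap12 (h : IsCircleTriple σ u v w) : IsCircleTriple σ v u w :=
  ⟨h.snd_mem, h.fst_mem, h.trd_mem, h.snd_ne_one, h.fst_ne_one, h.trd_ne_one, h.fst_ne_snd.symm,
    h.snd_ne_trd, h.fst_ne_trd⟩

lemma IsCircleTriple.swap23 (h : IsCircleTriple σ u v w) : IsCircleTriple σ u w v :=
  ⟨h.fst_mem, h.trd_mem, h.snd_mem, h.fst_ne_one, h.trd_ne_one, h.snd_ne_one, h.fst_ne_trd,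
    h.fst_ne_snd, h.snd_ne_trd.symm⟩

namespace IsRatioTriple

lemma swap12 (h : IsRatioTriple σ u v w) : IsRatioTriple σ v u w where
  toIsCircleTriple := h.toIsCircleTriple.swap12
  sum_mem := by rw [add_right_comm 1 v u]; exact h.sum_mem
  omit_one := by rw [add_comm v u]; exact h.omit_one
  omit_fst := h.omit_snd
  omit_snd := h.omit_fst
  omit_trd := by rw [add_right_comm]; exact h.omit_trd

lemma swap23 (h : IsRatioTriple σ u v w) : IsRatioTriple σ u w v where
  toIsCircleTriple := h.toIsCircleTriple.swap23
  sum_mem := by rw [add_right_comm (1 + u) w v]; exact h.sum_mem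
  omit_one := by rw [add_right_comm]; exact h.omit_one
  omit_fst := by rw [add_right_comm]; exact h.omit_fst
  omit_snd := h.omit_trd
  omit_trd := h.omit_snd

end IsRatioTriple

/-- The first unknown in the linear system `∑ xᵢ = ∑ xᵢ uᵢ = ∑ xᵢ uᵢ ^ 3 = 1` with nodes `u, v, w`
in characteristic two, as given by Cramer's rule. -/
def coordSol (u v w : K) : K :=
  (1 + v) * (1 + w) * (1 + v + w) / ((u + v) * (u + w) * (u + v + w))

lemma map_add_add_mul (hu : u * σ u = 1) (hv : v * σ v = 1) (hw : w * σ w = 1) :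
    σ (u + v + w) * (u * v * w) = u * v + u * w + v * w := by
  have hu0 : u ≠ 0 := left_ne_zero_of_mul_eq_one hu
  have hv0 : v ≠ 0 := left_ne_zero_of_mul_eq_one hv
  have hw0 : w ≠ 0 := left_ne_zero_of_mul_eq_one hw
  simp only [map_add, eq_inv_of_mul_eq_one_right hu, eq_inv_of_mul_eq_one_right hv,
    eq_inv_of_mul_eq_one_right hw]
  field_simp
  ring

lemma map_coordSol (hu : u * σ u = 1) (hv : v * σ v = 1) (hw : w * σ w = 1) (huv : u + v ≠ 0)
    (huw : u + w ≠ 0) (he₂ : u * v + u * w + v * w ≠ 0) :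
    σ (coordSol u v w) * (u * v + u * w + v * w) * ((u + v) * (u + w)) =
      u ^ 3 * ((1 + v) * (1 + w) * (v * w + v + w)) := by
  have hu0 : u ≠ 0 := left_ne_zero_of_mul_eq_one hu
  have hv0 : v ≠ 0 := left_ne_zero_of_mul_eq_one hv
  have hw0 : w ≠ 0 := left_ne_zero_of_mul_eq_one hw
  have map_uv : u⁻¹ + v⁻¹ = (u + v) / (u * v) := by field_simp; ring
  have map_uw : u⁻¹ + w⁻¹ = (u + w) / (u * w) := by field_simp; ring
  have map_uvw : u⁻¹ + v⁻¹ + w⁻¹ = (u * v + u * w + v * w) / (u * v * w) := by field_simp; ring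
  have map_vw : 1 + v⁻¹ + w⁻¹ = (v * w + v + w) / (v * w) := by field_simp; ring
  have map_v : 1 + v⁻¹ = (1 + v) / v := by field_simp; ring
  have map_w : 1 + w⁻¹ = (1 + w) / w := by field_simp; ring
  simp only [coordSol, map_div₀, map_mul, map_add, map_one, eq_inv_of_mul_eq_one_right hu,
    eq_inv_of_mul_eq_one_right hv, eq_inv_of_mul_eq_one_right hw]
  rw [map_uvw, map_vw, map_uv, map_uw, map_v, map_w]
  generalize u * v + u * w + v * w = E at *
  generalize u + v = A at *
  generalize u + w = B at *
  field_simp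

variable [CharP K 2]

lemma mul_map_one_add_eq_one_iff (hu : u * σ u = 1) (hv : v * σ v = 1) (hw : w * σ w = 1) :
    (1 + u + v + w) * σ (1 + u + v + w) = 1 ↔
      (u * v + u * w + v * w) * (1 + (u + v + w)) + (u + v + w) * (u * v * w) = 0 := by
  have hu0 : u ≠ 0 := left_ne_zero_of_mul_eq_one hu
  have hv0 : v ≠ 0 := left_ne_zero_of_mul_eq_one hv
  have hw0 : w ≠ 0 := left_ne_zero_of_mul_eq_one hw
  simp only [map_add, map_one, eq_inv_of_mul_eq_one_right hu, eq_inv_of_mul_eq_one_right hv,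
    eq_inv_of_mul_eq_one_right hw]
  constructor
  · intro h
    field_simp at h
    grind
  · intro h
    field_simp
    grind

lemma mul_eq_of_linear_system {x y z : K} (h0 : x + y + z = 1) (h1 : x * u + y * v + z * w = 1)
    (h3 : x * u ^ 3 + y * v ^ 3 + z * w ^ 3 = 1) :
    x * ((u + v) * (u + w) * (u + v + w)) = (1 + v) * (1 + w) * (1 + v + w) := by
  -- The cubic `(t + v) (t + w) (t + v + w)` vanishes at `v` and `w` and has no `t ^ 2` term.
  linear_combination h3 + (v * w + (v + w) ^ 2) * h1 + v * w * (v + w) * h0 +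
    (x * u ^ 2 * v + x * u ^ 2 * w - v - v * w ^ 2 * y - 2 * (v * w ^ 2 * z)
      - 2 * (v ^ 2 * w * y) - v ^ 2 * w * z - v ^ 3 * y - w - w ^ 3 * z) *
      CharTwo.two_eq_zero (R := K)

lemma coordSol_system (huv : u + v ≠ 0) (huw : u + w ≠ 0) (hvw : v + w ≠ 0)
    (huvw : u + v + w ≠ 0) :
    coordSol u v w + coordSol v u w + coordSol w u v = 1 ∧
    coordSol u v w * u ^ 3 + coordSol v u w * v ^ 3 + coordSol w u v * w ^ 3 = 1 := by
  have coord_v : coordSol v u w =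
      (1 + u) * (1 + w) * (1 + u + w) / ((u + v) * (v + w) * (u + v + w)) := by
    rw [coordSol, add_comm v u]
  have coord_w : coordSol w u v =
      (1 + u) * (1 + v) * (1 + u + v) / ((u + w) * (v + w) * (u + v + w)) := by
    rw [coordSol, add_comm w u, add_comm w v, add_right_comm u w v]
  rw [coord_v, coord_w, coordSol]
  obtain ⟨S, hS⟩ : ∃ S, S = u + v + w := ⟨_, rfl⟩
  rw [← hS] at huvw ⊢
  constructor
  · field_simp
    grind
  · field_simp
    grind

/-- Both conditions say that `σ c` and `u c` agree after multiplication by the denominators of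
`c = coordSol u v w` and `σ c`. -/
lemma IsCircleTriple.map_coordSol_eq_iff (h : IsCircleTriple σ u v w) (huvw : u + v + w ≠ 0) :
    σ (coordSol u v w) = u * coordSol u v w ↔ (1 + u + v + w) * σ (1 + u + v + w) = 1 := by
  have huv := CharTwo.add_eq_zero.not.2 h.fst_ne_snd
  have huw := CharTwo.add_eq_zero.not.2 h.fst_ne_trd
  have hu1 := CharTwo.add_eq_zero.not.2 h.fst_ne_one.symm
  have hv1 := CharTwo.add_eq_zero.not.2 h.snd_ne_one.symm
  have hw1 := CharTwo.add_eq_zero.not.2 h.trd_ne_one.symm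
  have hu0 : u ≠ 0 := left_ne_zero_of_mul_eq_one h.fst_mem
  have he₂ : u * v + u * w + v * w ≠ 0 := by
    rw [← map_add_add_mul h.fst_mem h.snd_mem h.trd_mem]
    exact mul_ne_zero ((map_ne_zero σ).2 huvw) (mul_ne_zero (mul_ne_zero hu0
      (left_ne_zero_of_mul_eq_one h.snd_mem)) (left_ne_zero_of_mul_eq_one h.trd_mem))
  have hnum : u ^ 2 * (v * w + v + w) * (u + v + w) + (1 + v + w) * (u * v + u * w + v * w) =
      (1 + u) * ((u * v + u * w + v * w) * (1 + (u + v + w)) + (u + v + w) * (u * v * w)) := by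
    clear huvw huv huw hu1 hv1 hw1 hu0 he₂ h
    grind
  have hcoord : coordSol u v w * ((u + v) * (u + w) * (u + v + w)) =
      (1 + v) * (1 + w) * (1 + v + w) :=
    div_mul_cancel₀ _ (mul_ne_zero (mul_ne_zero huv huw) huvw)
  have hcross : (σ (coordSol u v w) + u * coordSol u v w) *
        ((u * v + u * w + v * w) * ((u + v) * (u + w)) * (u + v + w)) =
      u * ((1 + v) * (1 + w)) * (1 + u) *
        ((u * v + u * w + v * w) * (1 + (u + v + w)) + (u + v + w) * (u * v * w)) := by
    linear_combination
      (u + v + w) * map_coordSol h.fst_mem h.snd_mem h.trd_mem huv huw he₂ +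
      u * (u * v + u * w + v * w) * hcoord + u * ((1 + v) * (1 + w)) * hnum
  rw [mul_map_one_add_eq_one_iff h.fst_mem h.snd_mem h.trd_mem, ← CharTwo.add_eq_zero]
  rw [← mul_eq_zero_iff_right (mul_ne_zero (mul_ne_zero he₂ (mul_ne_zero huv huw)) huvw), hcross,
    mul_eq_zero_iff_left (mul_ne_zero (mul_ne_zero hu0 (mul_ne_zero hv1 hw1)) hu1)]

namespace IsRatioTriple

lemma coordSol_ne_zero (h : IsRatioTriple σ u v w) : coordSol u v w ≠ 0 :=
  div_ne_zero
    (mul_ne_zero (mul_ne_zero (CharTwo.add_eq_zero.not.2 h.snd_ne_one.symm)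
      (CharTwo.add_eq_zero.not.2 h.trd_ne_one.symm)) h.omit_fst)
    (mul_ne_zero (mul_ne_zero (CharTwo.add_eq_zero.not.2 h.fst_ne_snd)
      (CharTwo.add_eq_zero.not.2 h.fst_ne_trd)) h.omit_one)

lemma ratio_coordSol (h : IsRatioTriple σ u v w) : ratio σ (coordSol u v w) = u :=
  (ratio_eq_iff h.coordSol_ne_zero).2
    ((h.toIsCircleTriple.map_coordSol_eq_iff h.omit_one).2 h.sum_mem)

lemma isSol (h : IsRatioTriple σ u v w) :
    IsSol σ (coordSol u v w) (coordSol v u w) (coordSol w u v) := by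
  have hv := h.swap12
  have hw := h.swap23.swap12
  obtain ⟨hsum, hsum_cube⟩ := coordSol_system (CharTwo.add_eq_zero.not.2 h.fst_ne_snd)
    (CharTwo.add_eq_zero.not.2 h.fst_ne_trd) (CharTwo.add_eq_zero.not.2 h.snd_ne_trd) h.omit_one
  refine ⟨h.coordSol_ne_zero, hv.coordSol_ne_zero, hw.coordSol_ne_zero, hsum, ?_⟩
  rw [nihoPow_eq_mul_ratio h.coordSol_ne_zero, nihoPow_eq_mul_ratio hv.coordSol_ne_zero,
    nihoPow_eq_mul_ratio hw.coordSol_ne_zero, h.ratio_coordSol, hv.ratio_coordSol,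
    hw.ratio_coordSol, hsum_cube]

end IsRatioTriple

namespace IsSol

variable {x y z : K}

lemma fst_mul_eq (h : IsSol σ x y z) :
    x * ((ratio σ x + ratio σ y) * (ratio σ x + ratio σ z) *
        (ratio σ x + ratio σ y + ratio σ z)) =
      (1 + ratio σ y) * (1 + ratio σ z) * (1 + ratio σ y + ratio σ z) := by
  have hpow := h.sum_nihoPow
  rw [nihoPow_eq_mul_ratio h.fst_ne_zero, nihoPow_eq_mul_ratio h.snd_ne_zero,
    nihoPow_eq_mul_ratio h.trd_ne_zero] at hpow
  refine mul_eq_of_linear_system h.sum_eq_one ?_ hpow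
  rw [mul_comm x, mul_comm y, mul_comm z, ← map_eq_ratio_mul h.fst_ne_zero,
    ← map_eq_ratio_mul h.snd_ne_zero, ← map_eq_ratio_mul h.trd_ne_zero, ← map_add, ← map_add,
    h.sum_eq_one, map_one]

variable (h : IsSol σ x y z) (hr : IsCircleTriple σ (ratio σ x) (ratio σ y) (ratio σ z))
include h hr

lemma ratio_add_ratio_add_ratio_ne_zero : ratio σ x + ratio σ y + ratio σ z ≠ 0 := by
  intro hsum
  have hprod := h.fst_mul_eq
  rw [hsum, mul_zero, mul_zero, eq_comm, mul_eq_zero, mul_eq_zero, CharTwo.add_eq_zero,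
    CharTwo.add_eq_zero] at hprod
  obtain (hy | hz) | hyz := hprod
  · exact hr.snd_ne_one hy.symm
  · exact hr.trd_ne_one hz.symm
  · exact hr.fst_ne_one (by grind)

lemma fst_denom_ne_zero : (ratio σ x + ratio σ y) * (ratio σ x + ratio σ z) *
    (ratio σ x + ratio σ y + ratio σ z) ≠ 0 :=
  mul_ne_zero (mul_ne_zero (CharTwo.add_eq_zero.not.2 hr.fst_ne_snd)
    (CharTwo.add_eq_zero.not.2 hr.fst_ne_trd)) (h.ratio_add_ratio_add_ratio_ne_zero hr)

lemma fst_eq_coordSol : x = coordSol (ratio σ x) (ratio σ y) (ratio σ z) :=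
  eq_div_of_mul_eq (h.fst_denom_ne_zero hr) h.fst_mul_eq

lemma one_add_ratio_add_ratio_ne_zero : 1 + ratio σ y + ratio σ z ≠ 0 := by
  have hne := mul_ne_zero h.fst_ne_zero (h.fst_denom_ne_zero hr)
  rw [h.fst_mul_eq] at hne
  exact right_ne_zero_of_mul hne

lemma isRatioTriple : IsRatioTriple σ (ratio σ x) (ratio σ y) (ratio σ z) where
  toIsCircleTriple := hr
  sum_mem := by
    rw [← hr.map_coordSol_eq_iff (h.ratio_add_ratio_add_ratio_ne_zero hr),
      ← h.fst_eq_coordSol hr, map_eq_ratio_mul h.fst_ne_zero]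
  omit_one := h.ratio_add_ratio_add_ratio_ne_zero hr
  omit_fst := h.one_add_ratio_add_ratio_ne_zero hr
  omit_snd := h.swap12.one_add_ratio_add_ratio_ne_zero hr.swap12
  omit_trd := h.swap23.swap12.one_add_ratio_add_ratio_ne_zero hr.swap23.swap12

end IsSol

end DistinctRatios

/-! ### Counting triples -/

section TripleCount

variable {K : Type*} [Fintype K]

open Classical in
/-- The number of triples with a given property. -/
noncomputable def tripleCount (p : K → K → K → Prop) : ℤ := #{t : K × K × K | p t.1 t.2.1 t.2.2}

variable {p r : K → K → K → Prop}

lemma tripleCount_congr (h : ∀ x y z, p x y z ↔ r x y z) : tripleCount p = tripleCount r := by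
  have hpr : p = r := funext fun x => funext fun y => funext fun z => propext (h x y z)
  rw [hpr]

variable (p r) in
lemma tripleCount_split : tripleCount p =
    tripleCount (fun x y z => p x y z ∧ r x y z) +
      tripleCount (fun x y z => p x y z ∧ ¬ r x y z) := by
  classical
  simp only [tripleCount]
  rw [← card_filter_add_card_filter_not (s := {t : K × K × K | p t.1 t.2.1 t.2.2})
    (fun t => r t.1 t.2.1 t.2.2), filter_filter, filter_filter]
  push_cast
  rfl

lemma tripleCount_swap12 (p : K → K → K → Prop) :
    tripleCount (fun x y z => p y x z) = tripleCount p := by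
  simp only [tripleCount]
  congr 1
  exact card_bij' (fun t _ => (t.2.1, t.1, t.2.2)) (fun t _ => (t.2.1, t.1, t.2.2))
    (by simp) (by simp) (by simp) (by simp)

lemma tripleCount_swap23 (p : K → K → K → Prop) :
    tripleCount (fun x y z => p x z y) = tripleCount p := by
  simp only [tripleCount]
  congr 1
  exact card_bij' (fun t _ => (t.1, t.2.2, t.2.1)) (fun t _ => (t.1, t.2.2, t.2.1))
    (by simp) (by simp) (by simp) (by simp)

lemma tripleCount_rotate (p : K → K → K → Prop) :
    tripleCount (fun x y z => p y z x) = tripleCount p :=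
  (tripleCount_swap12 fun x y z => p x z y).trans (tripleCount_swap23 p)

lemma tripleCount_eq_card {α : Type*} (S : Finset α) (f : α → K × K × K) (hf : Set.InjOn f S)
    (h : ∀ x y z, p x y z ↔ ∃ s ∈ S, f s = (x, y, z)) : tripleCount p = #S := by
  classical
  rw [tripleCount, ← card_image_of_injOn hf]
  congr 2
  ext ⟨x, y, z⟩
  simp [h]

open Classical in
lemma tripleCount_eq_sum (p : K → K → K → Prop) :
    tripleCount p = ∑ x : K, ∑ y : K, ∑ z : K, if p x y z then 1 else 0 := by
  simp only [tripleCount, card_filter, Nat.cast_sum, Nat.cast_ite, Nat.cast_one, Nat.cast_zero,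
    Fintype.sum_prod_type]

/-- A symmetric property `p` is split according to which position, if any, is distinguished by
`r`. -/
lemma tripleCount_eq_three_mul_add (hp12 : ∀ {x y z}, p x y z → p y x z)
    (hp23 : ∀ {x y z}, p x y z → p x z y) (hr23 : ∀ {x y z}, r x y z → r x z y)
    (hexcl : ∀ {x y z}, p x y z → r x y z → ¬ r y x z) :
    tripleCount p = 3 * tripleCount (fun x y z => p x y z ∧ r x y z) +
      tripleCount (fun x y z => p x y z ∧ ¬ r x y z ∧ ¬ r y x z ∧ ¬ r z x y) := by
  have hsnd : tripleCount (fun x y z => (p x y z ∧ ¬ r x y z) ∧ r y x z) =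
      tripleCount (fun x y z => p x y z ∧ r x y z) := by
    rw [← tripleCount_swap12 fun x y z => p x y z ∧ r x y z]
    refine tripleCount_congr fun x y z => ⟨fun ⟨⟨hp, _⟩, hr⟩ => ⟨hp12 hp, hr⟩, fun ⟨hp, hr⟩ => ?_⟩
    exact ⟨⟨hp12 hp, hexcl hp hr⟩, hr⟩
  have htrd : tripleCount (fun x y z => ((p x y z ∧ ¬ r x y z) ∧ ¬ r y x z) ∧ r z x y) =
      tripleCount (fun x y z => p x y z ∧ r x y z) := by
    rw [← tripleCount_swap12 fun x y z => p x y z ∧ r x y z,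
      ← tripleCount_swap23 fun x y z => p y x z ∧ r y x z]
    refine tripleCount_congr fun x y z => ⟨fun ⟨⟨⟨hp, _⟩, _⟩, hr⟩ => ⟨hp12 (hp23 hp), hr⟩,
      fun ⟨hp, hr⟩ => ?_⟩
    exact ⟨⟨⟨hp23 (hp12 hp), fun h => hexcl hp hr (hr23 h)⟩,
      fun h => hexcl (hp23 hp) (hr23 hr) (hr23 h)⟩, hr⟩
  have hnone : tripleCount (fun x y z => ((p x y z ∧ ¬ r x y z) ∧ ¬ r y x z) ∧ ¬ r z x y) =
      tripleCount (fun x y z => p x y z ∧ ¬ r x y z ∧ ¬ r y x z ∧ ¬ r z x y) :=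
    tripleCount_congr fun x y z => by tauto
  rw [tripleCount_split p r,
    tripleCount_split (fun x y z => p x y z ∧ ¬ r x y z) fun x y z => r y x z,
    tripleCount_split (fun x y z => (p x y z ∧ ¬ r x y z) ∧ ¬ r y x z) fun x y z => r z x y,
    hsnd, htrd, hnone]
  ring

end TripleCount

/-! ### Counting the normalised solutions -/

lemma tripleCount_isSol_isCircleTriple {K : Type*} [Field K] [Fintype K] [CharP K 2] (σ : K →+* K) :
    tripleCount (fun x y z =>
        IsSol σ x y z ∧ IsCircleTriple σ (ratio σ x) (ratio σ y) (ratio σ z)) =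
      tripleCount (IsRatioTriple σ) := by
  classical
  rw [tripleCount_eq_card ({t : K × K × K | IsRatioTriple σ t.1 t.2.1 t.2.2})
    fun t => (coordSol t.1 t.2.1 t.2.2, coordSol t.2.1 t.1 t.2.2, coordSol t.2.2 t.1 t.2.1),
    tripleCount]
  · rintro ⟨u, v, w⟩ hr ⟨u', v', w'⟩ hr' ht
    simp only [coe_filter, mem_univ, true_and, Set.mem_ofPred_eq] at hr hr'
    obtain ⟨hu, hv, hw⟩ := by simpa only [Prod.mk.injEq] using ht
    have hu_eq : u = u' := by rw [← hr.ratio_coordSol, hu, hr'.ratio_coordSol]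
    have hv_eq : v = v' := by rw [← hr.swap12.ratio_coordSol, hv, hr'.swap12.ratio_coordSol]
    have hw_eq : w = w' := by
      rw [← hr.swap23.swap12.ratio_coordSol, hw, hr'.swap23.swap12.ratio_coordSol]
    rw [hu_eq, hv_eq, hw_eq]
  · intro x y z
    simp only [mem_filter, mem_univ, true_and, Prod.exists, Prod.mk.injEq]
    constructor
    · rintro ⟨hsol, hr⟩
      exact ⟨_, _, _, hsol.isRatioTriple hr, (hsol.fst_eq_coordSol hr).symm,
        (hsol.swap12.fst_eq_coordSol hr.swap12).symm,
        (hsol.swap23.swap12.fst_eq_coordSol hr.swap23.swap12).symm⟩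
    · rintro ⟨u, v, w, hr, rfl, rfl, rfl⟩
      rw [hr.ratio_coordSol, hr.swap12.ratio_coordSol, hr.swap23.swap12.ratio_coordSol]
      exact ⟨hr.isSol, hr.toIsCircleTriple⟩

open Classical in
/-- The counting data of a field with `q ^ 2` elements and an involution `σ` with `q` fixed points;
`ν` is the number of ways to write an element of the unit circle as a difference of two others. -/
structure CircleData {K : Type*} [Field K] [Fintype K] (σ : K →+* K) (q ν : ℤ) : Prop where
  involutive : Function.Involutive σ
  card : (Fintype.card K : ℤ) = q ^ 2
  card_fixed : (#{x : K | σ x = x} : ℤ) = q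
  card_circ : (#(circ σ) : ℤ) = q + 1
  circDiffCount_eq : ∀ s ∈ circ σ, circDiffCount σ s = ν

namespace CircleData

variable {K : Type*} [Field K] [Fintype K] {σ : K →+* K} {q ν : ℤ}

open Classical in
lemma card_fixed_ne_zero (h : CircleData σ q ν) :
    (#{x : K | σ x = x ∧ x ≠ 0} : ℤ) = q - 1 := by
  have herase : ({x : K | σ x = x ∧ x ≠ 0} : Finset K) =
      ({x : K | σ x = x} : Finset K).erase 0 := by
    ext x
    simp [and_comm]
  rw [herase, cast_card_erase_of_mem (by simp), h.card_fixed]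

open Classical in
lemma card_fixed_ne_zero_ne_one (h : CircleData σ q ν) :
    (#{x : K | σ x = x ∧ x ≠ 0 ∧ x ≠ 1} : ℤ) = q - 2 := by
  have herase : ({x : K | σ x = x ∧ x ≠ 0 ∧ x ≠ 1} : Finset K) =
      ({x : K | σ x = x ∧ x ≠ 0} : Finset K).erase 1 := by
    ext x
    simp only [mem_filter, mem_univ, true_and, mem_erase]
    tauto
  rw [herase, cast_card_erase_of_mem (by simp), h.card_fixed_ne_zero]
  ring

open Classical in
lemma card_not_fixed (h : CircleData σ q ν) : (#{x : K | σ x ≠ x} : ℤ) = q ^ 2 - q := by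
  have hsplit := card_filter_add_card_filter_not (s := (univ : Finset K)) (fun x => σ x = x)
  rw [card_univ] at hsplit
  rw [← h.card, ← hsplit, Nat.cast_add, h.card_fixed, add_sub_cancel_left]

variable [CharP K 2]

open Classical in
lemma card_isUnitaryOmega (h : CircleData σ q ν) : (#{w : K | IsUnitaryOmega σ w} : ℤ) = ν := by
  rw [← h.circDiffCount_eq 1 (by simp), circDiffCount]
  simp only [circInd, sum_boole]
  congr 2
  ext w
  simp only [mem_filter, mem_univ, true_and, mem_circ]
  exact ⟨fun hw => ⟨hw.mul_map, (one_add_mul_map_eq_one_iff hw.mul_map).2 hw.sq_add_add_one⟩,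
    fun hw => ⟨hw.1, (one_add_mul_map_eq_one_iff hw.1).1 hw.2⟩⟩

open Classical in
lemma card_fixed_pairs_add_eq_one (h : CircleData σ q ν) :
    (#{t : K × K | (σ t.1 = t.1 ∧ t.1 ≠ 0) ∧ (σ t.2 = t.2 ∧ t.2 ≠ 0) ∧ t.1 + t.2 = 1} : ℤ) =
      q - 2 := by
  rw [← h.card_fixed_ne_zero_ne_one]
  norm_cast
  refine card_bij' (fun t _ => t.1) (fun x _ => (x, 1 + x)) ?_ ?_ ?_ fun _ _ => rfl
  · rintro ⟨x, y⟩ hxy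
    simp only [mem_filter, mem_univ, true_and] at hxy ⊢
    refine ⟨hxy.1.1, hxy.1.2, ?_⟩
    rintro rfl
    exact hxy.2.1.2 (by simpa using hxy.2.2)
  · intro x hx
    simp only [mem_filter, mem_univ, true_and] at hx ⊢
    exact ⟨⟨hx.1, hx.2.1⟩, ⟨by rw [map_add, map_one, hx.1],
      CharTwo.add_eq_zero.not.2 (Ne.symm hx.2.2)⟩, by grind⟩
  · rintro ⟨x, y⟩ hxy
    simp only [mem_filter] at hxy
    ext
    · rfl
    · grind

lemma tripleCount_all_fixed (h : CircleData σ q ν) :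
    tripleCount (fun x y z => IsSol σ x y z ∧ ratio σ x = 1 ∧ ratio σ y = 1) =
      q ^ 2 - 3 * q + 3 := by
  classical
  set S : Finset K := {x : K | σ x = x ∧ x ≠ 0} with hS
  have hpairs : {t ∈ S ×ˢ S | t.1 + t.2 = 1} = ({t | (σ t.1 = t.1 ∧ t.1 ≠ 0) ∧
      (σ t.2 = t.2 ∧ t.2 ≠ 0) ∧ t.1 + t.2 = 1} : Finset (K × K)) := by
    ext t
    simp [hS, and_assoc]
  have hsplit := card_filter_add_card_filter_not (s := S ×ˢ S) (fun t => t.1 + t.2 = 1)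
  rw [card_product] at hsplit
  zify at hsplit
  rw [hpairs, h.card_fixed_pairs_add_eq_one, h.card_fixed_ne_zero] at hsplit
  rw [tripleCount_eq_card {t ∈ S ×ˢ S | ¬ (t.1 + t.2 = 1)} fun t => (t.1, t.2, 1 + t.1 + t.2)]
  · linarith
  · rintro ⟨x, y⟩ _ ⟨x', y'⟩ _ ht
    simp only [Prod.mk.injEq] at ht
    rw [ht.1, ht.2.1]
  · intro x y z
    rw [isSol_all_fixed_iff]
    simp only [hS, mem_filter, mem_product, mem_univ, true_and, Prod.exists, Prod.mk.injEq]
    constructor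
    · rintro ⟨hx, hy, hx0, hy0, hxy, hz⟩
      exact ⟨x, y, ⟨⟨⟨hx, hx0⟩, hy, hy0⟩, hxy⟩, rfl, rfl, hz.symm⟩
    · rintro ⟨x', y', ⟨⟨⟨hx, hx0⟩, hy, hy0⟩, hxy⟩, rfl, rfl, hz⟩
      exact ⟨hx, hy, hx0, hy0, hxy, hz.symm⟩

lemma tripleCount_double (h : CircleData σ q ν) :
    tripleCount (fun x y z =>
      IsSol σ x y z ∧ ratio σ x = 1 ∧ ratio σ y ≠ 1 ∧ ratio σ y = ratio σ z) = q ^ 2 - q := by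
  classical
  rw [tripleCount_eq_card {x : K | σ x ≠ x} fun y => (1, y, y), h.card_not_fixed]
  · intro y _ y' _ hy
    simpa using hy
  · intro x y z
    rw [isSol_double_iff]
    simp only [mem_filter, mem_univ, true_and, Prod.mk.injEq]
    grind

lemma tripleCount_fixed (h : CircleData σ q ν) :
    tripleCount (fun x y z =>
      IsSol σ x y z ∧ ratio σ x = 1 ∧ ratio σ y ≠ 1 ∧ ratio σ y ≠ ratio σ z) = ν * (q - 2) := by
  classical
  rw [tripleCount_eq_card (({w : K | IsUnitaryOmega σ w} : Finset K) ×ˢ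
      ({x : K | σ x = x ∧ x ≠ 0 ∧ x ≠ 1} : Finset K))
    fun t => (t.2, t.1 * (1 + t.2), (t.1 + 1) * (1 + t.2)), card_product, Nat.cast_mul,
    h.card_isUnitaryOmega, h.card_fixed_ne_zero_ne_one]
  · rintro ⟨w, a⟩ hw ⟨w', a'⟩ _ ht
    simp only [coe_product, Set.mem_prod, mem_coe, mem_filter, mem_univ, true_and] at hw
    simp only [Prod.mk.injEq] at ht
    obtain ⟨rfl, hw_eq, -⟩ := ht
    rw [mul_right_cancel₀ (CharTwo.add_eq_zero.not.2 hw.2.2.2.symm) hw_eq]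
  · intro x y z
    rw [isSol_fixed_iff h.involutive]
    simp only [mem_filter, mem_product, mem_univ, true_and, Prod.exists, Prod.mk.injEq, and_assoc,
      eq_comm]

lemma tripleCount_pair (h : CircleData σ q ν) :
    tripleCount (fun x y z =>
      IsSol σ x y z ∧ ratio σ x ≠ 1 ∧ ratio σ z ≠ 1 ∧ ratio σ x = ratio σ y) = ν * (q - 2) := by
  classical
  rw [tripleCount_eq_card (({w : K | IsUnitaryOmega σ w} : Finset K) ×ˢ
      ({x : K | σ x = x ∧ x ≠ 0 ∧ x ≠ 1} : Finset K))
    fun t => (t.1 * t.2, t.1 * (1 + t.2), t.1 + 1), card_product, Nat.cast_mul,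
    h.card_isUnitaryOmega, h.card_fixed_ne_zero_ne_one]
  · rintro ⟨w, a⟩ hw ⟨w', a'⟩ _ ht
    simp only [coe_product, Set.mem_prod, mem_coe, mem_filter, mem_univ, true_and] at hw
    simp only [Prod.mk.injEq, add_left_inj] at ht
    obtain ⟨ha_eq, -, rfl⟩ := ht
    rw [mul_left_cancel₀ hw.1.ne_zero ha_eq]
  · intro x y z
    rw [isSol_pair_iff h.involutive]
    simp only [mem_filter, mem_product, mem_univ, true_and, Prod.exists, Prod.mk.injEq, and_assoc,
      eq_comm]

lemma tripleCount_one_fixed (h : CircleData σ q ν) :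
    tripleCount (fun x y z => IsSol σ x y z ∧ ratio σ x = 1 ∧ ratio σ y ≠ 1) =
      q ^ 2 - q + ν * (q - 2) := by
  rw [tripleCount_split _ fun _ y z => ratio σ y = ratio σ z, ← h.tripleCount_double,
    ← h.tripleCount_fixed]
  simp only [and_assoc, ne_eq]

lemma tripleCount_none_fixed (h : CircleData σ q ν) :
    tripleCount (fun x y z => IsSol σ x y z ∧ ratio σ x ≠ 1 ∧ ratio σ y ≠ 1 ∧ ratio σ z ≠ 1) =
      3 * (ν * (q - 2)) + tripleCount (IsRatioTriple σ) := by
  have hpair : tripleCount (fun x y z => (IsSol σ x y z ∧ ratio σ x ≠ 1 ∧ ratio σ y ≠ 1 ∧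
      ratio σ z ≠ 1) ∧ ratio σ y = ratio σ z) = ν * (q - 2) := by
    rw [← h.tripleCount_pair, eq_comm, ← tripleCount_rotate]
    refine tripleCount_congr fun x y z => ⟨fun ⟨hsol, hy, hx, hyz⟩ => ?_,
      fun ⟨⟨hsol, hx, hy, _⟩, hyz⟩ => ⟨hsol.swap12.swap23, hy, hx, hyz⟩⟩
    exact ⟨⟨hsol.swap23.swap12, hx, hy, hyz ▸ hy⟩, hyz⟩
  rw [tripleCount_eq_three_mul_add (r := fun _ y z => ratio σ y = ratio σ z)
    (fun ⟨hsol, hx, hy, hz⟩ => ⟨hsol.swap12, hy, hx, hz⟩)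
    (fun ⟨hsol, hx, hy, hz⟩ => ⟨hsol.swap23, hx, hz, hy⟩) Eq.symm
    (fun ⟨hsol, _, _, hz⟩ hyz hxz => hsol.swap23.ratio_ne hxz (hxz ▸ hz) (hxz.trans hyz.symm))]
  rw [hpair, ← tripleCount_isSol_isCircleTriple]
  congr 1
  refine tripleCount_congr fun x y z => ⟨?_, ?_⟩
  · rintro ⟨⟨hsol, hx, hy, hz⟩, hyz, hxz, hxy⟩
    exact ⟨hsol, ratio_mul_map_ratio h.involutive hsol.fst_ne_zero,
      ratio_mul_map_ratio h.involutive hsol.snd_ne_zero,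
      ratio_mul_map_ratio h.involutive hsol.trd_ne_zero, hx, hy, hz, hxy, hxz, hyz⟩
  · rintro ⟨hsol, hr⟩
    exact ⟨⟨hsol, hr.fst_ne_one, hr.snd_ne_one, hr.trd_ne_one⟩, hr.snd_ne_trd, hr.fst_ne_trd,
      hr.fst_ne_snd⟩

lemma tripleCount_isSol (h : CircleData σ q ν) :
    tripleCount (IsSol σ) =
      4 * q ^ 2 - 6 * q + 3 + 6 * ν * (q - 2) + tripleCount (IsRatioTriple σ) := by
  have hnot_all : tripleCount (fun x y z => IsSol σ x y z ∧ ¬ (ratio σ x = 1 ∧ ratio σ y = 1)) =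
      3 * (q ^ 2 - q + ν * (q - 2)) + (3 * (ν * (q - 2)) + tripleCount (IsRatioTriple σ)) := by
    rw [tripleCount_eq_three_mul_add (r := fun x _ _ => ratio σ x = 1)
      (fun ⟨hsol, hxy⟩ => ⟨hsol.swap12, fun ⟨hy, hx⟩ => hxy ⟨hx, hy⟩⟩)
      (fun ⟨hsol, hxy⟩ => ⟨hsol.swap23, fun ⟨hx, hz⟩ => hxy ⟨hx, hsol.swap23.ratio_eq_one hx hz⟩⟩)
      id (fun ⟨_, hxy⟩ hx hy => hxy ⟨hx, hy⟩), ← h.tripleCount_one_fixed,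
      ← h.tripleCount_none_fixed]
    refine congrArg₂ (3 * · + ·) (tripleCount_congr fun x y z => ?_)
      (tripleCount_congr fun x y z => ?_) <;> tauto
  rw [tripleCount_split _ fun x y _ => ratio σ x = 1 ∧ ratio σ y = 1, h.tripleCount_all_fixed,
    hnot_all]
  ring

end CircleData

/-! ### Degenerate configurations on the circle -/

lemma sum_ite_add_eq_zero {R : Type*} [AddGroup R] [DecidableEq R] (S : Finset R) (a : R) :
    ∑ w ∈ S, (if a + w = 0 then (1 : ℤ) else 0) = if -a ∈ S then 1 else 0 := by
  simp only [add_eq_zero_iff_neg_eq, sum_ite_eq]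

section RatioTripleInd

variable {K : Type*} [Field K] {σ : K →+* K} {u v w : K}

open Classical in
/-- The indicator function of the triples of ratios of solutions. -/
noncomputable def ratioTripleInd (σ : K →+* K) (u v w : K) : ℤ :=
  if IsRatioTriple σ u v w then 1 else 0

lemma ratioTripleInd_of_not (h : ¬ IsCircleTriple σ u v w) : ratioTripleInd σ u v w = 0 :=
  if_neg fun hr => h hr.toIsCircleTriple

lemma ratioTripleInd_one_left : ratioTripleInd σ 1 v w = 0 :=
  ratioTripleInd_of_not fun h => h.fst_ne_one rfl

lemma ratioTripleInd_one_mid : ratioTripleInd σ u 1 w = 0 :=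
  ratioTripleInd_of_not fun h => h.snd_ne_one rfl

lemma ratioTripleInd_one_right : ratioTripleInd σ u v 1 = 0 :=
  ratioTripleInd_of_not fun h => h.trd_ne_one rfl

lemma ratioTripleInd_fst_eq_snd : ratioTripleInd σ u u w = 0 :=
  ratioTripleInd_of_not fun h => h.fst_ne_snd rfl

lemma ratioTripleInd_fst_eq_trd : ratioTripleInd σ u v u = 0 :=
  ratioTripleInd_of_not fun h => h.fst_ne_trd rfl

lemma ratioTripleInd_snd_eq_trd : ratioTripleInd σ u v v = 0 :=
  ratioTripleInd_of_not fun h => h.snd_ne_trd rfl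

lemma tripleCount_isRatioTriple_eq_sum [Fintype K] : tripleCount (IsRatioTriple σ) =
    ∑ u ∈ circ σ, ∑ v ∈ circ σ, ∑ w ∈ circ σ, ratioTripleInd σ u v w := by
  have hw_sum (u v : K) : ∑ w ∈ circ σ, ratioTripleInd σ u v w = ∑ w, ratioTripleInd σ u v w :=
    sum_subset (subset_univ _) fun w _ hw =>
      ratioTripleInd_of_not fun h => hw (mem_circ.2 h.trd_mem)
  have hv_sum (u : K) : ∑ v ∈ circ σ, ∑ w, ratioTripleInd σ u v w =
      ∑ v, ∑ w, ratioTripleInd σ u v w :=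
    sum_subset (subset_univ _) fun v _ hv => sum_eq_zero fun w _ =>
      ratioTripleInd_of_not fun h => hv (mem_circ.2 h.snd_mem)
  simp only [hw_sum, hv_sum]
  rw [tripleCount_eq_sum]
  exact (sum_subset (subset_univ _) fun u _ hu => sum_eq_zero fun v _ => sum_eq_zero fun w _ =>
    ratioTripleInd_of_not fun h => hu (mem_circ.2 h.fst_mem)).symm

open Classical in
lemma IsCircleTriple.circInd_one_add [Fintype K] [CharP K 2] (h : IsCircleTriple σ u v w) :
    circInd σ (1 + u + v + w) = ratioTripleInd σ u v w +
      (if 1 + u + v = 0 then 1 else 0) + (if (1 + u) + w = 0 then 1 else 0) +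
      (if (1 + v) + w = 0 then 1 else 0) + (if (u + v) + w = 0 then 1 else 0) := by
  have hratio : IsRatioTriple σ u v w ↔ 1 + u + v + w ∈ circ σ ∧ u + v + w ≠ 0 ∧
      1 + v + w ≠ 0 ∧ 1 + u + w ≠ 0 ∧ 1 + u + v ≠ 0 :=
    ⟨fun hr => ⟨mem_circ.2 hr.sum_mem, hr.omit_one, hr.omit_fst, hr.omit_snd, hr.omit_trd⟩,
      fun ⟨hs, h1, hu, hv, hw⟩ => ⟨h, mem_circ.1 hs, h1, hu, hv, hw⟩⟩
  have mem_one : (1 : K) ∈ circ σ := by simp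
  have mem_fst : u ∈ circ σ := mem_circ.2 h.fst_mem
  have mem_snd : v ∈ circ σ := mem_circ.2 h.snd_mem
  have mem_trd : w ∈ circ σ := mem_circ.2 h.trd_mem
  obtain ⟨-, -, -, fst_ne_one, snd_ne_one, trd_ne_one, fst_ne_snd, fst_ne_trd, snd_ne_trd⟩ := h
  simp only [circInd, ratioTripleInd, hratio]
  -- At most one of the sums of three of `1, u, v, w` vanishes, and then the sum of all four is the
  -- remaining term.
  grind

open Classical in
lemma sum_circ_erase_ite_add_eq_zero [Fintype K] [CharP K 2] {a : K} (ha_one : a ≠ 1) (hau : a ≠ u)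
    (hav : a ≠ v) :
    ∑ w ∈ (((circ σ).erase 1).erase u).erase v, (if a + w = 0 then (1 : ℤ) else 0) =
      circInd σ a := by
  rw [sum_ite_add_eq_zero, CharTwo.neg_eq, circInd]
  simp only [mem_erase, hav, hau, ha_one, ne_eq, not_false_eq_true, true_and]

end RatioTripleInd

namespace CircleData

variable {K : Type*} [Field K] [Fintype K] [CharP K 2] {σ : K →+* K} {q ν : ℤ} {u v : K}

open Classical in
lemma sum_ite_sum_three_eq_zero (h : CircleData σ q ν) (hu : u ∈ circ σ) (hv : v ∈ circ σ)
    (hu1 : u ≠ 1) (hv1 : v ≠ 1) (huv : u ≠ v) :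
    ∑ w ∈ (((circ σ).erase 1).erase u).erase v, ((if 1 + u + v = 0 then (1 : ℤ) else 0) +
        (if (1 + u) + w = 0 then 1 else 0) + (if (1 + v) + w = 0 then 1 else 0) +
        (if (u + v) + w = 0 then 1 else 0)) =
      (q - 5) * (if 1 + u + v = 0 then 1 else 0) +
        circInd σ (1 + u) + circInd σ (1 + v) + circInd σ (u + v) := by
  have hu_mem : u ∈ (circ σ).erase 1 := mem_erase.2 ⟨hu1, hu⟩
  have hv_mem : v ∈ ((circ σ).erase 1).erase u := mem_erase.2 ⟨huv.symm, mem_erase.2 ⟨hv1, hv⟩⟩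
  have hcard : (#((((circ σ).erase 1).erase u).erase v) : ℤ) = q - 2 := by
    rw [cast_card_erase_of_mem hv_mem, cast_card_erase_of_mem hu_mem,
      cast_card_erase_of_mem (by simp), h.card_circ]
    ring
  have hu0 : u ≠ 0 := left_ne_zero_of_mul_eq_one (mem_circ.1 hu)
  have hv0 : v ≠ 0 := left_ne_zero_of_mul_eq_one (mem_circ.1 hv)
  simp only [sum_add_distrib, sum_const, nsmul_eq_mul, hcard]
  by_cases hsum : 1 + u + v = 0
  · have h1u : 1 + u = v := by grind
    have h1v : 1 + v = u := by grind
    have huv1 : u + v = 1 := by grind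
    rw [h1u, h1v, huv1, circInd_of_mem hu, circInd_of_mem hv, circInd_of_mem (by simp)]
    simp only [sum_ite_add_eq_zero, CharTwo.neg_eq, CharTwo.add_self_eq_zero, mem_erase, ne_eq,
      not_true_eq_false, false_and, and_false, if_true, if_false]
    ring
  · rw [sum_circ_erase_ite_add_eq_zero (by grind) (by grind) (by grind),
      sum_circ_erase_ite_add_eq_zero (by grind) (by grind) (by grind),
      sum_circ_erase_ite_add_eq_zero (by grind) (by grind) (by grind), if_neg hsum]
    ring

open Classical in
lemma sum_circInd_one_add_fst_snd (h : CircleData σ q ν) (hu : u ∈ circ σ) (hv : v ∈ circ σ)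
    (hu1 : u ≠ 1) (hv1 : v ≠ 1) (huv : u ≠ v) :
    ∑ w ∈ circ σ, circInd σ (1 + u + v + w) =
      ∑ w ∈ circ σ, ratioTripleInd σ u v w + (q - 5) * (if 1 + u + v = 0 then 1 else 0) +
        2 * circInd σ (1 + u) + 2 * circInd σ (1 + v) + 2 * circInd σ (u + v) := by
  have hu_mem : u ∈ (circ σ).erase 1 := mem_erase.2 ⟨hu1, hu⟩
  have hv_mem : v ∈ ((circ σ).erase 1).erase u := mem_erase.2 ⟨huv.symm, mem_erase.2 ⟨hv1, hv⟩⟩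
  have htriple (w : K) (hw : w ∈ (((circ σ).erase 1).erase u).erase v) :
      IsCircleTriple σ u v w := by
    simp only [mem_erase, mem_circ] at hw
    exact ⟨mem_circ.1 hu, mem_circ.1 hv, hw.2.2.2, hu1, hv1, hw.2.2.1, huv, Ne.symm hw.2.1,
      Ne.symm hw.1⟩
  have hgeneric : ∑ w ∈ (((circ σ).erase 1).erase u).erase v, ratioTripleInd σ u v w =
      ∑ w ∈ circ σ, ratioTripleInd σ u v w := by
    rw [sum_erase _ ratioTripleInd_snd_eq_trd, sum_erase _ ratioTripleInd_fst_eq_trd,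
      sum_erase _ ratioTripleInd_one_right]
  have h_one : 1 + u + v + 1 = u + v := by grind
  have h_fst : 1 + u + v + u = 1 + v := by grind
  have h_snd : 1 + u + v + v = 1 + u := by grind
  rw [← add_sum_erase (circ σ) _ (by simp : (1 : K) ∈ circ σ), ← add_sum_erase _ _ hu_mem,
    ← add_sum_erase _ _ hv_mem, h_one, h_fst, h_snd,
    sum_congr rfl fun w hw => (htriple w hw).circInd_one_add]
  simp only [add_assoc, sum_add_distrib (f := ratioTripleInd σ u v), hgeneric]
  simp only [← add_assoc, h.sum_ite_sum_three_eq_zero hu hv hu1 hv1 huv]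
  ring

open Classical in
lemma sum_erase_circInd_add (h : CircleData σ q ν) {s : K} (hs : s ∈ circ σ) :
    ∑ v ∈ (circ σ).erase s, circInd σ (s + v) = ν := by
  have hzero : circInd σ (s + s) = 0 := by
    rw [CharTwo.add_self_eq_zero]
    exact circInd_of_notMem (by simp)
  rw [sum_erase (f := fun v => circInd σ (s + v)) _ hzero]
  exact h.circDiffCount_eq s hs

open Classical in
lemma sum_circInd_one_add_fst (h : CircleData σ q ν) (hu : u ∈ circ σ) (hu1 : u ≠ 1) :
    ∑ v ∈ circ σ, ∑ w ∈ circ σ, circInd σ (1 + u + v + w) =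
      ∑ v ∈ circ σ, ∑ w ∈ circ σ, ratioTripleInd σ u v w + 6 * ν +
        (3 * q - 11) * circInd σ (1 + u) := by
  have hu_mem : u ∈ (circ σ).erase 1 := mem_erase.2 ⟨hu1, hu⟩
  have one_mem : (1 : K) ∈ circ σ := by simp
  have hcard : (#(((circ σ).erase 1).erase u) : ℤ) = q - 1 := by
    rw [cast_card_erase_of_mem hu_mem, cast_card_erase_of_mem one_mem, h.card_circ]
    ring
  have hgeneric : ∑ v ∈ ((circ σ).erase 1).erase u, ∑ w ∈ circ σ, ratioTripleInd σ u v w =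
      ∑ v ∈ circ σ, ∑ w ∈ circ σ, ratioTripleInd σ u v w := by
    rw [sum_erase, sum_erase]
    · exact sum_eq_zero fun _ _ => ratioTripleInd_one_mid
    · exact sum_eq_zero fun _ _ => ratioTripleInd_fst_eq_snd
  have hsum_one : ∑ v ∈ ((circ σ).erase 1).erase u, circInd σ (1 + v) =
      ν - circInd σ (1 + u) := by
    rw [sum_erase_eq_sub hu_mem, h.sum_erase_circInd_add one_mem]
  have hsum_fst : ∑ v ∈ ((circ σ).erase 1).erase u, circInd σ (u + v) =
      ν - circInd σ (1 + u) := by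
    rw [erase_right_comm, sum_erase_eq_sub (mem_erase.2 ⟨hu1.symm, one_mem⟩),
      h.sum_erase_circInd_add hu, add_comm u 1]
  have hcancel : ∑ v ∈ ((circ σ).erase 1).erase u, (if 1 + u + v = 0 then (1 : ℤ) else 0) =
      circInd σ (1 + u) := by
    have hu0 : u ≠ 0 := left_ne_zero_of_mul_eq_one (mem_circ.1 hu)
    have hmem : 1 + u ∈ ((circ σ).erase 1).erase u ↔ 1 + u ∈ circ σ := by
      simp [hu0]
    rw [sum_ite_add_eq_zero, CharTwo.neg_eq, circInd, if_congr hmem rfl rfl]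
  have h_one : ∑ w ∈ circ σ, circInd σ (1 + u + 1 + w) = ν := by
    rw [← h.circDiffCount_eq u hu, circDiffCount, add_right_comm, CharTwo.add_self_eq_zero,
      zero_add]
  have h_fst : ∑ w ∈ circ σ, circInd σ (1 + u + u + w) = ν := by
    rw [← h.circDiffCount_eq 1 one_mem, circDiffCount, add_assoc 1 u u, CharTwo.add_self_eq_zero,
      add_zero]
  rw [← add_sum_erase _ _ one_mem, ← add_sum_erase _ _ hu_mem, h_one, h_fst,
    sum_congr rfl fun v hv => h.sum_circInd_one_add_fst_snd hu
      (mem_of_mem_erase (mem_of_mem_erase hv)) hu1 (ne_of_mem_erase (mem_of_mem_erase hv))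
      (ne_of_mem_erase hv).symm]
  simp only [sum_add_distrib, ← mul_sum, sum_const, nsmul_eq_mul, hcard, hgeneric, hsum_one,
    hsum_fst, hcancel]
  ring

lemma sum_circInd_one_add (h : CircleData σ q ν) :
    ∑ u ∈ circ σ, ∑ v ∈ circ σ, ∑ w ∈ circ σ, circInd σ (1 + u + v + w) =
      tripleCount (IsRatioTriple σ) + 10 * (q - 1) * ν := by
  classical
  have one_mem : (1 : K) ∈ circ σ := by simp
  have hcard : (#((circ σ).erase 1) : ℤ) = q := by
    rw [cast_card_erase_of_mem one_mem, h.card_circ, add_sub_cancel_right]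
  have hgeneric : ∑ u ∈ (circ σ).erase 1, ∑ v ∈ circ σ, ∑ w ∈ circ σ, ratioTripleInd σ u v w =
      tripleCount (IsRatioTriple σ) := by
    rw [tripleCount_isRatioTriple_eq_sum, sum_erase]
    exact sum_eq_zero fun _ _ => sum_eq_zero fun _ _ => ratioTripleInd_one_left
  have h_one : ∑ v ∈ circ σ, ∑ w ∈ circ σ, circInd σ (1 + 1 + v + w) = (q + 1) * ν := by
    simp only [CharTwo.add_self_eq_zero, zero_add]
    change ∑ v ∈ circ σ, circDiffCount σ v = (q + 1) * ν
    rw [sum_congr rfl h.circDiffCount_eq, sum_const, nsmul_eq_mul, h.card_circ]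
  rw [← add_sum_erase _ _ one_mem, h_one,
    sum_congr rfl fun u hu => h.sum_circInd_one_add_fst (mem_of_mem_erase hu) (ne_of_mem_erase hu)]
  simp only [sum_add_distrib, ← mul_sum, sum_const, nsmul_eq_mul, hcard, hgeneric,
    h.sum_erase_circInd_add one_mem]
  ring

end CircleData

/-! ### The normalised count in a quadratic extension -/

section QuadraticExtension

variable {F : Type*} [Field F] [Fintype F] [CharP F 2]
variable {K : Type*} [Field K] [Fintype K] [Algebra F K]
variable {κ : F} {θ : K} {σ : K →+* K}

namespace IsQuadraticConj

lemma involutive (h : IsQuadraticConj κ θ σ) : Function.Involutive σ := by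
  intro x
  obtain ⟨a, b, rfl⟩ := h.exists_coord x
  rw [h.map_coord, h.map_coord, add_assoc, CharTwo.add_self_eq_zero, add_zero]

lemma map_eq_self_iff (h : IsQuadraticConj κ θ σ) (x : K) :
    σ x = x ↔ ∃ a, algebraMap F K a = x := by
  refine ⟨fun hx => ?_, ?_⟩
  · obtain ⟨a, b, rfl⟩ := h.exists_coord x
    rw [h.map_coord] at hx
    have hb : b = 0 := by simpa using (h.coord_inj hx).1
    exact ⟨a, by simp [hb]⟩
  · rintro ⟨a, rfl⟩
    exact h.map_algebraMap a

open Classical in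
lemma card_fixed (h : IsQuadraticConj κ θ σ) : #{x : K | σ x = x} = Fintype.card F := by
  have himage : ({x : K | σ x = x} : Finset K) = univ.image (algebraMap F K) := by
    ext x
    simp [h.map_eq_self_iff]
  rw [himage, card_image_of_injective _ (algebraMap F K).injective, card_univ]

variable [CharP K 2]

lemma circDiffCount_of_mem_circ (h : IsQuadraticConj κ θ σ) {s : K} (hs : s ∈ circ σ) :
    circDiffCount σ s = 1 - psi (1 : F) := by
  obtain ⟨a, b, rfl⟩ := h.exists_coord s
  rw [h.coord_mem_circ] at hs
  have hab : (a, b) ≠ 0 := by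
    rintro ⟨⟩
    simp [normForm] at hs
  rw [h.circDiffCount_coord hab, hs, inv_one]

lemma circleData (h : IsQuadraticConj κ θ σ) :
    CircleData σ (Fintype.card F) (1 - psi (1 : F)) where
  involutive := h.involutive
  card := mod_cast h.card
  card_fixed := mod_cast h.card_fixed
  card_circ := h.card_circ
  circDiffCount_eq _ := h.circDiffCount_of_mem_circ

lemma tripleCount_isSol_eq_moment (h : IsQuadraticConj κ θ σ) :
    tripleCount (IsSol σ) = 5 * (Fintype.card F : ℤ) ^ 2 - Fintype.card F + 4 -
      3 * psi (1 : F) * Fintype.card F - moment F -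
      (1 - psi (1 : F)) * (4 * Fintype.card F + 2) := by
  have hsum := h.circleData.sum_circInd_one_add
  rw [h.sum_circInd_one_add] at hsum
  rw [h.circleData.tripleCount_isSol]
  linear_combination -hsum

lemma tripleCount_isSol (h : IsQuadraticConj κ θ σ) {m : ℕ} (hF : Fintype.card F = 2 ^ m) :
    tripleCount (IsSol σ) =
      5 * (2 ^ m) ^ 2 - 6 * 2 ^ m - tauInt m + if Even m then 4 else 0 := by
  have hK : Fintype.card K = 4 ^ m := by
    rw [h.card, hF, ← pow_mul, mul_comm, pow_mul]
    norm_num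
  rw [h.tripleCount_isSol_eq_moment, psi_one_of_card (by rw [Nat.card_eq_fintype_card, hF]), hF]
  push_cast
  split_ifs with hm
  · rw [moment_even hF hm, hm.neg_one_pow]
    ring
  · rw [moment_odd hF hK hm, (Nat.not_even_iff_odd.1 hm).neg_one_pow]
    ring

end IsQuadraticConj

lemma exists_isQuadraticConj [CharP K 2] (hK : Fintype.card K = Fintype.card F ^ 2) :
    ∃ (κ : F) (θ : K) (σ : K →+* K), IsQuadraticConj κ θ σ ∧ ∀ x, σ x = x ^ Fintype.card F := by
  obtain ⟨κ, hκ⟩ := exists_psi_eq_neg_one (F := F)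
  have hfinrank : Module.finrank F K = 2 := by
    have hcard := Module.card_eq_pow_finrank (K := F) (V := K)
    rw [hK] at hcard
    exact (Nat.pow_right_injective Fintype.one_lt_card hcard).symm
  -- An element of the base field has trace `2κ = 0`, so it has the form `θ² + θ` upstairs.
  have hψ : psi (algebraMap F K κ) = 1 := by
    rw [psi_eq_psi_trace (F := F), Algebra.trace_algebraMap, hfinrank, two_smul,
      CharTwo.add_self_eq_zero, map_zero_eq_one]
  obtain ⟨θ, hθ⟩ := psi_eq_one_iff.1 hψ
  have hgen : IsArtinSchreierGen κ θ := ⟨hK, hθ, hκ⟩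
  exact ⟨κ, θ, (FiniteField.frobeniusAlgHom F K).toRingHom,
    ⟨hgen, (FiniteField.frobeniusAlgHom F K).commutes, hgen.pow_card⟩, fun _ => rfl⟩

end QuadraticExtension

lemma exists_conj_tripleCount_isSol {m : ℕ} (hm : m ≠ 0) {K : Type*} [Field K] [Fintype K]
    [CharP K 2] (hK : Fintype.card K = (2 ^ m) ^ 2) :
    ∃ σ : K →+* K, (∀ x, σ x = x ^ 2 ^ m) ∧ tripleCount (IsSol σ) =
      5 * (2 ^ m) ^ 2 - 6 * 2 ^ m - tauInt m + if Even m then 4 else 0 := by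
  let _ : Algebra (ZMod 2) K := ZMod.algebra K 2
  let _ : Fintype (GaloisField 2 m) := Fintype.ofFinite _
  have hF : Fintype.card (GaloisField 2 m) = 2 ^ m := by
    rw [← Nat.card_eq_fintype_card, GaloisField.card 2 m hm]
  have hfinrank : Module.finrank (ZMod 2) K = m * 2 := by
    have hcard := Module.card_eq_pow_finrank (K := ZMod 2) (V := K)
    rw [hK, ZMod.card, ← pow_mul] at hcard
    exact (Nat.pow_right_injective le_rfl hcard).symm
  obtain ⟨φ⟩ := FiniteField.nonempty_algHom_of_finrank_dvd (F := ZMod 2) (K := GaloisField 2 m)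
    (L := K) (by rw [GaloisField.finrank 2 hm, hfinrank]; exact dvd_mul_right m 2)
  let _ : Algebra (GaloisField 2 m) K := φ.toRingHom.toAlgebra
  obtain ⟨κ, θ, σ, hσ, hpow⟩ :=
    exists_isQuadraticConj (F := GaloisField 2 m) (K := K) (by rw [hK, hF])
  exact ⟨σ, fun x => by rw [hpow, hF], hσ.tripleCount_isSol hF⟩

/-! ### From triples to quadruples -/

section Quadruples

variable {K : Type*} [Field K] {σ : K →+* K}

lemma nihoPow_mul (c x : K) : nihoPow σ (c * x) = nihoPow σ c * nihoPow σ x := by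
  simp only [nihoPow, map_mul, mul_pow, mul_div_mul_comm]

lemma nihoPow_ne_zero {c : K} (hc : c ≠ 0) : nihoPow σ c ≠ 0 :=
  div_ne_zero (pow_ne_zero _ ((map_ne_zero σ).2 hc)) (pow_ne_zero _ hc)

lemma pow_eq_nihoPow {q : ℕ} (hq : q ≠ 0) (hσ : ∀ x, σ x = x ^ q) {x : K} (hx : x ≠ 0) :
    x ^ (3 * q - 2) = nihoPow σ x := by
  rw [nihoPow, hσ, eq_div_iff (pow_ne_zero _ hx), ← pow_add, ← pow_mul]
  congr 1
  omega

variable [CharP K 2]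

lemma isSol_inv_mul_iff {c x y z : K} (hc : c ≠ 0) :
    IsSol σ (c⁻¹ * x) (c⁻¹ * y) (c⁻¹ * z) ↔ x ≠ 0 ∧ y ≠ 0 ∧ z ≠ 0 ∧ x + y + z + c = 0 ∧
      nihoPow σ x + nihoPow σ y + nihoPow σ z + nihoPow σ c = 0 := by
  have hsum : c⁻¹ * x + c⁻¹ * y + c⁻¹ * z = 1 ↔ x + y + z + c = 0 := by
    rw [← mul_add, ← mul_add, inv_mul_eq_one₀ hc, CharTwo.add_eq_zero, eq_comm]
  have hniho : nihoPow σ (c⁻¹ * x) + nihoPow σ (c⁻¹ * y) + nihoPow σ (c⁻¹ * z) = 1 ↔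
      nihoPow σ x + nihoPow σ y + nihoPow σ z + nihoPow σ c = 0 := by
    have hinv : nihoPow σ c⁻¹ = (nihoPow σ c)⁻¹ := by
      simp only [nihoPow, map_inv₀, inv_pow, inv_div_inv, inv_div]
    rw [nihoPow_mul, nihoPow_mul, nihoPow_mul, hinv, ← mul_add, ← mul_add,
      inv_mul_eq_one₀ (nihoPow_ne_zero hc), CharTwo.add_eq_zero, eq_comm]
  rw [← hsum, ← hniho]
  refine ⟨fun h => ⟨right_ne_zero_of_mul h.fst_ne_zero, right_ne_zero_of_mul h.snd_ne_zero,
    right_ne_zero_of_mul h.trd_ne_zero, h.sum_eq_one, h.sum_nihoPow⟩,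
    fun ⟨hx, hy, hz, hs, hn⟩ => ?_⟩
  have hc' : c⁻¹ ≠ 0 := inv_ne_zero hc
  exact ⟨mul_ne_zero hc' hx, mul_ne_zero hc' hy, mul_ne_zero hc' hz, hs, hn⟩

lemma isSol_inv_mul_iff_pow {q : ℕ} (hq : q ≠ 0) (hσ : ∀ x, σ x = x ^ q) {c x y z : K}
    (hc : c ≠ 0) :
    IsSol σ (c⁻¹ * x) (c⁻¹ * y) (c⁻¹ * z) ↔ x ≠ 0 ∧ y ≠ 0 ∧ z ≠ 0 ∧ x + y + z + c = 0 ∧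
      x ^ (3 * q - 2) + y ^ (3 * q - 2) + z ^ (3 * q - 2) + c ^ (3 * q - 2) = 0 := by
  rw [isSol_inv_mul_iff hc]
  refine and_congr_right fun hx => and_congr_right fun hy => and_congr_right fun hz => ?_
  rw [pow_eq_nihoPow hq hσ hx, pow_eq_nihoPow hq hσ hy, pow_eq_nihoPow hq hσ hz,
    pow_eq_nihoPow hq hσ hc]

lemma ncard_quadruples [Fintype K] {q : ℕ} (hq : q ≠ 0) (hσ : ∀ x : K, σ x = x ^ q) :
    ({p : K × K × K × K | p.1 ≠ 0 ∧ p.2.1 ≠ 0 ∧ p.2.2.1 ≠ 0 ∧ p.2.2.2 ≠ 0 ∧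
        p.1 + p.2.1 + p.2.2.1 + p.2.2.2 = 0 ∧
        p.1 ^ (3 * q - 2) + p.2.1 ^ (3 * q - 2) + p.2.2.1 ^ (3 * q - 2) +
          p.2.2.2 ^ (3 * q - 2) = 0}.ncard : ℤ) =
      (Fintype.card K - 1) * tripleCount (IsSol σ) := by
  classical
  rw [tripleCount, ← card_nz, ← Nat.cast_mul, ← card_product, Nat.cast_inj,
    ← Set.ncard_coe_finset]
  refine Set.ncard_congr (fun p _ => (p.2.2.2, p.2.2.2⁻¹ * p.1, p.2.2.2⁻¹ * p.2.1,
    p.2.2.2⁻¹ * p.2.2.1)) ?_ ?_ ?_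
  · rintro ⟨x, y, z, c⟩ ⟨hx, hy, hz, hc, hsum, hpow⟩
    simpa [mem_nz, hc] using (isSol_inv_mul_iff_pow hq hσ hc).2 ⟨hx, hy, hz, hsum, hpow⟩
  · rintro ⟨x, y, z, c⟩ ⟨x', y', z', c'⟩ ⟨-, -, -, hc, -⟩ - heq
    simp only [Prod.mk.injEq] at heq
    obtain ⟨rfl, hx, hy, hz⟩ := heq
    have hcancel := mul_right_injective₀ (inv_ne_zero hc)
    rw [hcancel hx, hcancel hy, hcancel hz]
  · rintro ⟨c, x, y, z⟩ hmem
    simp only [coe_product, coe_filter, Set.mem_prod, mem_coe, mem_nz, mem_univ, true_and,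
      Set.mem_ofPred_eq] at hmem
    obtain ⟨hc, hsol⟩ := hmem
    have hcancel (a : K) : c⁻¹ * (c * a) = a := inv_mul_cancel_left₀ hc a
    have hquad : IsSol σ (c⁻¹ * (c * x)) (c⁻¹ * (c * y)) (c⁻¹ * (c * z)) := by
      simpa only [hcancel] using hsol
    obtain ⟨hx, hy, hz, hsum, hpow⟩ := (isSol_inv_mul_iff_pow hq hσ hc).1 hquad
    exact ⟨(c * x, c * y, c * z, c), ⟨hx, hy, hz, hc, hsum, hpow⟩, by simp only [hcancel]⟩

end Quadruples

lemma cast_tauInt {τ : ℕ → ℚ} (hτ1 : τ 1 = 1 / 2) (hτ2 : τ 2 = -7 / 4)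
    (hτ : ∀ k, 3 ≤ k → τ k = τ (k - 1) / 2 - τ (k - 2)) {m : ℕ} (hm : m ≠ 0) :
    (tauInt m : ℚ) = 2 ^ m * τ m := by
  induction m using Nat.twoStepInduction with
  | zero => contradiction
  | one => simp [tauInt, hτ1]
  | more n ih₀ ih₁ =>
    obtain rfl | hn := eq_or_ne n 0
    · rw [tauInt_add_two, hτ2]
      norm_num [tauInt]
    · have hrec := hτ (n + 2) (by omega)
      rw [show n + 2 - 1 = n + 1 by omega, Nat.add_sub_cancel] at hrec
      rw [tauInt_add_two, hrec]
      push_cast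
      rw [ih₀ hn, ih₁ n.succ_ne_zero]
      ring

end NihoCount

/-- Counting quadruples in (F_{q^2}^*)^4 with x₁+x₂+x₃+x₄ = 0 and
x₁^d + x₂^d + x₃^d + x₄^d = 0, where d = 3q - 2, in terms of the sequence τ. -/
theorem stmt_7 (m : ℕ) (hm : 0 < m) (q : ℕ) (hq : q = 2 ^ m)
    (K : Type*) [Field K] [Fintype K] [CharP K 2] (hK : Fintype.card K = q ^ 2)
    (τ : ℕ → ℚ) (hτ1 : τ 1 = 1 / 2) (hτ2 : τ 2 = -7 / 4)
    (hτr : ∀ k, 3 ≤ k → τ k = τ (k - 1) / 2 - τ (k - 2)) :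
    ({p : K × K × K × K | p.1 ≠ 0 ∧ p.2.1 ≠ 0 ∧ p.2.2.1 ≠ 0 ∧ p.2.2.2 ≠ 0 ∧
        p.1 + p.2.1 + p.2.2.1 + p.2.2.2 = 0 ∧
        p.1 ^ (3 * q - 2) + p.2.1 ^ (3 * q - 2) + p.2.2.1 ^ (3 * q - 2)
          + p.2.2.2 ^ (3 * q - 2) = 0}.ncard : ℚ) =
      if Even m then (5 * (q : ℚ) ^ 2 - (τ m + 6) * (q : ℚ) + 4) * ((q : ℚ) ^ 2 - 1)
      else (5 * (q : ℚ) ^ 2 - (τ m + 6) * (q : ℚ)) * ((q : ℚ) ^ 2 - 1) := by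
  subst hq
  obtain ⟨σ, hσ, hcount⟩ := NihoCount.exists_conj_tripleCount_isSol hm.ne' hK
  have hquad := NihoCount.ncard_quadruples (by positivity) hσ
  rw [hcount, hK] at hquad
  have hquad_rat := congrArg (Int.cast : ℤ → ℚ) hquad
  push_cast at hquad_rat
  rw [hquad_rat, NihoCount.cast_tauInt hτ1 hτ2 hτr hm.ne']
  push_cast
  split_ifs <;> ring
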